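/- Let n ≥ 2, 0 < α < 1 and 1/2 < s < 1. Suppose u ∈ 𝓛_{2s,α}(ℝⁿ×ℝ) is a distributional solution of ∂_t^α u + (-Δ)^s u = 0 in ℝⁿ×ℝ, i.e. ∫_ℝ ∫_{ℝⁿ} u(x,t)·[D_right^α φ(x,t) + (-Δ)^s φ(x,t)] dx dt = 0 for every real-valued Schwartz function φ on ℝⁿ×ℝ. Assume in addition that there exists γ with 0 ≤ γ ≤ 1 such that for every t ∈ ℝ, liminf_{|x|→∞} u(x,t)/|x|^γ ≥ 0 (that is, for every t and every ε > 0 there exists R > 0 such that u(x,t) ≥ −ε|x|^γ whenever |x| ≥ R). Then u is equal almost everywhere to a constant. -/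

import Mathlib

open MeasureTheory Set

/-- The normalization constant `C_α = 1/|Γ(-α)|` for the Marchaud fractional derivative. -/
noncomputable def Calpha (α : ℝ) : ℝ := 1 / |Real.Gamma (-α)|

/-- The normalization constant `C_{n,s} = 4^s Γ(n/2+s)/(π^{n/2}|Γ(-s)|)` for the
fractional Laplacian. -/
noncomputable def Cns (n : ℕ) (s : ℝ) : ℝ :=
  (4 : ℝ) ^ s * Real.Gamma ((n : ℝ) / 2 + s) / (Real.pi ^ ((n : ℝ) / 2) * |Real.Gamma (-s)|)

/-- The right Marchaud fractional derivative of order `α` in the time variable: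
`D_right^α φ(x,t) = C_α ∫_t^∞ (φ(x,t) - φ(x,τ))/(τ-t)^{1+α} dτ`. -/
noncomputable def marchaudRight {n : ℕ} (α : ℝ) (φ : EuclideanSpace ℝ (Fin n) × ℝ → ℝ)
    (x : EuclideanSpace ℝ (Fin n)) (t : ℝ) : ℝ :=
  Calpha α * ∫ τ in Ioi t, (φ (x, t) - φ (x, τ)) / (τ - t) ^ (1 + α)

/-- The fractional Laplacian `(-Δ)^s` acting in the space variable:
`(-Δ)^s φ(x,t) = (C_{n,s}/2) ∫_{ℝⁿ} (2φ(x,t) - φ(x+y,t) - φ(x-y,t))/|y|^{n+2s} dy`. -/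
noncomputable def fracLap {n : ℕ} (s : ℝ) (φ : EuclideanSpace ℝ (Fin n) × ℝ → ℝ)
    (x : EuclideanSpace ℝ (Fin n)) (t : ℝ) : ℝ :=
  Cns n s / 2 * ∫ y : EuclideanSpace ℝ (Fin n),
    (2 * φ (x, t) - φ (x + y, t) - φ (x - y, t)) / ‖y‖ ^ ((n : ℝ) + 2 * s)

/-- The weight `(1 + t²)^{-q/2}`. -/
noncomputable def japWeight (q t : ℝ) : ℝ := (1 + t ^ 2) ^ (-q / 2)

lemma japWeight_pos (q t : ℝ) : 0 < japWeight q t := by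
  unfold japWeight; positivity

lemma continuous_japWeight (q : ℝ) : Continuous (japWeight q) := by
  unfold japWeight
  exact Continuous.rpow_const (by fun_prop) fun t => Or.inl (by positivity)

lemma japWeight_neg (q t : ℝ) : japWeight q (-t) = japWeight q t := by
  simp [japWeight]

lemma integrable_japWeight {q : ℝ} (hq : 1 < q) : Integrable (japWeight q) := by
  have := integrable_rpow_neg_one_add_norm_sq (E := ℝ) (μ := volume) (r := q) (by simpa using hq)
  refine this.congr (.of_forall fun t => ?_)
  simp [japWeight]

lemma japWeight_le_mul_of_le {q c a b : ℝ} (hq : 0 ≤ q) (hc : 0 < c)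
    (h : 1 + b ^ 2 ≤ c * (1 + a ^ 2)) : japWeight q a ≤ c ^ (q / 2) * japWeight q b := by
  unfold japWeight
  have hb : 0 < 1 + b ^ 2 := by positivity
  have ha : 0 < 1 + a ^ 2 := by positivity
  have h1 : (1 + b ^ 2) ^ (q / 2) ≤ (c * (1 + a ^ 2)) ^ (q / 2) :=
    Real.rpow_le_rpow hb.le h (by positivity)
  rw [Real.mul_rpow hc.le ha.le] at h1
  rw [neg_div, Real.rpow_neg hb.le, Real.rpow_neg ha.le, ← div_eq_mul_inv, inv_le_comm₀
    (by positivity) (by positivity), inv_div, div_le_iff₀ (by positivity)]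
  linarith

lemma japWeight_add_le {q : ℝ} (hq : 0 ≤ q) (t : ℝ) {θ : ℝ} (hθ : |θ| ≤ 1) :
    japWeight q (t + θ) ≤ 3 ^ (q / 2) * japWeight q t := by
  apply japWeight_le_mul_of_le hq (by norm_num)
  have : θ ^ 2 ≤ 1 := by rwa [sq_le_one_iff_abs_le_one]
  nlinarith [sq_nonneg (t + 2 * θ), sq_nonneg (t + θ), sq_nonneg (2 * t + 3 * θ)]

lemma japWeight_mul_le {q : ℝ} (hq : 0 ≤ q) (a b : ℝ) :
    japWeight q a * japWeight q b ≤
      4 ^ (q / 2) * japWeight q (a + b) * (japWeight q a + japWeight q b) := by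
  have ha := japWeight_pos q a
  have hb := japWeight_pos q b
  have hab := japWeight_pos q (a + b)
  rcases le_total (a ^ 2) (b ^ 2) with h | h
  · have := japWeight_le_mul_of_le (c := 4) hq (by norm_num) (a := b) (b := a + b)
      (by nlinarith [sq_nonneg (a - b)])
    have h4 : (0 : ℝ) < 4 ^ (q / 2) := by positivity
    nlinarith [mul_le_mul_of_nonneg_left this ha.le, mul_pos (mul_pos h4 hab) hb]
  · have := japWeight_le_mul_of_le (c := 4) hq (by norm_num) (a := a) (b := a + b)
      (by nlinarith [sq_nonneg (a - b)])
    have h4 : (0 : ℝ) < 4 ^ (q / 2) := by positivity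
    nlinarith [mul_le_mul_of_nonneg_right this hb.le, mul_pos (mul_pos h4 hab) ha]

lemma integral_japWeight_conv_le {q : ℝ} (hq : 1 < q) (s : ℝ) :
    Integrable (fun t => japWeight q (s - t) * japWeight q t) ∧
    ∫ t, japWeight q (s - t) * japWeight q t ≤
      4 ^ (q / 2) * (2 * ∫ t, japWeight q t) * japWeight q s := by
  have hJ := integrable_japWeight hq
  have hJs : Integrable fun t => japWeight q (s - t) := hJ.comp_sub_left s
  have hdom : Integrable fun t =>
      4 ^ (q / 2) * japWeight q s * (japWeight q (s - t) + japWeight q t) :=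
    (hJs.add hJ).const_mul _
  have hle : ∀ t, japWeight q (s - t) * japWeight q t ≤
      4 ^ (q / 2) * japWeight q s * (japWeight q (s - t) + japWeight q t) := fun t => by
    simpa using japWeight_mul_le (by linarith) (s - t) t
  have h_int : Integrable (fun t => japWeight q (s - t) * japWeight q t) := by
    refine hdom.mono' ?_ (.of_forall fun t => ?_)
    · exact (((continuous_japWeight q).comp (by fun_prop)).mul
        (continuous_japWeight q)).aestronglyMeasurable
    · rw [Real.norm_of_nonneg (mul_pos (japWeight_pos _ _) (japWeight_pos _ _)).le]
      exact hle t
  refine ⟨h_int, (integral_mono h_int hdom hle).trans (le_of_eq ?_)⟩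
  rw [integral_const_mul, integral_add hJs hJ, integral_sub_left_eq_self (japWeight q)]
  ring

/-- Integrability of the truncated Lévy density `min(1, r^m) r^{-1-σ}`. -/
lemma integrableOn_min_one_pow_mul_rpow {σ : ℝ} {m : ℕ} (h0 : 0 < σ) (hm : σ < m) :
    IntegrableOn (fun r : ℝ => min 1 (r ^ m) * r ^ (-1 - σ)) (Ioi 0) := by
  rw [← Ioc_union_Ioi_eq_Ioi (zero_le_one (α := ℝ))]
  refine IntegrableOn.union ?_ ?_
  · have h : IntegrableOn (fun r : ℝ => r ^ ((m : ℝ) - 1 - σ)) (Ioc 0 1) := by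
      rw [← intervalIntegrable_iff_integrableOn_Ioc_of_le zero_le_one]
      exact intervalIntegral.intervalIntegrable_rpow' (by linarith)
    refine h.congr_fun (fun r hr => ?_) measurableSet_Ioc
    have : r ^ m ≤ 1 := pow_le_one₀ hr.1.le hr.2
    simp only [min_eq_right this]
    rw [← Real.rpow_natCast, ← Real.rpow_add hr.1]
    ring_nf
  · have h : IntegrableOn (fun r : ℝ => r ^ (-1 - σ)) (Ioi 1) :=
      integrableOn_Ioi_rpow_of_lt (by linarith) one_pos
    refine h.congr_fun (fun r hr => ?_) measurableSet_Ioi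
    have : 1 ≤ r ^ m := one_le_pow₀ (le_of_lt hr)
    simp only [min_eq_left this, one_mul]

lemma abs_sub_div_rpow_le_japWeight {α K : ℝ} (hα : 0 < α) (hK : 0 ≤ K) {f : ℝ → ℝ}
    (hf : ∀ t, |f t| ≤ K * japWeight (1 + α) t) (hd : Differentiable ℝ f)
    (hf' : ∀ t, |deriv f t| ≤ K * japWeight (1 + α) t) (t : ℝ) {r : ℝ} (hr : 0 < r) :
    |f t - f (t + r)| / r ^ (1 + α) ≤ 8 ^ ((1 + α) / 2) * K * japWeight (1 + α) t *
      (min 1 (r ^ 1) * r ^ (-1 - α) + japWeight (1 + α) (t + r) + japWeight (1 + α) r) := by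
  set q := 1 + α with hq
  have hq0 : 0 ≤ q := by positivity
  have hJt := japWeight_pos q t
  have hJr := japWeight_pos q r
  have hJtr := japWeight_pos q (t + r)
  have hpow : r ^ (-1 - α) = (r ^ q)⁻¹ := by rw [← Real.rpow_neg hr.le]; congr 1; ring
  rw [hpow, pow_one, div_eq_mul_inv]
  have hi : 0 < (r ^ q)⁻¹ := by positivity
  have h8 : (0 : ℝ) < 8 ^ (q / 2) := by positivity
  have h81 : (1 : ℝ) ≤ 8 ^ (q / 2) := Real.one_le_rpow (by norm_num) (by positivity)
  rcases le_total r 1 with h1 | h1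
  · rw [min_eq_right h1]
    have key : |f t - f (t + r)| ≤ 8 ^ (q / 2) * K * japWeight q t * r := by
      have := Convex.norm_image_sub_le_of_norm_deriv_le (s := Icc t (t + r)) (f := f)
        (C := 8 ^ (q / 2) * K * japWeight q t) (fun x _ => hd x) (fun x hx => ?_)
        (convex_Icc _ _) (x := t + r) (y := t) (by simp [hr.le]) (by simp [hr.le])
      · simpa [abs_of_pos hr] using this
      · have h3 : (3 : ℝ) ^ (q / 2) ≤ 8 ^ (q / 2) :=
          Real.rpow_le_rpow (by norm_num) (by norm_num) (by positivity)
        have h2 := japWeight_add_le hq0 t (θ := x - t)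
          (by rw [abs_le]; constructor <;> linarith [hx.1, hx.2])
        rw [add_sub_cancel] at h2
        calc ‖deriv f x‖ ≤ K * japWeight q x := hf' x
          _ ≤ K * (8 ^ (q / 2) * japWeight q t) := by
            gcongr
            exact h2.trans (by gcongr)
          _ = _ := by ring
    calc |f t - f (t + r)| * (r ^ q)⁻¹ ≤ 8 ^ (q / 2) * K * japWeight q t * r * (r ^ q)⁻¹ := by
          gcongr
      _ = 8 ^ (q / 2) * K * japWeight q t * (r * (r ^ q)⁻¹) := by ring
      _ ≤ _ := by gcongr; linarith
  · rw [min_eq_left h1]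
    have hri : (r ^ q)⁻¹ ≤ 2 ^ (q / 2) * japWeight q r := by
      unfold japWeight
      rw [neg_div, Real.rpow_neg (by positivity), ← div_eq_mul_inv,
        ← Real.div_rpow (by norm_num) (by positivity), ← Real.inv_rpow hr.le]
      have : r⁻¹ ^ q = ((r ^ 2)⁻¹) ^ (q / 2) := by
        rw [← inv_pow, ← Real.rpow_natCast, ← Real.rpow_mul (by positivity)]
        congr 1; push_cast; ring
      rw [this]
      apply Real.rpow_le_rpow (by positivity) _ (by positivity)
      rw [inv_le_comm₀ (by positivity) (by positivity), inv_div, div_le_iff₀ (by norm_num)]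
      nlinarith
    have hm : japWeight q (t + r) * japWeight q r ≤ 4 ^ (q / 2) * japWeight q t *
        (japWeight q (t + r) + japWeight q r) := by
      have := japWeight_mul_le hq0 (t + r) (-r)
      simpa [japWeight_neg] using this
    have h24 : (2 : ℝ) ^ (q / 2) * 4 ^ (q / 2) = 8 ^ (q / 2) := by
      rw [← Real.mul_rpow (by norm_num) (by norm_num)]; norm_num
    have hA : |f (t + r)| * (r ^ q)⁻¹ ≤ 8 ^ (q / 2) * K * japWeight q t *
        (japWeight q (t + r) + japWeight q r) := by
      calc |f (t + r)| * (r ^ q)⁻¹ ≤ (K * japWeight q (t + r)) * (2 ^ (q / 2) * japWeight q r) := by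
            gcongr; exact hf _
        _ = K * 2 ^ (q / 2) * (japWeight q (t + r) * japWeight q r) := by ring
        _ ≤ K * 2 ^ (q / 2) * (4 ^ (q / 2) * japWeight q t *
            (japWeight q (t + r) + japWeight q r)) := by gcongr
        _ = _ := by rw [← h24]; ring
    have hB : |f t| * (r ^ q)⁻¹ ≤ 8 ^ (q / 2) * K * japWeight q t * (r ^ q)⁻¹ := by
      gcongr
      calc |f t| ≤ 1 * (K * japWeight q t) := by rw [one_mul]; exact hf t
        _ ≤ 8 ^ (q / 2) * (K * japWeight q t) := by gcongr
        _ = _ := by ring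
    calc |f t - f (t + r)| * (r ^ q)⁻¹ ≤ (|f t| + |f (t + r)|) * (r ^ q)⁻¹ := by
          gcongr; exact abs_sub _ _
      _ ≤ _ := by rw [add_mul, one_mul]; linarith

/-- Constant in the weighted bound for one-sided fractional differences. -/
noncomputable def fracDiffConst (α : ℝ) : ℝ :=
  8 ^ ((1 + α) / 2) * ((∫ r in Ioi (0 : ℝ), min 1 (r ^ 1) * r ^ (-1 - α)) +
    2 * ∫ r, japWeight (1 + α) r)

lemma fracDiffConst_nonneg (α : ℝ) : 0 ≤ fracDiffConst α := by
  unfold fracDiffConst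
  have h1 : 0 ≤ ∫ r in Ioi (0 : ℝ), min 1 (r ^ 1) * r ^ (-1 - α) :=
    setIntegral_nonneg measurableSet_Ioi fun r hr => by
      have : 0 < r := hr
      positivity
  have h2 : 0 ≤ ∫ r, japWeight (1 + α) r := integral_nonneg fun r => (japWeight_pos _ _).le
  positivity

lemma integral_abs_sub_div_rpow_le {α K : ℝ} (hα : 0 < α) (hα1 : α < 1) (hK : 0 ≤ K) {f : ℝ → ℝ}
    (hf : ∀ t, |f t| ≤ K * japWeight (1 + α) t) (hd : Differentiable ℝ f)
    (hf' : ∀ t, |deriv f t| ≤ K * japWeight (1 + α) t) (t : ℝ) :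
    IntegrableOn (fun r => |f t - f (t + r)| / r ^ (1 + α)) (Ioi 0) ∧
    ∫ r in Ioi (0 : ℝ), |f t - f (t + r)| / r ^ (1 + α) ≤
      fracDiffConst α * K * japWeight (1 + α) t := by
  have hJ := integrable_japWeight (q := 1 + α) (by linarith)
  have hJt : Integrable fun r => japWeight (1 + α) (t + r) := hJ.comp_add_left t
  have hm := integrableOn_min_one_pow_mul_rpow (σ := α) (m := 1) hα (by simpa using hα1)
  have hdom : IntegrableOn (fun r => 8 ^ ((1 + α) / 2) * K * japWeight (1 + α) t *
      (min 1 (r ^ 1) * r ^ (-1 - α) + japWeight (1 + α) (t + r) + japWeight (1 + α) r)) (Ioi 0) :=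
    ((hm.add hJt.integrableOn).add hJ.integrableOn).const_mul _
  have hle := fun r (hr : r ∈ Ioi (0 : ℝ)) => abs_sub_div_rpow_le_japWeight hα hK hf hd hf' t hr
  have hcont := hd.continuous
  have h_int : IntegrableOn (fun r => |f t - f (t + r)| / r ^ (1 + α)) (Ioi 0) := by
    refine hdom.mono' ?_ ?_
    · exact Measurable.aestronglyMeasurable (by fun_prop)
    · refine (ae_restrict_iff' measurableSet_Ioi).2 (.of_forall fun r hr => ?_)
      have : (0 : ℝ) < r := hr
      rw [Real.norm_of_nonneg (by positivity)]
      exact hle r hr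
  refine ⟨h_int, (setIntegral_mono_on h_int hdom measurableSet_Ioi hle).trans ?_⟩
  have hsum : ∫ r in Ioi (0 : ℝ), (min 1 (r ^ 1) * r ^ (-1 - α) + japWeight (1 + α) (t + r) +
      japWeight (1 + α) r) = (∫ r in Ioi (0 : ℝ), min 1 (r ^ 1) * r ^ (-1 - α)) +
        (∫ r in Ioi (0 : ℝ), japWeight (1 + α) (t + r)) +
        ∫ r in Ioi (0 : ℝ), japWeight (1 + α) r := by
    rw [← integral_add hm hJt.integrableOn]
    exact integral_add (hm.add hJt.integrableOn) hJ.integrableOn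
  rw [integral_const_mul, hsum]
  have e1 : ∫ r in Ioi (0 : ℝ), japWeight (1 + α) (t + r) ≤ ∫ r, japWeight (1 + α) r := by
    rw [← integral_add_left_eq_self (japWeight (1 + α)) t]
    exact setIntegral_le_integral hJt (.of_forall fun r => (japWeight_pos _ _).le)
  have e2 : ∫ r in Ioi (0 : ℝ), japWeight (1 + α) r ≤ ∫ r, japWeight (1 + α) r :=
    setIntegral_le_integral hJ (.of_forall fun r => (japWeight_pos _ _).le)
  unfold fracDiffConst
  have hJt := japWeight_pos (1 + α) t
  calc _ ≤ 8 ^ ((1 + α) / 2) * K * japWeight (1 + α) t *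
      ((∫ r in Ioi (0 : ℝ), min 1 (r ^ 1) * r ^ (-1 - α)) + (∫ r, japWeight (1 + α) r) +
        ∫ r, japWeight (1 + α) r) := by gcongr
    _ = _ := by ring

lemma japWeight_sub_le {q : ℝ} (hq : 0 ≤ q) {s t A : ℝ} (ht : |t| ≤ A) :
    japWeight q (s - t) ≤ (2 * (1 + A ^ 2)) ^ (q / 2) * japWeight q s := by
  apply japWeight_le_mul_of_le hq (by positivity)
  have : t ^ 2 ≤ A ^ 2 := sq_le_sq' (by linarith [abs_le.1 ht]) (abs_le.1 ht).2
  nlinarith [sq_nonneg (s - 2 * t), mul_nonneg (sq_nonneg A) (sq_nonneg (s - t))]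

lemma hasDerivAt_japWeight (q t : ℝ) :
    HasDerivAt (japWeight q) (-q * t * (1 + t ^ 2) ^ (-q / 2 - 1)) t := by
  have h1 : HasDerivAt (fun t : ℝ => 1 + t ^ 2) (2 * t) t := by
    simpa using (hasDerivAt_pow 2 t).const_add 1
  have := h1.rpow_const (p := -q / 2) (Or.inl (by positivity))
  exact this.congr_deriv (by ring)

lemma abs_deriv_japWeight_le {q : ℝ} (hq : 0 ≤ q) (t : ℝ) :
    |deriv (japWeight q) t| ≤ q * japWeight q t := by
  rw [(hasDerivAt_japWeight q t).deriv, Real.rpow_sub_one (by positivity), abs_mul, abs_mul,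
    abs_neg, abs_of_nonneg hq,
    abs_of_nonneg (a := (1 + t ^ 2) ^ (-q / 2) / (1 + t ^ 2)) (by positivity), mul_assoc]
  have h : |t| ≤ 1 + t ^ 2 := by nlinarith [sq_nonneg (|t| - 1), sq_abs t]
  unfold japWeight
  gcongr
  rw [← mul_div_assoc, div_le_iff₀ (by positivity), mul_comm]
  gcongr

lemma integral_abs_sub_japWeight_scaled_le {α R : ℝ} (hα : 0 < α) (hα1 : α < 1) (hR : 0 < R)
    (t : ℝ) :
    IntegrableOn (fun r => |japWeight (1 + α) (t / R) - japWeight (1 + α) ((t + r) / R)|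
      / r ^ (1 + α)) (Ioi 0) ∧
    ∫ r in Ioi (0 : ℝ), |japWeight (1 + α) (t / R) - japWeight (1 + α) ((t + r) / R)|
      / r ^ (1 + α) ≤
      fracDiffConst α * (1 + α) * R ^ (-α) * japWeight (1 + α) (t / R) := by
  have hM := integral_abs_sub_div_rpow_le hα hα1 (K := 1 + α) (by positivity)
    (f := japWeight (1 + α))
    (fun t => by rw [abs_of_pos (japWeight_pos _ _)]; nlinarith [japWeight_pos (1 + α) t])
    (fun t => (hasDerivAt_japWeight _ t).differentiableAt)
    (fun t => abs_deriv_japWeight_le (by positivity) t) (t / R)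
  set g : ℝ → ℝ := fun r =>
    |japWeight (1 + α) (t / R) - japWeight (1 + α) ((t + r) / R)| / r ^ (1 + α) with hg
  have hgR : ∀ r ∈ Ioi (0 : ℝ), g (R * r) = R ^ (-(1 + α)) *
      (|japWeight (1 + α) (t / R) - japWeight (1 + α) (t / R + r)| / r ^ (1 + α)) := by
    intro r hr
    have hr' : (0 : ℝ) < r := hr
    simp only [hg]
    rw [Real.mul_rpow hR.le hr'.le, Real.rpow_neg hR.le, add_div, mul_div_cancel_left₀ _ hR.ne']
    field_simp
  have h_int : IntegrableOn (fun r => g (R * r)) (Ioi 0) :=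
    IntegrableOn.congr_fun (f := fun r => R ^ (-(1 + α)) *
      (|japWeight (1 + α) (t / R) - japWeight (1 + α) (t / R + r)| / r ^ (1 + α)))
      (hM.1.const_mul (R ^ (-(1 + α)))) (fun r hr => (hgR r hr).symm) measurableSet_Ioi
  refine ⟨by simpa using (integrableOn_Ioi_comp_mul_left_iff g 0 hR).1 h_int, ?_⟩
  have h2 := integral_comp_mul_left_Ioi' g 0 hR
  rw [mul_zero] at h2
  rw [← h2, setIntegral_congr_fun measurableSet_Ioi hgR, integral_const_mul, smul_eq_mul,
    ← mul_assoc]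
  have h3 : R * R ^ (-(1 + α)) = R ^ (-α) := by
    nth_rewrite 1 [← Real.rpow_one R]
    rw [← Real.rpow_add hR]; congr 1; ring
  rw [h3]
  calc _ ≤ R ^ (-α) * (fracDiffConst α * (1 + α) * japWeight (1 + α) (t / R)) := by
        gcongr; exact hM.2
    _ = _ := by ring

/-- `mollify V ρ t = ∫ V(s) ρ(s - t) ds`. -/
noncomputable def mollify (V ρ : ℝ → ℝ) (t : ℝ) : ℝ := ∫ s, V s * ρ (s - t)

section Mollify

variable {α K : ℝ} {V ρ : ℝ → ℝ}

lemma aestronglyMeasurable_of_mul_japWeight {q : ℝ}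
    (hV : Integrable fun t => V t * japWeight q t) : AEStronglyMeasurable V := by
  have h := hV.aestronglyMeasurable.mul (((continuous_japWeight q).inv₀
    fun t => (japWeight_pos q t).ne').aestronglyMeasurable (μ := volume))
  refine h.congr (.of_forall fun t => ?_)
  simp [(japWeight_pos q t).ne']

lemma norm_mul_le_of_abs_le_japWeight {q : ℝ} (hq : 0 ≤ q) (hK : 0 ≤ K)
    (hρ : ∀ t, |ρ t| ≤ K * japWeight q t) {t A : ℝ} (ht : |t| ≤ A) (s : ℝ) :
    ‖V s * ρ (s - t)‖ ≤ K * (2 * (1 + A ^ 2)) ^ (q / 2) * ‖V s * japWeight q s‖ := by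
  rw [norm_mul, norm_mul, Real.norm_of_nonneg (japWeight_pos q s).le]
  calc ‖V s‖ * ‖ρ (s - t)‖ ≤ ‖V s‖ * (K * ((2 * (1 + A ^ 2)) ^ (q / 2) * japWeight q s)) := by
        gcongr
        exact (hρ _).trans (by gcongr; exact japWeight_sub_le hq ht)
    _ = _ := by ring

lemma integrable_mollify_integrand {q : ℝ} (hq : 0 ≤ q) (hK : 0 ≤ K)
    (hV : Integrable fun t => V t * japWeight q t)
    (hρ : ∀ t, |ρ t| ≤ K * japWeight q t) (hρc : Continuous ρ) (t : ℝ) :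
    Integrable fun s => V s * ρ (s - t) := by
  refine (hV.norm.const_mul (K * (2 * (1 + |t| ^ 2)) ^ (q / 2))).mono' ?_
    (.of_forall fun s => norm_mul_le_of_abs_le_japWeight hq hK hρ le_rfl s)
  exact (aestronglyMeasurable_of_mul_japWeight hV).mul
    (Continuous.aestronglyMeasurable (by fun_prop))

lemma continuous_mollify {q : ℝ} (hq : 0 ≤ q) (hK : 0 ≤ K)
    (hV : Integrable fun t => V t * japWeight q t)
    (hρ : ∀ t, |ρ t| ≤ K * japWeight q t) (hρc : Continuous ρ) :
    Continuous (mollify V ρ) := by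
  rw [continuous_iff_continuousAt]
  intro t₀
  refine continuousAt_of_dominated
    (bound := fun s => K * (2 * (1 + (|t₀| + 1) ^ 2)) ^ (q / 2) * ‖V s * japWeight q s‖)
    (.of_forall fun t => (integrable_mollify_integrand hq hK hV hρ hρc t).aestronglyMeasurable)
    ?_ (hV.norm.const_mul _) (.of_forall fun s => by fun_prop)
  filter_upwards [Metric.ball_mem_nhds t₀ one_pos] with t ht
  refine .of_forall fun s => norm_mul_le_of_abs_le_japWeight hq hK hρ ?_ s
  have : |t - t₀| < 1 := ht
  have := abs_sub_abs_le_abs_sub t t₀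
  linarith

lemma integrable_prod_japWeight {q : ℝ} (hq : 1 < q) {Ψ : ℝ × ℝ → ℝ} (hK : 0 ≤ K)
    (hV : Integrable fun t => V t * japWeight q t)
    (hΨm : AEStronglyMeasurable (fun p : ℝ × ℝ => V p.1 * Ψ p))
    (hΨ : ∀ p : ℝ × ℝ, |Ψ p| ≤ K * (japWeight q (p.1 - p.2) * japWeight q p.2)) :
    Integrable (fun p : ℝ × ℝ => V p.1 * Ψ p) ∧
    ∫ p : ℝ × ℝ, |V p.1 * Ψ p| ≤ K * (4 ^ (q / 2) * (2 * ∫ t, japWeight q t)) *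
      ∫ t, |V t| * japWeight q t := by
  set C := 4 ^ (q / 2) * (2 * ∫ t, japWeight q t) with hC
  have hVm := aestronglyMeasurable_of_mul_japWeight hV
  have hdom : Integrable (fun p : ℝ × ℝ =>
      |V p.1| * (japWeight q (p.1 - p.2) * japWeight q p.2)) (volume.prod volume) := by
    rw [integrable_prod_iff]
    · refine ⟨.of_forall fun s => by simpa using
        (integral_japWeight_conv_le hq s).1.const_mul |V s|, ?_⟩
      refine (hV.norm.const_mul C).mono' ?_ (.of_forall fun s => ?_)
      · refine AEStronglyMeasurable.norm (f := fun x => ∫ y, ‖|V x| *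
          (japWeight q (x - y) * japWeight q y)‖) ?_ |>.congr (.of_forall fun s =>
            Real.norm_of_nonneg (integral_nonneg fun _ => norm_nonneg _))
        refine AEStronglyMeasurable.integral_prod_right' (f := fun p : ℝ × ℝ =>
          ‖|V p.1| * (japWeight q (p.1 - p.2) * japWeight q p.2)‖) ?_
        refine AEStronglyMeasurable.norm (AEStronglyMeasurable.mul ?_ ?_)
        · exact hVm.norm.comp_fst
        · have := continuous_japWeight q
          exact Continuous.aestronglyMeasurable (by fun_prop)
      · rw [Real.norm_of_nonneg (integral_nonneg fun _ => norm_nonneg _)]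
        simp_rw [norm_mul, Real.norm_eq_abs, abs_abs, abs_of_pos (japWeight_pos _ _)]
        rw [integral_const_mul]
        calc _ ≤ |V s| * (C * japWeight q s) := by
              gcongr; exact (integral_japWeight_conv_le hq s).2
          _ = _ := by ring
    · refine AEStronglyMeasurable.mul hVm.norm.comp_fst ?_
      have := continuous_japWeight q
      exact Continuous.aestronglyMeasurable (by fun_prop)
  have hle : ∀ p : ℝ × ℝ, ‖V p.1 * Ψ p‖ ≤
      K * (|V p.1| * (japWeight q (p.1 - p.2) * japWeight q p.2)) := fun p => by
    rw [norm_mul]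
    calc _ ≤ |V p.1| * (K * (japWeight q (p.1 - p.2) * japWeight q p.2)) := by
          gcongr
          · exact le_rfl
          · exact hΨ p
      _ = _ := by ring
  have h_int : Integrable (fun p : ℝ × ℝ => V p.1 * Ψ p) :=
    (hdom.const_mul K).mono' hΨm (.of_forall hle)
  refine ⟨h_int, ?_⟩
  calc ∫ p : ℝ × ℝ, |V p.1 * Ψ p|
      ≤ ∫ p : ℝ × ℝ, K * (|V p.1| * (japWeight q (p.1 - p.2) * japWeight q p.2)) :=
        integral_mono h_int.norm (hdom.const_mul K) hle
    _ = K * ∫ s, |V s| * ∫ t, japWeight q (s - t) * japWeight q t := by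
        rw [integral_const_mul, Measure.volume_eq_prod, integral_prod _ hdom]
        simp_rw [integral_const_mul]
    _ ≤ K * ∫ s, C * (|V s| * japWeight q s) := by
        refine mul_le_mul_of_nonneg_left ?_ hK
        refine integral_mono_of_nonneg (.of_forall fun s => ?_) ?_ (.of_forall fun s => ?_)
        · exact mul_nonneg (abs_nonneg _) (integral_nonneg fun t =>
            (mul_pos (japWeight_pos _ _) (japWeight_pos _ _)).le)
        · refine (hV.norm.const_mul C).congr (.of_forall fun s => ?_)
          simp [abs_of_pos (japWeight_pos _ _)]
        · calc _ ≤ |V s| * (C * japWeight q s) := by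
                exact mul_le_mul_of_nonneg_left (integral_japWeight_conv_le hq s).2 (abs_nonneg _)
            _ = _ := by ring
    _ = _ := by rw [integral_const_mul]; ring

lemma integrable_mollify_mul_japWeight {q : ℝ} (hq : 1 < q) (hK : 0 ≤ K)
    (hV : Integrable fun t => V t * japWeight q t)
    (hρ : ∀ t, |ρ t| ≤ K * japWeight q t) (hρc : Continuous ρ) :
    Integrable (fun t => mollify V ρ t * japWeight q t) ∧
    ∫ t, |mollify V ρ t| * japWeight q t ≤ K * (4 ^ (q / 2) * (2 * ∫ t, japWeight q t)) *
      ∫ t, |V t| * japWeight q t := by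
  have hVm := aestronglyMeasurable_of_mul_japWeight hV
  have hJ := continuous_japWeight q
  obtain ⟨h_int, hle⟩ := integrable_prod_japWeight hq hK hV
    (Ψ := fun p => ρ (p.1 - p.2) * japWeight q p.2)
    (hVm.comp_fst.mul (Continuous.aestronglyMeasurable (by fun_prop)))
    (fun p => by
      rw [abs_mul, abs_of_pos (japWeight_pos _ _), ← mul_assoc]
      gcongr
      · exact (japWeight_pos _ _).le
      · exact hρ _)
  have h_int' := h_int.integral_prod_right
  have heq : ∀ t, ∫ s, V s * (ρ (s - t) * japWeight q t) = mollify V ρ t * japWeight q t := by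
    intro t
    simp_rw [← mul_assoc]
    rw [integral_mul_const, mollify]
  refine ⟨h_int'.congr (.of_forall heq), le_trans ?_ hle⟩
  have hn : Integrable (fun p : ℝ × ℝ => |V p.1 * (ρ (p.1 - p.2) * japWeight q p.2)|)
      (volume.prod volume) := h_int.norm
  rw [Measure.volume_eq_prod, integral_prod_symm _ hn]
  refine integral_mono ?_ hn.integral_prod_right fun t => ?_
  · refine (h_int'.congr (.of_forall heq)).norm.congr (.of_forall fun t => ?_)
    simp [abs_of_pos (japWeight_pos _ _)]
  · have := norm_integral_le_integral_norm (μ := volume) fun s => V s * (ρ (s - t) * japWeight q t)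
    rw [heq, norm_mul, Real.norm_of_nonneg (japWeight_pos _ _).le] at this
    exact this

end Mollify

section Kato

variable {α K : ℝ} {V ρ : ℝ → ℝ}

/-- Assumptions on a mollifier: it is `C¹` and, with its derivative, dominated by the weight. -/
structure IsMollifier (α K : ℝ) (ρ : ℝ → ℝ) : Prop where
  nonneg : 0 ≤ K
  le : ∀ t, |ρ t| ≤ K * japWeight (1 + α) t
  diff : Differentiable ℝ ρ
  deriv_le : ∀ t, |deriv ρ t| ≤ K * japWeight (1 + α) t

lemma IsMollifier.continuous (h : IsMollifier α K ρ) : Continuous ρ := h.diff.continuous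

lemma IsMollifier.integral_le (h : IsMollifier α K ρ) (hα : 0 < α) (hα1 : α < 1) (t : ℝ) :
    IntegrableOn (fun r => |ρ t - ρ (t + r)| / r ^ (1 + α)) (Ioi 0) ∧
    ∫ r in Ioi (0 : ℝ), |ρ t - ρ (t + r)| / r ^ (1 + α) ≤
      fracDiffConst α * K * japWeight (1 + α) t :=
  integral_abs_sub_div_rpow_le hα hα1 h.nonneg h.le h.diff h.deriv_le t

lemma measurable_sub_add_div_rpow {f : ℝ → ℝ} (hf : Continuous f) (q : ℝ) :
    Measurable fun p : (ℝ × ℝ) × ℝ => (f (p.1.1 - p.1.2) - f (p.1.1 - p.1.2 + p.2)) / p.2 ^ q := by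
  have := hf.measurable
  fun_prop

lemma IsMollifier.integrable_triple (h : IsMollifier α K ρ) (hα : 0 < α) (hα1 : α < 1)
    (hV : Integrable fun t => V t * japWeight (1 + α) t) :
    Integrable (fun p : (ℝ × ℝ) × ℝ => V p.1.1 *
      ((ρ (p.1.1 - p.1.2) - ρ (p.1.1 - p.1.2 + p.2)) / p.2 ^ (1 + α) * japWeight (1 + α) p.1.2))
      ((volume.prod volume).prod (volume.restrict (Ioi 0))) := by
  have hVm := aestronglyMeasurable_of_mul_japWeight hV
  have hJ := continuous_japWeight (1 + α)
  have hm : AEStronglyMeasurable (fun p : (ℝ × ℝ) × ℝ => V p.1.1 *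
      ((ρ (p.1.1 - p.1.2) - ρ (p.1.1 - p.1.2 + p.2)) / p.2 ^ (1 + α) * japWeight (1 + α) p.1.2))
      ((volume.prod volume).prod (volume.restrict (Ioi 0))) := by
    refine AEStronglyMeasurable.mul ?_ (Measurable.aestronglyMeasurable ?_)
    · exact hVm.comp_fst.comp_fst
    · have := measurable_sub_add_div_rpow h.continuous (1 + α)
      have := hJ.measurable
      fun_prop
  have hnorm : ∀ (p : ℝ × ℝ), ∀ r ∈ Ioi (0 : ℝ), ‖V p.1 *
      ((ρ (p.1 - p.2) - ρ (p.1 - p.2 + r)) / r ^ (1 + α) * japWeight (1 + α) p.2)‖ =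
      |V p.1| * japWeight (1 + α) p.2 * (|ρ (p.1 - p.2) - ρ (p.1 - p.2 + r)| / r ^ (1 + α)) := by
    intro p r hr
    have hr' : (0 : ℝ) < r := hr
    rw [norm_mul, norm_mul, norm_div, Real.norm_of_nonneg (japWeight_pos _ _).le,
      Real.norm_of_nonneg (by positivity : 0 ≤ r ^ (1 + α)), Real.norm_eq_abs, Real.norm_eq_abs]
    ring
  rw [integrable_prod_iff hm]
  refine ⟨.of_forall fun p => ?_, ?_⟩
  · have h1 := (h.integral_le hα hα1 (p.1 - p.2)).1
    have h2 : IntegrableOn (fun r => (ρ (p.1 - p.2) - ρ (p.1 - p.2 + r)) / r ^ (1 + α)) (Ioi 0) := by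
      refine Integrable.mono' h1 ?_ ?_
      · have := h.continuous.measurable
        exact Measurable.aestronglyMeasurable (by fun_prop)
      · filter_upwards [ae_restrict_mem measurableSet_Ioi] with r hr
        have hr' : (0 : ℝ) < r := hr
        rw [norm_div, Real.norm_of_nonneg (by positivity : 0 ≤ r ^ (1 + α)), Real.norm_eq_abs]
    exact (h2.mul_const (japWeight (1 + α) p.2)).const_mul (V p.1)
  · have key := (integrable_prod_japWeight (q := 1 + α) (by linarith) (V := fun t => |V t|)
      (K := fracDiffConst α * K)
      (Ψ := fun p => japWeight (1 + α) p.2 *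
        ∫ r in Ioi (0 : ℝ), |ρ (p.1 - p.2) - ρ (p.1 - p.2 + r)| / r ^ (1 + α))
      (mul_nonneg (fracDiffConst_nonneg α) h.nonneg) ?_ ?_ ?_).1
    · refine key.congr (.of_forall fun p => ?_)
      dsimp only
      rw [setIntegral_congr_fun measurableSet_Ioi (hnorm p), integral_const_mul, mul_assoc]
    · refine hV.norm.congr (.of_forall fun t => ?_)
      simp [abs_of_pos (japWeight_pos _ _)]
    · refine AEStronglyMeasurable.mul hVm.norm.comp_fst
        (AEStronglyMeasurable.mul (Continuous.aestronglyMeasurable (by fun_prop)) ?_)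
      refine AEStronglyMeasurable.integral_prod_right' (ν := volume.restrict (Ioi 0))
        (f := fun p : (ℝ × ℝ) × ℝ =>
          |ρ (p.1.1 - p.1.2) - ρ (p.1.1 - p.1.2 + p.2)| / p.2 ^ (1 + α)) ?_
      have := h.continuous.measurable
      exact Measurable.aestronglyMeasurable (by fun_prop)
    · intro p
      have h1 := (h.integral_le hα hα1 (p.1 - p.2)).2
      rw [abs_mul, abs_of_pos (japWeight_pos _ _), abs_of_nonneg (setIntegral_nonneg
        measurableSet_Ioi fun r (hr : (0 : ℝ) < r) => by positivity)]
      calc _ ≤ japWeight (1 + α) p.2 * (fracDiffConst α * K * japWeight (1 + α) (p.1 - p.2)) := by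
            gcongr
            exact (japWeight_pos _ _).le
        _ = _ := by ring

lemma mollify_sub_mollify (h : IsMollifier α K ρ) (hα : 0 < α)
    (hV : Integrable fun t => V t * japWeight (1 + α) t) (t r : ℝ) :
    ∫ s, V s * (ρ (s - t) - ρ (s - t + r)) = mollify V ρ t - mollify V ρ (t - r) := by
  have h1 := integrable_mollify_integrand (by linarith) h.nonneg hV h.le h.continuous t
  have h2 := integrable_mollify_integrand (by linarith) h.nonneg hV h.le h.continuous (t - r)
  rw [mollify, mollify, ← integral_sub h1 h2]
  congr 1 with s
  rw [show s - (t - r) = s - t + r by ring, mul_sub]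

/-- Fubini for the fractional difference quotient of a mollification, for the product measure. -/
lemma IsMollifier.integrable_sub_div_rpow (h : IsMollifier α K ρ) (hα : 0 < α) (hα1 : α < 1)
    (hV : Integrable fun t => V t * japWeight (1 + α) t) :
    Integrable (fun p : ℝ × ℝ => (mollify V ρ p.1 - mollify V ρ (p.1 - p.2)) / p.2 ^ (1 + α) *
      japWeight (1 + α) p.1) (volume.prod (volume.restrict (Ioi 0))) := by
  have h3 := h.integrable_triple hα hα1 hV
  have hmp := (measurePreserving_prodAssoc (volume : Measure ℝ) (volume : Measure ℝ)
    (volume.restrict (Ioi (0 : ℝ)))).symm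
  have h4 := (hmp.integrable_comp_emb (MeasurableEquiv.measurableEmbedding _)).2 h3
  refine h4.integral_prod_right.congr (.of_forall fun p => ?_)
  dsimp only [Function.comp, MeasurableEquiv.prodAssoc, MeasurableEquiv.symm, Equiv.prodAssoc]
  simp only [MeasurableEquiv.coe_mk, Equiv.coe_fn_symm_mk]
  rw [← mollify_sub_mollify h hα hV, ← integral_div, ← integral_mul_const]
  congr 1 with s
  ring

lemma IsMollifier.integrable_pair (h : IsMollifier α K ρ) (hα : 0 < α) (hα1 : α < 1)
    (hV : Integrable fun t => V t * japWeight (1 + α) t) (t : ℝ) :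
    Integrable (fun p : ℝ × ℝ => V p.1 * ((ρ (p.1 - t) - ρ (p.1 - t + p.2)) / p.2 ^ (1 + α)))
      (volume.prod (volume.restrict (Ioi 0))) := by
  have hVm := aestronglyMeasurable_of_mul_japWeight hV
  have hm : AEStronglyMeasurable (fun p : ℝ × ℝ => V p.1 *
      ((ρ (p.1 - t) - ρ (p.1 - t + p.2)) / p.2 ^ (1 + α)))
      (volume.prod (volume.restrict (Ioi 0))) := by
    refine AEStronglyMeasurable.mul hVm.comp_fst (Measurable.aestronglyMeasurable ?_)
    have := h.continuous.measurable
    fun_prop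
  have hnorm : ∀ s, ∀ r ∈ Ioi (0 : ℝ), ‖V s *
      ((ρ (s - t) - ρ (s - t + r)) / r ^ (1 + α))‖ =
      |V s| * (|ρ (s - t) - ρ (s - t + r)| / r ^ (1 + α)) := by
    intro s r hr
    have hr' : (0 : ℝ) < r := hr
    rw [norm_mul, norm_div, Real.norm_of_nonneg (by positivity : 0 ≤ r ^ (1 + α)),
      Real.norm_eq_abs, Real.norm_eq_abs]
  rw [integrable_prod_iff hm]
  refine ⟨.of_forall fun s => ?_, ?_⟩
  · refine Integrable.mono' ((h.integral_le hα hα1 (s - t)).1.const_mul |V s|) ?_ ?_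
    · have := h.continuous.measurable
      dsimp only
      exact Measurable.aestronglyMeasurable (by fun_prop)
    · filter_upwards [ae_restrict_mem measurableSet_Ioi] with r hr
      exact (hnorm s r hr).le
  · refine (hV.norm.const_mul (fracDiffConst α * K * (2 * (1 + |t| ^ 2)) ^ ((1 + α) / 2))).mono'
      hm.norm.integral_prod_right' (.of_forall fun s => ?_)
    rw [Real.norm_of_nonneg (integral_nonneg fun _ => norm_nonneg _),
      setIntegral_congr_fun measurableSet_Ioi (hnorm s), integral_const_mul, norm_mul,
      Real.norm_of_nonneg (japWeight_pos _ _).le, Real.norm_eq_abs]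
    have h1 := (h.integral_le hα hα1 (s - t)).2
    have h2 := japWeight_sub_le (q := 1 + α) (by linarith) (le_refl |t|) (s := s)
    have h3 := mul_nonneg (fracDiffConst_nonneg α) h.nonneg
    calc _ ≤ |V s| * (fracDiffConst α * K *
          ((2 * (1 + |t| ^ 2)) ^ ((1 + α) / 2) * japWeight (1 + α) s)) := by
          gcongr
          exact h1.trans (by gcongr)
      _ = _ := by ring

lemma IsMollifier.integral_mul_eq (h : IsMollifier α K ρ) (hα : 0 < α) (hα1 : α < 1)
    (hV : Integrable fun t => V t * japWeight (1 + α) t) (t : ℝ) :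
    ∫ s, V s * ∫ r in Ioi (0 : ℝ), (ρ (s - t) - ρ (s - t + r)) / r ^ (1 + α) =
      ∫ r in Ioi (0 : ℝ), (mollify V ρ t - mollify V ρ (t - r)) / r ^ (1 + α) := by
  have hp := h.integrable_pair hα hα1 hV t
  have := integral_integral_swap (f := fun s r =>
    V s * ((ρ (s - t) - ρ (s - t + r)) / r ^ (1 + α))) hp
  simp_rw [integral_const_mul] at this
  rw [this]
  congr 1 with r
  rw [← mollify_sub_mollify h hα hV, ← integral_div]
  congr 1 with s
  ring

lemma IsMollifier.integrableOn_sub_div (h : IsMollifier α K ρ) (hα : 0 < α) (hα1 : α < 1)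
    (hV : Integrable fun t => V t * japWeight (1 + α) t) (t : ℝ) :
    IntegrableOn (fun r => (mollify V ρ t - mollify V ρ (t - r)) / r ^ (1 + α)) (Ioi 0) := by
  refine (h.integrable_pair hα hα1 hV t).integral_prod_right.congr (.of_forall fun r => ?_)
  dsimp only
  rw [← mollify_sub_mollify h hα hV, ← integral_div]
  congr 1 with s
  ring

/-- Weighted Kato inequality for the left Marchaud derivative of a mollification. -/
lemma IsMollifier.kato (h : IsMollifier α K ρ) (hα : 0 < α) (hα1 : α < 1)
    (hV : Integrable fun t => V t * japWeight (1 + α) t) {R μ c : ℝ} (hR : 0 < R) (hc : 0 ≤ c)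
    (w : ℝ → ℝ)
    (hwv : ∀ t, w t = μ * mollify V ρ t +
      c * ∫ r in Ioi (0 : ℝ), (mollify V ρ t - mollify V ρ (t - r)) / r ^ (1 + α))
    (hw : Integrable fun t => w t * japWeight (1 + α) (t / R)) :
    (μ - c * (fracDiffConst α * (1 + α) * R ^ (-α))) *
      ∫ t, |mollify V ρ t| * japWeight (1 + α) (t / R) ≤
      ∫ t, |w t| * japWeight (1 + α) (t / R) := by
  set v := mollify V ρ with hv
  set ω : ℝ → ℝ := fun t => japWeight (1 + α) (t / R) with hω
  set D := fracDiffConst α * (1 + α) * R ^ (-α) with hD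
  have hω0 : ∀ t, 0 < ω t := fun t => japWeight_pos _ _
  have hωc : Continuous ω := (continuous_japWeight _).comp (by fun_prop)
  have hωJ : ∀ t, ω t ≤ (1 + R ^ 2) ^ ((1 + α) / 2) * japWeight (1 + α) t := fun t => by
    apply japWeight_le_mul_of_le (by linarith) (by positivity)
    rw [div_pow]
    have : t ^ 2 / R ^ 2 * R ^ 2 = t ^ 2 := by field_simp
    have : 0 ≤ t ^ 2 / R ^ 2 := by positivity
    nlinarith
  have hvc : Continuous v := continuous_mollify (by linarith) h.nonneg hV h.le h.continuous
  have hvJ := (integrable_mollify_mul_japWeight (by linarith) h.nonneg hV h.le h.continuous).1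
  -- bounded weights keep integrability
  have hshift : ∀ r, Integrable fun t => |v t| * ω (t + r) := fun r => by
    refine (hvJ.norm.const_mul ((1 + R ^ 2) ^ ((1 + α) / 2) *
      (2 * (1 + |r| ^ 2)) ^ ((1 + α) / 2))).mono'
      (Continuous.aestronglyMeasurable (by fun_prop)) (.of_forall fun t => ?_)
    have h2 := japWeight_sub_le (q := 1 + α) (by linarith) (t := -r) (s := t) (abs_neg r).le
    rw [sub_neg_eq_add] at h2
    rw [norm_mul, norm_mul, Real.norm_of_nonneg (hω0 _).le, Real.norm_eq_abs, abs_abs,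
      Real.norm_of_nonneg (japWeight_pos _ _).le, Real.norm_eq_abs]
    calc _ ≤ |v t| * ((1 + R ^ 2) ^ ((1 + α) / 2) *
          ((2 * (1 + |r| ^ 2)) ^ ((1 + α) / 2) * japWeight (1 + α) t)) := by
          gcongr
          exact (hωJ _).trans (by gcongr)
      _ = _ := by ring
  have hvω : Integrable fun t => |v t| * ω t := by simpa using hshift 0
  -- the two integrable functions on the product
  have hP : Integrable (fun p : ℝ × ℝ => (|v p.1| - |v (p.1 - p.2)|) / p.2 ^ (1 + α) * ω p.1)
      (volume.prod (volume.restrict (Ioi 0))) := by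
    refine ((h.integrable_sub_div_rpow hα hα1 hV).norm.const_mul
      ((1 + R ^ 2) ^ ((1 + α) / 2))).mono' ?_ (.of_forall fun p => ?_)
    · have := hvc.measurable
      have := hωc.measurable
      exact Measurable.aestronglyMeasurable (by fun_prop)
    · rw [norm_mul, norm_mul, norm_div, norm_div, Real.norm_of_nonneg (hω0 _).le,
        Real.norm_of_nonneg (japWeight_pos _ _).le]
      calc _ ≤ ‖v p.1 - v (p.1 - p.2)‖ / ‖p.2 ^ (1 + α)‖ *
            ((1 + R ^ 2) ^ ((1 + α) / 2) * japWeight (1 + α) p.1) := by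
            gcongr ?_ / _ * ?_
            · exact (japWeight_pos _ _).le
            · exact abs_abs_sub_abs_le (v p.1) (v (p.1 - p.2))
            · exact hωJ _
        _ = _ := by ring
  have hQnorm : ∀ t, ∀ r ∈ Ioi (0 : ℝ), ‖|v t| * ((ω t - ω (t + r)) / r ^ (1 + α))‖ =
      |v t| * (|ω t - ω (t + r)| / r ^ (1 + α)) := fun t r hr => by
    have hr' : (0 : ℝ) < r := hr
    rw [norm_mul, norm_div, Real.norm_of_nonneg (by positivity : 0 ≤ r ^ (1 + α)),
      Real.norm_eq_abs, Real.norm_eq_abs, abs_abs]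
  have hω1 := fun t => integral_abs_sub_japWeight_scaled_le hα hα1 hR t
  have hQm : AEStronglyMeasurable (fun p : ℝ × ℝ =>
      |v p.1| * ((ω p.1 - ω (p.1 + p.2)) / p.2 ^ (1 + α)))
      (volume.prod (volume.restrict (Ioi 0))) := by
    have := hvc.measurable
    have := hωc.measurable
    exact Measurable.aestronglyMeasurable (by fun_prop)
  have hQ : Integrable (fun p : ℝ × ℝ => |v p.1| * ((ω p.1 - ω (p.1 + p.2)) / p.2 ^ (1 + α)))
      (volume.prod (volume.restrict (Ioi 0))) := by
    rw [integrable_prod_iff hQm]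
    refine ⟨.of_forall fun t => ?_, ?_⟩
    · refine Integrable.mono' ((hω1 t).1.const_mul |v t|) ?_ ?_
      · have := hωc.measurable
        dsimp only
        exact Measurable.aestronglyMeasurable (by fun_prop)
      · filter_upwards [ae_restrict_mem measurableSet_Ioi] with r hr
        exact (hQnorm t r hr).le
    · refine (hvω.const_mul D).mono' hQm.norm.integral_prod_right' (.of_forall fun t => ?_)
      rw [Real.norm_of_nonneg (integral_nonneg fun _ => norm_nonneg _),
        setIntegral_congr_fun measurableSet_Ioi (hQnorm t), integral_const_mul]
      calc _ ≤ |v t| * (D * ω t) :=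
            mul_le_mul_of_nonneg_left (hω1 t).2 (abs_nonneg _)
        _ = _ := by ring
  -- exchanging the difference from `v` to the weight
  have hswap : ∫ t, (∫ r in Ioi (0 : ℝ), (|v t| - |v (t - r)|) / r ^ (1 + α)) * ω t =
      ∫ t, |v t| * ∫ r in Ioi (0 : ℝ), (ω t - ω (t + r)) / r ^ (1 + α) := by
    have h1 := integral_integral_swap (f := fun t r =>
      (|v t| - |v (t - r)|) / r ^ (1 + α) * ω t) hP
    have h2 := integral_integral_swap (f := fun t r =>
      |v t| * ((ω t - ω (t + r)) / r ^ (1 + α))) hQ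
    simp_rw [integral_mul_const] at h1
    simp_rw [integral_const_mul] at h2
    rw [h1, h2]
    congr 1 with r
    have e1 : ∫ t, |v (t - r)| * ω t = ∫ t, |v t| * ω (t + r) := by
      rw [← integral_sub_right_eq_self (fun t => |v t| * ω (t + r)) r]
      simp
    have i1 : Integrable fun t => |v (t - r)| * ω t := by
      simpa using (hshift r).comp_sub_right r
    have e2 : ∫ t, (|v t| - |v (t - r)|) * ω t = ∫ t, |v t| * (ω t - ω (t + r)) := by
      simp_rw [sub_mul, mul_sub]
      rw [integral_sub hvω i1, integral_sub hvω (hshift r), e1]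
    have e3 := congrArg (· / r ^ (1 + α)) e2
    simp only [← integral_div] at e3
    calc _ = ∫ t, (|v t| - |v (t - r)|) * ω t / r ^ (1 + α) := by congr 1 with t; ring
      _ = _ := e3
      _ = _ := by congr 1 with t; ring
  have hlow : -(D * ∫ t, |v t| * ω t) ≤
      ∫ t, |v t| * ∫ r in Ioi (0 : ℝ), (ω t - ω (t + r)) / r ^ (1 + α) := by
    rw [← neg_mul, ← integral_const_mul]
    have hQi := hQ.integral_prod_left
    simp only [integral_const_mul] at hQi
    refine integral_mono (hvω.const_mul _) hQi fun t => ?_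
    have h2 : |∫ r in Ioi (0 : ℝ), (ω t - ω (t + r)) / r ^ (1 + α)| ≤ D * ω t := by
      refine (abs_integral_le_integral_abs).trans (le_trans (le_of_eq ?_) (hω1 t).2)
      refine setIntegral_congr_fun measurableSet_Ioi fun r (hr : (0 : ℝ) < r) => ?_
      simp only [abs_div, abs_of_nonneg (by positivity : 0 ≤ r ^ (1 + α)), hω]
    have h3 := mul_le_mul_of_nonneg_left (abs_le.1 h2).1 (abs_nonneg (v t))
    dsimp only
    linarith
  have hHi : Integrable fun t =>
      (∫ r in Ioi (0 : ℝ), (|v t| - |v (t - r)|) / r ^ (1 + α)) * ω t := by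
    have := hP.integral_prod_left
    simpa only [integral_mul_const] using this
  have hpt : ∀ t, μ * |v t| + c * ∫ r in Ioi (0 : ℝ), (|v t| - |v (t - r)|) / r ^ (1 + α)
      ≤ |w t| := by
    intro t
    have hi := h.integrableOn_sub_div hα hα1 hV t
    rw [← hv] at hi
    set σ : ℝ := ((SignType.sign (v t) : SignType) : ℝ) with hσ
    have hσ1 : |σ| ≤ 1 := by
      rcases lt_trichotomy (v t) 0 with h0 | h0 | h0 <;> simp [hσ, h0]
    have hσv : σ * v t = |v t| := sign_mul_self (v t)
    have hwσ : σ * w t ≤ |w t| := by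
      calc σ * w t ≤ |σ * w t| := le_abs_self _
        _ = |σ| * |w t| := abs_mul _ _
        _ ≤ |w t| := mul_le_of_le_one_left (abs_nonneg _) hσ1
    refine le_trans ?_ hwσ
    rw [hwv t, mul_add, mul_left_comm σ μ, hσv, mul_left_comm σ c, ← integral_const_mul σ]
    refine add_le_add_right (mul_le_mul_of_nonneg_left ?_ hc) _
    refine setIntegral_mono_on ?_ (hi.const_mul σ) measurableSet_Ioi fun r hr => ?_
    · refine Integrable.mono hi ?_ (.of_forall fun r => ?_)
      · have := hvc.measurable
        exact Measurable.aestronglyMeasurable (by fun_prop)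
      · rw [norm_div, norm_div]
        gcongr
        exact abs_abs_sub_abs_le (v t) (v (t - r))
    · have hr' : (0 : ℝ) < r := hr
      rw [← mul_div_assoc]
      gcongr
      rw [mul_sub, hσv]
      have : σ * v (t - r) ≤ |v (t - r)| := by
        calc σ * v (t - r) ≤ |σ * v (t - r)| := le_abs_self _
          _ = |σ| * |v (t - r)| := abs_mul _ _
          _ ≤ |v (t - r)| := mul_le_of_le_one_left (abs_nonneg _) hσ1
      linarith
  calc (μ - c * D) * ∫ t, |v t| * ω t
      = μ * (∫ t, |v t| * ω t) + c * -(D * ∫ t, |v t| * ω t) := by ring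
    _ ≤ μ * (∫ t, |v t| * ω t) +
        c * ∫ t, (∫ r in Ioi (0 : ℝ), (|v t| - |v (t - r)|) / r ^ (1 + α)) * ω t := by
        rw [hswap]; gcongr
    _ = ∫ t, (μ * |v t| + c * ∫ r in Ioi (0 : ℝ), (|v t| - |v (t - r)|) / r ^ (1 + α)) * ω t := by
        rw [← integral_const_mul, ← integral_const_mul,
          ← integral_add (hvω.const_mul _) (hHi.const_mul _)]
        congr 1 with t
        ring
    _ ≤ ∫ t, |w t| * ω t := by
        refine integral_mono ?_ ?_ fun t => ?_
        · refine ((hvω.const_mul μ).add (hHi.const_mul c)).congr (.of_forall fun t => ?_)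
          simp only [Pi.add_apply]; ring
        · refine hw.norm.congr (.of_forall fun t => ?_)
          simp only [norm_mul, Real.norm_eq_abs, hω]
          rw [abs_of_pos (japWeight_pos _ _)]
        · exact mul_le_mul_of_nonneg_right (hpt t) (hω0 t).le

end Kato

open scoped ContDiff

lemma exists_isMollifier {α : ℝ} {ρ : ℝ → ℝ} (hρ : ContDiff ℝ ∞ ρ)
    (hc : HasCompactSupport ρ) : ∃ K, IsMollifier α K ρ := by
  have key : ∀ f : ℝ → ℝ, Continuous f → HasCompactSupport f →
      ∃ K, ∀ t, |f t| ≤ K * japWeight (1 + α) t := fun f hf hfc => by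
    have hJ := continuous_japWeight (1 + α)
    obtain ⟨K, hK⟩ := (hfc.mul_right (f' := fun t => (japWeight (1 + α) t)⁻¹)).exists_bound_of_continuous
      (hf.mul (hJ.inv₀ fun t => (japWeight_pos _ t).ne'))
    refine ⟨K, fun t => ?_⟩
    have := hK t
    have hp := japWeight_pos (1 + α) t
    simp only [Pi.mul_apply, norm_mul, norm_inv, Real.norm_eq_abs, abs_of_pos hp] at this
    rwa [← div_eq_mul_inv, div_le_iff₀ hp] at this
  obtain ⟨K₁, h₁⟩ := key ρ hρ.continuous hc
  obtain ⟨K₂, h₂⟩ := key (deriv ρ) (hρ.continuous_deriv (by simp)) hc.deriv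
  refine ⟨max 0 (max K₁ K₂), le_max_left _ _, fun t => (h₁ t).trans ?_,
    hρ.differentiable (by simp), fun t => (h₂ t).trans ?_⟩
  · exact mul_le_mul_of_nonneg_right (by simp) (japWeight_pos _ _).le
  · exact mul_le_mul_of_nonneg_right (by simp) (japWeight_pos _ _).le

lemma locallyIntegrable_of_mul_continuous {E : Type*} [TopologicalSpace E]
    [MeasurableSpace E] [OpensMeasurableSpace E] [SecondCountableTopologyEither E ℝ]
    [LocallyCompactSpace E] [T2Space E] {μ : Measure E} {V w : E → ℝ} (hw : Continuous w)
    (hw0 : ∀ x, 0 < w x) (hV : Integrable (fun x => V x * w x) μ) : LocallyIntegrable V μ := by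
  have h := hV.locallyIntegrable.continuous_mul (g := fun x => (w x)⁻¹)
    (hw.inv₀ fun x => (hw0 x).ne')
  refine h.congr (.of_forall fun x => ?_)
  dsimp only
  field_simp [ne_of_gt (hw0 x)]

/-- Iterating the Kato inequality along a sequence that grows slower than `μ ^ j`. -/
lemma ae_eq_zero_of_iterate {α c μ θ C : ℝ} (hα : 0 < α) (hα1 : α < 1) (hc : 0 ≤ c)
    (hθ : 0 ≤ θ) (hθμ : θ < μ) (V : ℕ → ℝ → ℝ)
    (hV : ∀ j, Integrable fun t => V j t * japWeight (1 + α) t)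
    (hVC : ∀ j, ∫ t, |V j t| * japWeight (1 + α) t ≤ C * θ ^ j)
    (hrec : ∀ j, ∀ ρ : ℝ → ℝ, ContDiff ℝ ∞ ρ → HasCompactSupport ρ →
      ∫ t, V (j + 1) t * ρ t = μ * (∫ t, V j t * ρ t) +
        c * ∫ t, V j t * ∫ r in Ioi (0 : ℝ), (ρ t - ρ (t + r)) / r ^ (1 + α)) :
    V 0 =ᵐ[volume] 0 := by
  refine ae_eq_zero_of_integral_contDiff_smul_eq_zero
    (locallyIntegrable_of_mul_continuous (continuous_japWeight _)
      (fun t => japWeight_pos _ t) (hV 0)) fun ρ hρ hρc => ?_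
  obtain ⟨K, hK⟩ := exists_isMollifier (α := α) hρ hρc
  obtain ⟨R, hR, hRm⟩ : ∃ R : ℝ, 0 < R ∧
      θ < μ - c * (fracDiffConst α * (1 + α) * R ^ (-α)) := by
    have h1 : Filter.Tendsto (fun R : ℝ => μ - c * (fracDiffConst α * (1 + α) * R ^ (-α)))
        Filter.atTop (nhds (μ - c * (fracDiffConst α * (1 + α) * 0))) :=
      (((tendsto_rpow_neg_atTop hα).const_mul _).const_mul _).const_sub _
    rw [mul_zero, mul_zero, sub_zero] at h1
    obtain ⟨R, h2, h3⟩ := ((h1.eventually_const_lt hθμ).and (Filter.eventually_gt_atTop 0)).exists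
    exact ⟨R, h3, h2⟩
  set m := μ - c * (fracDiffConst α * (1 + α) * R ^ (-α)) with hm
  set v : ℕ → ℝ → ℝ := fun j => mollify (V j) ρ with hv
  set w : ℝ → ℝ := fun t => japWeight (1 + α) (t / R) with hw
  have hw0 : ∀ t, 0 < w t := fun t => japWeight_pos _ _
  have hwc : Continuous w := (continuous_japWeight _).comp (by fun_prop)
  have hwJ : ∀ t, w t ≤ (1 + R ^ 2) ^ ((1 + α) / 2) * japWeight (1 + α) t := fun t => by
    apply japWeight_le_mul_of_le (by linarith) (by positivity)
    rw [div_pow]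
    have : t ^ 2 / R ^ 2 * R ^ 2 = t ^ 2 := by field_simp
    have : 0 ≤ t ^ 2 / R ^ 2 := by positivity
    nlinarith
  have hvc : ∀ j, Continuous (v j) := fun j =>
    continuous_mollify (by linarith) hK.nonneg (hV j) hK.le hK.continuous
  have hvJ := fun j =>
    integrable_mollify_mul_japWeight (by linarith) hK.nonneg (hV j) hK.le hK.continuous
  have hvle : ∀ j t, |v j t| * w t ≤
      (1 + R ^ 2) ^ ((1 + α) / 2) * (|v j t| * japWeight (1 + α) t) := fun j t => by
    calc _ ≤ |v j t| * ((1 + R ^ 2) ^ ((1 + α) / 2) * japWeight (1 + α) t) :=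
          mul_le_mul_of_nonneg_left (hwJ t) (abs_nonneg _)
      _ = _ := by ring
  have hvJ' : ∀ j, Integrable fun t => |v j t| * japWeight (1 + α) t := fun j => by
    refine (hvJ j).1.norm.congr (.of_forall fun t => ?_)
    simp [abs_of_pos (japWeight_pos _ _), hv]
  have hvw : ∀ j, Integrable fun t => |v j t| * w t := fun j => by
    refine ((hvJ' j).const_mul ((1 + R ^ 2) ^ ((1 + α) / 2))).mono'
      (Continuous.aestronglyMeasurable ((hvc j).abs.mul hwc)) (.of_forall fun t => ?_)
    rw [Real.norm_of_nonneg (mul_nonneg (abs_nonneg _) (hw0 t).le)]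
    exact hvle j t
  have hstep : ∀ j, m * ∫ t, |v j t| * w t ≤ ∫ t, |v (j + 1) t| * w t := fun j => by
    refine hK.kato hα hα1 (hV j) hR hc (v (j + 1)) (fun t => ?_) ?_
    · rw [← hK.integral_mul_eq hα hα1 (hV j) t]
      have := hrec j (fun s => ρ (s - t)) (by fun_prop)
        (hρc.comp_homeomorph (Homeomorph.subRight t))
      simp only [hv, mollify, this]
      simp_rw [add_sub_right_comm]
    · refine (hvw (j + 1)).mono (Continuous.aestronglyMeasurable ((hvc _).mul hwc))
        (.of_forall fun t => ?_)
      simp [hw]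
  have hpow : ∀ j, m ^ j * ∫ t, |v 0 t| * w t ≤ ∫ t, |v j t| * w t := fun j => by
    induction j with
    | zero => simp
    | succ j ih =>
      calc _ = m * (m ^ j * ∫ t, |v 0 t| * w t) := by ring
        _ ≤ m * ∫ t, |v j t| * w t := by
          have : 0 ≤ m := by linarith
          gcongr
        _ ≤ _ := hstep j
  obtain ⟨C', hC'⟩ : ∃ C', ∀ j, ∫ t, |v j t| * w t ≤ C' * θ ^ j := by
    refine ⟨(1 + R ^ 2) ^ ((1 + α) / 2) *
      (K * (4 ^ ((1 + α) / 2) * (2 * ∫ t, japWeight (1 + α) t)) * C), fun j => ?_⟩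
    have hI : 0 ≤ ∫ t, japWeight (1 + α) t := integral_nonneg fun t => (japWeight_pos _ t).le
    have := hK.nonneg
    calc ∫ t, |v j t| * w t
        ≤ (1 + R ^ 2) ^ ((1 + α) / 2) * ∫ t, |v j t| * japWeight (1 + α) t := by
          rw [← integral_const_mul]
          exact integral_mono (hvw j) ((hvJ' j).const_mul _) (hvle j)
      _ ≤ (1 + R ^ 2) ^ ((1 + α) / 2) * (K * (4 ^ ((1 + α) / 2) *
          (2 * ∫ t, japWeight (1 + α) t)) * (C * θ ^ j)) := by
          refine mul_le_mul_of_nonneg_left ((hvJ j).2.trans ?_) (by positivity)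
          exact mul_le_mul_of_nonneg_left (hVC j) (by positivity)
      _ = _ := by ring
  have hm0 : 0 < m := by linarith
  have hzero : ∫ t, |v 0 t| * w t = 0 := by
    refine le_antisymm ?_ (integral_nonneg fun t => mul_nonneg (abs_nonneg _) (hw0 t).le)
    have hlim : Filter.Tendsto (fun j => C' * (θ / m) ^ j) Filter.atTop (nhds (C' * 0)) :=
      (tendsto_pow_atTop_nhds_zero_of_lt_one (by positivity)
        ((div_lt_one hm0).2 hRm)).const_mul _
    rw [mul_zero] at hlim
    refine ge_of_tendsto' hlim fun j => ?_
    rw [div_pow, ← mul_div_assoc, le_div_iff₀ (by positivity), mul_comm]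
    exact (hpow j).trans (hC' j)
  have hcont : Continuous fun t => |v 0 t| * w t := (hvc 0).abs.mul hwc
  have hae := (integral_eq_zero_iff_of_nonneg (fun t => mul_nonneg (abs_nonneg _) (hw0 t).le)
    (hvw 0)).1 hzero
  have h0 := congrFun (Continuous.ae_eq_iff_eq volume hcont continuous_const |>.1 hae) 0
  have h0' : v 0 0 = 0 := by
    have := (hw0 0).ne'
    have h0 : |v 0 0| * w 0 = 0 := h0
    simpa [this] using h0
  simpa [hv, mollify, mul_comm] using h0'

open scoped SchwartzMap FourierTransform

section Tensor

variable {E : Type*} [NormedAddCommGroup E] [NormedSpace ℝ E]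

lemma norm_iteratedFDeriv_comp_clm_le {F G : Type*} [NormedAddCommGroup F] [NormedSpace ℝ F]
    [NormedAddCommGroup G] [NormedSpace ℝ G] (L : F →L[ℝ] E) (hL : ‖L‖ ≤ 1) {f : E → G}
    (hf : ContDiff ℝ ∞ f) (x : F) (i : ℕ) :
    ‖iteratedFDeriv ℝ i (f ∘ L) x‖ ≤ ‖iteratedFDeriv ℝ i f (L x)‖ := by
  rw [L.iteratedFDeriv_comp_right hf x (mod_cast le_top)]
  refine (ContinuousMultilinearMap.norm_compContinuousLinearMap_le _ _).trans ?_
  refine mul_le_of_le_one_right (norm_nonneg _) ?_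
  exact Finset.prod_le_one (fun _ _ => norm_nonneg _) fun _ _ => hL

/-- The tensor product of two real Schwartz functions. -/
noncomputable def SchwartzMap.tensor {F : Type*} [NormedAddCommGroup F] [NormedSpace ℝ F]
    (f : 𝓢(E, ℝ)) (g : 𝓢(F, ℝ)) : 𝓢(E × F, ℝ) where
  toFun p := f p.1 * g p.2
  smooth' := (f.smooth ⊤).fst'.mul (g.smooth ⊤).snd'
  decay' k l := by
    refine ⟨∑ i ∈ Finset.range (l + 1), (l.choose i : ℝ) *
      (SchwartzMap.seminorm ℝ k i f * SchwartzMap.seminorm ℝ 0 (l - i) g +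
        SchwartzMap.seminorm ℝ 0 i f * SchwartzMap.seminorm ℝ k (l - i) g), fun p => ?_⟩
    have h := norm_iteratedFDeriv_mul_le (f := f ∘ ContinuousLinearMap.fst ℝ E F)
      (g := g ∘ ContinuousLinearMap.snd ℝ E F)
      (N := ∞) ((f.smooth ⊤).comp (ContinuousLinearMap.fst ℝ E F).contDiff)
      ((g.smooth ⊤).comp (ContinuousLinearMap.snd ℝ E F).contDiff) p (n := l) (mod_cast le_top)
    refine (mul_le_mul_of_nonneg_left h (by positivity)).trans ?_
    rw [Finset.mul_sum]
    refine Finset.sum_le_sum fun i _ => ?_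
    have h1 := norm_iteratedFDeriv_comp_clm_le (ContinuousLinearMap.fst ℝ E F)
      (ContinuousLinearMap.norm_fst_le ..) (f.smooth ⊤) p i
    have h2 := norm_iteratedFDeriv_comp_clm_le (ContinuousLinearMap.snd ℝ E F)
      (ContinuousLinearMap.norm_snd_le ..) (g.smooth ⊤) p (l - i)
    have hp : ‖p‖ ^ k ≤ ‖p.1‖ ^ k + ‖p.2‖ ^ k := by
      rw [Prod.norm_def]
      rcases max_cases ‖p.1‖ ‖p.2‖ with h | h <;> rw [h.1] <;> simp
    have a1 := f.le_seminorm ℝ k i p.1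
    have a2 := f.le_seminorm ℝ 0 i p.1
    have b1 := g.le_seminorm ℝ k (l - i) p.2
    have b2 := g.le_seminorm ℝ 0 (l - i) p.2
    simp only [pow_zero, one_mul] at a2 b2
    calc _ ≤ (‖p.1‖ ^ k + ‖p.2‖ ^ k) * ((l.choose i : ℝ) * ‖iteratedFDeriv ℝ i f p.1‖ *
          ‖iteratedFDeriv ℝ (l - i) g p.2‖) := by
          gcongr
          · exact h1
          · exact h2
      _ = (l.choose i : ℝ) * ((‖p.1‖ ^ k * ‖iteratedFDeriv ℝ i f p.1‖) *
          ‖iteratedFDeriv ℝ (l - i) g p.2‖ + ‖iteratedFDeriv ℝ i f p.1‖ *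
          (‖p.2‖ ^ k * ‖iteratedFDeriv ℝ (l - i) g p.2‖)) := by ring
      _ ≤ _ := by gcongr

@[simp] lemma SchwartzMap.tensor_apply {F : Type*} [NormedAddCommGroup F] [NormedSpace ℝ F]
    (f : 𝓢(E, ℝ)) (g : 𝓢(F, ℝ)) (p : E × F) : f.tensor g p = f p.1 * g p.2 := rfl

end Tensor

section PowerBound

variable {E : Type*} [NormedAddCommGroup E] [NormedSpace ℝ E]

/-- A submultiplicative jet norm. -/
noncomputable def jetNorm (k : ℕ) (δ : ℝ) (f : E → ℂ) (x : E) : ℝ :=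
  ∑ i ∈ Finset.range (k + 1), δ ^ i / i.factorial * ‖iteratedFDeriv ℝ i f x‖

lemma jetNorm_nonneg (k : ℕ) {δ : ℝ} (hδ : 0 ≤ δ) (f : E → ℂ) (x : E) : 0 ≤ jetNorm k δ f x :=
  Finset.sum_nonneg fun _ _ => by positivity

lemma jetNorm_mul_le (k : ℕ) {δ : ℝ} (hδ : 0 ≤ δ) {f g : E → ℂ} (hf : ContDiff ℝ ∞ f)
    (hg : ContDiff ℝ ∞ g) (x : E) :
    jetNorm k δ (fun y => f y * g y) x ≤ jetNorm k δ f x * jetNorm k δ g x := by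
  set F : ℕ → ℝ := fun i => δ ^ i / i.factorial * ‖iteratedFDeriv ℝ i f x‖ with hF
  set G : ℕ → ℝ := fun i => δ ^ i / i.factorial * ‖iteratedFDeriv ℝ i g x‖ with hG
  have hF0 : ∀ i, 0 ≤ F i := fun i => by positivity
  have hG0 : ∀ i, 0 ≤ G i := fun i => by positivity
  calc jetNorm k δ (fun y => f y * g y) x
      ≤ ∑ i ∈ Finset.range (k + 1), ∑ a ∈ Finset.range (i + 1), F a * G (i - a) := by
        refine Finset.sum_le_sum fun i _ => ?_
        refine (mul_le_mul_of_nonneg_left (norm_iteratedFDeriv_mul_le hf hg x (n := i)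
          (mod_cast le_top)) (by positivity)).trans (le_of_eq ?_)
        rw [Finset.mul_sum]
        refine Finset.sum_congr rfl fun a ha => ?_
        have hai : a ≤ i := Nat.lt_succ_iff.1 (Finset.mem_range.1 ha)
        have hc : (i.choose a : ℝ) = i.factorial / (a.factorial * (i - a).factorial) :=
          Nat.cast_choose ℝ hai
        have hd : δ ^ i = δ ^ a * δ ^ (i - a) := by rw [← pow_add, Nat.add_sub_cancel' hai]
        simp only [hF, hG]
        rw [hc, hd]
        have := Nat.factorial_ne_zero
        field_simp
    _ = ∑ m ∈ Finset.range (k + 1), ∑ b ∈ Finset.range (k + 1 - m), F m * G b :=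
        Finset.sum_range_diag_flip (k + 1) fun a b => F a * G b
    _ ≤ ∑ m ∈ Finset.range (k + 1), ∑ b ∈ Finset.range (k + 1), F m * G b := by
        refine Finset.sum_le_sum fun m _ => ?_
        refine Finset.sum_le_sum_of_subset_of_nonneg
          (Finset.range_mono (Nat.sub_le _ _)) fun b _ _ => mul_nonneg (hF0 _) (hG0 _)
    _ = _ := by rw [← Finset.sum_mul_sum]; rfl

lemma exists_iteratedFDeriv_mul_pow_le {g h : E → ℂ} (hg : ContDiff ℝ ∞ g)
    (hgc : HasCompactSupport g) (hh : ContDiff ℝ ∞ h) {θ θ' : ℝ} (hθ : θ < θ')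
    (hθ' : 0 ≤ θ') (hhθ : ∀ x ∈ tsupport g, ‖h x‖ ≤ θ) (k : ℕ) :
    ∃ C, 0 ≤ C ∧ ∀ j x, ‖iteratedFDeriv ℝ k (fun y => g y * h y ^ j) x‖ ≤ C * θ' ^ j := by
  obtain ⟨M, hM0, hM⟩ : ∃ M, 0 ≤ M ∧ ∀ i ∈ Finset.range (k + 1), ∀ x ∈ tsupport g,
      ‖iteratedFDeriv ℝ i h x‖ ≤ M := by
    have : ∀ i : ℕ, ∃ M, ∀ x ∈ tsupport g, ‖iteratedFDeriv ℝ i h x‖ ≤ M := fun i =>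
      hgc.isCompact.exists_bound_of_continuousOn
        (hh.continuous_iteratedFDeriv (m := i) (mod_cast le_top)).continuousOn
    choose M hM using this
    refine ⟨∑ i ∈ Finset.range (k + 1), |M i|, Finset.sum_nonneg fun _ _ => abs_nonneg _,
      fun i hi x hx => ((hM i x hx).trans (le_abs_self _)).trans ?_⟩
    exact Finset.single_le_sum (f := fun i => |M i|) (fun _ _ => abs_nonneg _) hi
  obtain ⟨Mg, hMg⟩ : ∃ M, ∀ x, jetNorm k 1 g x ≤ M := by
    have : ∀ i : ℕ, ∃ M, ∀ x, ‖iteratedFDeriv ℝ i g x‖ ≤ M := fun i =>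
      (hgc.iteratedFDeriv i).exists_bound_of_continuous
        (hg.continuous_iteratedFDeriv (m := i) (mod_cast le_top))
    choose M hM using this
    exact ⟨∑ i ∈ Finset.range (k + 1), 1 ^ i / i.factorial * M i, fun x =>
      Finset.sum_le_sum fun i _ => mul_le_mul_of_nonneg_left (hM i x) (by positivity)⟩
  obtain ⟨δ, hδ0, hδ1, hδ⟩ : ∃ δ : ℝ, 0 < δ ∧ δ ≤ 1 ∧ θ + k * (δ * M) ≤ θ' := by
    have h1 : Filter.Tendsto (fun δ : ℝ => θ + k * (δ * M)) (nhdsWithin 0 (Ioi 0))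
        (nhds (θ + k * (0 * M))) :=
      (tendsto_nhdsWithin_of_tendsto_nhds
        (Continuous.tendsto (by fun_prop : Continuous fun δ : ℝ => θ + k * (δ * M)) 0))
    simp only [zero_mul, mul_zero, add_zero] at h1
    obtain ⟨δ, h2, h3⟩ := ((h1.eventually_lt_const hθ).and
      (Ioc_mem_nhdsGT (zero_lt_one' ℝ))).exists
    exact ⟨δ, h3.1, h3.2, h2.le⟩
  have hjet : ∀ x ∈ tsupport g, jetNorm k δ h x ≤ θ' := fun x hx => by
    rw [jetNorm, Finset.sum_range_succ']
    simp only [pow_zero, Nat.factorial_zero, Nat.cast_one, div_one, one_mul,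
      norm_iteratedFDeriv_zero]
    have : ∑ i ∈ Finset.range k, δ ^ (i + 1) / (i + 1).factorial *
        ‖iteratedFDeriv ℝ (i + 1) h x‖ ≤ ∑ i ∈ Finset.range k, δ * M := by
      refine Finset.sum_le_sum fun i hi => ?_
      have hi' : i + 1 ∈ Finset.range (k + 1) := by
        have := Finset.mem_range.1 hi
        exact Finset.mem_range.2 (by omega)
      have h1 : δ ^ (i + 1) / (i + 1).factorial ≤ δ := by
        refine (div_le_self (by positivity) (mod_cast Nat.factorial_pos _)).trans ?_
        exact pow_le_of_le_one hδ0.le hδ1 (by omega)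
      exact mul_le_mul h1 (hM _ hi' x hx) (norm_nonneg _) hδ0.le
    rw [Finset.sum_const, Finset.card_range, nsmul_eq_mul] at this
    linarith [hhθ x hx]
  have hpow : ∀ j, ∀ x ∈ tsupport g,
      jetNorm k δ (fun y => g y * h y ^ j) x ≤ Mg * θ' ^ j := fun j x hx => by
    induction j with
    | zero =>
      simp only [pow_zero, mul_one]
      refine le_trans (Finset.sum_le_sum fun i _ => ?_) (hMg x)
      gcongr
    | succ j ih =>
      have := jetNorm_mul_le k hδ0.le (hg.mul (hh.pow j)) hh x
      simp only [mul_assoc, ← pow_succ] at this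
      refine this.trans ?_
      rw [pow_succ, ← mul_assoc]
      exact mul_le_mul ih (hjet x hx) (jetNorm_nonneg _ hδ0.le _ _)
        ((jetNorm_nonneg _ hδ0.le _ _).trans ih)
  have hMg0 : 0 ≤ Mg := (jetNorm_nonneg k zero_le_one g 0).trans (hMg 0)
  refine ⟨k.factorial / δ ^ k * Mg, by positivity, fun j x => ?_⟩
  by_cases hx : x ∈ tsupport g
  · have h1 : δ ^ k / k.factorial * ‖iteratedFDeriv ℝ k (fun y => g y * h y ^ j) x‖ ≤
        jetNorm k δ (fun y => g y * h y ^ j) x :=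
      Finset.single_le_sum (f := fun i => δ ^ i / i.factorial *
        ‖iteratedFDeriv ℝ i (fun y => g y * h y ^ j) x‖) (fun _ _ => by positivity)
        (Finset.self_mem_range_succ k)
    have h2 := h1.trans (hpow j x hx)
    rw [div_mul_eq_mul_div, div_le_iff₀ (by positivity)] at h2
    rw [div_mul_eq_mul_div, div_mul_eq_mul_div, le_div_iff₀ (by positivity)]
    linarith
  · have h0 : iteratedFDeriv ℝ k (fun y => g y * h y ^ j) x = 0 := by
      have h3 : (fun y => g y * h y ^ j) =ᶠ[nhds x] fun _ => 0 := by
        filter_upwards [(isClosed_tsupport g).isOpen_compl.mem_nhds hx] with y hy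
        rw [image_eq_zero_of_notMem_tsupport hy, zero_mul]
      rw [h3.iteratedFDeriv ℝ k |>.eq_of_nhds]
      simp
    rw [h0, norm_zero]
    positivity

end PowerBound

section Decay

variable {E F : Type*} [NormedAddCommGroup E] [NormedSpace ℝ E] [NormedAddCommGroup F]
  [NormedSpace ℝ F]

lemma SchwartzMap.exists_norm_iteratedFDeriv_le (f : 𝓢(E, F)) (k : ℕ) (N : ℝ) :
    ∃ C, 0 ≤ C ∧ ∀ x, ‖iteratedFDeriv ℝ k f x‖ ≤ C * (1 + ‖x‖) ^ (-N) := by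
  obtain ⟨m, hm⟩ := exists_nat_ge N
  refine ⟨2 ^ m * ((Finset.Iic (m, k)).sup fun m => SchwartzMap.seminorm ℝ m.1 m.2) f,
    by positivity, fun x => ?_⟩
  have h := SchwartzMap.one_add_le_sup_seminorm_apply (𝕜 := ℝ) (m := (m, k)) le_rfl le_rfl f x
  have h1 : 1 ≤ 1 + ‖x‖ := by linarith [norm_nonneg x]
  have h2 : (1 + ‖x‖) ^ N ≤ (1 + ‖x‖) ^ m := by
    rw [← Real.rpow_natCast]; exact Real.rpow_le_rpow_of_exponent_le h1 hm
  rw [Real.rpow_neg (by positivity), ← div_eq_mul_inv, le_div_iff₀ (by positivity), mul_comm]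
  exact (mul_le_mul_of_nonneg_right h2 (norm_nonneg _)).trans h

lemma SchwartzMap.exists_norm_le (f : 𝓢(E, F)) (N : ℝ) :
    ∃ C, 0 ≤ C ∧ ∀ x, ‖f x‖ ≤ C * (1 + ‖x‖) ^ (-N) := by
  simpa using f.exists_norm_iteratedFDeriv_le 0 N

end Decay

section ReInvFourier

variable {E : Type*} [NormedAddCommGroup E] [InnerProductSpace ℝ E] [FiniteDimensional ℝ E]
  [MeasurableSpace E] [BorelSpace E]

/-- The real part of the inverse Fourier transform of a Schwartz function. -/
noncomputable def reInvFourier (G : 𝓢(E, ℂ)) : 𝓢(E, ℝ) :=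
  SchwartzMap.postcompCLM (𝕜 := ℝ) Complex.reCLM (𝓕⁻ G)

lemma reInvFourier_apply (G : 𝓢(E, ℂ)) (x : E) :
    reInvFourier G x =
      (∫ v, Complex.exp (↑(2 * Real.pi * inner ℝ v x) * Complex.I) * G v).re := by
  rw [reInvFourier, SchwartzMap.postcompCLM_apply, SchwartzMap.fourierInv_coe,
    Real.fourierInv_eq']
  rfl

lemma exists_abs_reInvFourier_le (N : ℕ) : ∃ (S : Finset (ℕ × ℕ)) (C : ℝ), 0 ≤ C ∧
    ∀ (G : 𝓢(E, ℂ)) x, |reInvFourier G x| ≤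
      C * (S.sup (schwartzSeminormFamily ℂ E ℂ)) G * (1 + ‖x‖) ^ (-(N : ℝ)) := by
  let p : Seminorm ℂ 𝓢(E, ℂ) :=
    ((Finset.Iic (N, 0)).sup (schwartzSeminormFamily ℂ E ℂ)).comp
      (FourierTransform.fourierInvCLM ℂ 𝓢(E, ℂ) : 𝓢(E, ℂ) →L[ℂ] 𝓢(E, ℂ)).toLinearMap
  have hp : Continuous p :=
    (Seminorm.continuous_of_le (by
      rw [FunLike.coe_sum, Finset.sum_fn]
      exact continuous_finsetSum (Finset.Iic (N, 0)) fun i _ =>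
        (schwartz_withSeminorms ℂ E ℂ).continuous_seminorm i)
      (Seminorm.finset_sup_le_sum _ _)).comp
      (FourierTransform.fourierInvCLM ℂ 𝓢(E, ℂ) : 𝓢(E, ℂ) →L[ℂ] 𝓢(E, ℂ)).continuous
  obtain ⟨S, C, -, hC⟩ := Seminorm.bound_of_continuous (schwartz_withSeminorms ℂ E ℂ) p hp
  refine ⟨S, 2 ^ N * C, by positivity, fun G x => ?_⟩
  have h := SchwartzMap.one_add_le_sup_seminorm_apply (𝕜 := ℂ) (m := (N, 0)) le_rfl le_rfl (𝓕⁻ G) x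
  rw [norm_iteratedFDeriv_zero] at h
  have h2 : ((Finset.Iic (N, 0)).sup (schwartzSeminormFamily ℂ E ℂ)) (𝓕⁻ G) ≤
    C * (S.sup (schwartzSeminormFamily ℂ E ℂ)) G := hC G
  have h3 : |reInvFourier G x| ≤ ‖(𝓕⁻ G : 𝓢(E, ℂ)) x‖ := Complex.abs_re_le_norm _
  rw [Real.rpow_neg (by positivity), Real.rpow_natCast, ← div_eq_mul_inv, le_div_iff₀ (by positivity)]
  calc |reInvFourier G x| * (1 + ‖x‖) ^ N ≤ (1 + ‖x‖) ^ N * ‖(𝓕⁻ G : 𝓢(E, ℂ)) x‖ := by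
        rw [mul_comm]; gcongr
    _ ≤ _ := h
    _ ≤ 2 ^ N * (C * (S.sup (schwartzSeminormFamily ℂ E ℂ)) G) := by
      gcongr; exact h2
    _ = _ := by ring

lemma exists_abs_reInvFourier_mul_pow_le {g h : E → ℂ} (hg : ContDiff ℝ ∞ g)
    (hgc : HasCompactSupport g) (hh : ContDiff ℝ ∞ h) {θ θ' : ℝ} (hθ : θ < θ')
    (hθ' : 0 ≤ θ') (hhθ : ∀ x ∈ tsupport g, ‖h x‖ ≤ θ) (G : ℕ → 𝓢(E, ℂ))
    (hG : ∀ j x, G j x = g x * h x ^ j) (N : ℝ) :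
    ∃ C, 0 ≤ C ∧ ∀ j x, |reInvFourier (G j) x| ≤ C * θ' ^ j * (1 + ‖x‖) ^ (-N) := by
  obtain ⟨m, hm⟩ := exists_nat_ge N
  obtain ⟨S, C, hC0, hC⟩ := exists_abs_reInvFourier_le (E := E) m
  obtain ⟨R, hR0, hR⟩ := hgc.isCompact.isBounded.exists_pos_norm_le
  choose D hD0 hD using fun k => exists_iteratedFDeriv_mul_pow_le hg hgc hh hθ hθ' hhθ k
  refine ⟨C * ∑ i ∈ S, R ^ i.1 * D i.2, mul_nonneg hC0 (Finset.sum_nonneg fun i _ =>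
    mul_nonneg (by positivity) (hD0 _)), fun j x => ?_⟩
  have hfun : ⇑(G j) = fun y => g y * h y ^ j := funext (hG j)
  have hS : (S.sup (schwartzSeminormFamily ℂ E ℂ)) (G j) ≤ (∑ i ∈ S, R ^ i.1 * D i.2) * θ' ^ j := by
    refine Seminorm.finset_sup_apply_le (mul_nonneg (Finset.sum_nonneg fun i _ =>
      mul_nonneg (by positivity) (hD0 _)) (by positivity)) fun i hi => ?_
    refine le_trans (b := R ^ i.1 * D i.2 * θ' ^ j) ?_ (mul_le_mul_of_nonneg_right
      (Finset.single_le_sum (f := fun i : ℕ × ℕ => R ^ i.1 * D i.2)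
        (fun i _ => mul_nonneg (by positivity) (hD0 _)) hi) (by positivity))
    refine SchwartzMap.seminorm_le_bound ℂ i.1 i.2 (G j) (mul_nonneg (mul_nonneg (by positivity) (hD0 _))
      (by positivity)) fun y => ?_
    rw [hfun]
    by_cases hy : y ∈ tsupport g
    · rw [mul_assoc]
      exact mul_le_mul (pow_le_pow_left₀ (norm_nonneg _) (hR y hy) _) (hD _ j y) (norm_nonneg _)
        (by positivity)
    · have h3 : (fun y => g y * h y ^ j) =ᶠ[nhds y] fun _ => 0 := by
        filter_upwards [(isClosed_tsupport g).isOpen_compl.mem_nhds hy] with z hz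
        rw [image_eq_zero_of_notMem_tsupport hz, zero_mul]
      rw [h3.iteratedFDeriv ℝ i.2 |>.eq_of_nhds]
      simp only [iteratedFDeriv_fun_zero, Pi.zero_apply, norm_zero, mul_zero]
      exact mul_nonneg (mul_nonneg (by positivity) (hD0 _)) (by positivity)
  have h1 : (1 + ‖x‖) ^ (-(m : ℝ)) ≤ (1 + ‖x‖) ^ (-N) :=
    Real.rpow_le_rpow_of_exponent_le (by linarith [norm_nonneg x]) (by linarith)
  calc _ ≤ _ := hC (G j) x
    _ ≤ C * ((∑ i ∈ S, R ^ i.1 * D i.2) * θ' ^ j) * (1 + ‖x‖) ^ (-N) :=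
      mul_le_mul (mul_le_mul_of_nonneg_left hS hC0) h1 (by positivity)
        (mul_nonneg hC0 ((apply_nonneg _ _).trans hS))
    _ = _ := by ring

end ReInvFourier

section LapSymbol

variable {E : Type*} [NormedAddCommGroup E] [InnerProductSpace ℝ E] [FiniteDimensional ℝ E]
  [MeasurableSpace E] [BorelSpace E]

lemma integrable_min_one_sq_div_norm_rpow [Nontrivial E] {σ : ℝ} (h0 : 0 < σ) (h2 : σ < 2) :
    Integrable fun y : E => min 1 (‖y‖ ^ 2) / ‖y‖ ^ (Module.finrank ℝ E + σ) := by
  have := (integrable_fun_norm_addHaar (volume : Measure E)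
    (f := fun r : ℝ => min 1 (r ^ 2) / r ^ (Module.finrank ℝ E + σ))).2 ?_
  · exact this
  refine (integrableOn_min_one_pow_mul_rpow (m := 2) h0 (by exact_mod_cast h2)).congr_fun
    (fun r (hr : 0 < r) => ?_) measurableSet_Ioi
  have hd : 1 ≤ Module.finrank ℝ E := Module.finrank_pos
  simp only [smul_eq_mul]
  rw [← Real.rpow_natCast r (Module.finrank ℝ E - 1), Nat.cast_sub hd, mul_div_left_comm,
    ← Real.rpow_sub hr]
  congr 2
  push_cast; ring

/-- The Fourier symbol of the (unnormalized) fractional Laplacian of order `σ`. -/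
noncomputable def lapSymbol (σ : ℝ) (ξ : E) : ℝ :=
  ∫ y : E, (2 - 2 * Real.cos (2 * Real.pi * inner ℝ ξ y)) / ‖y‖ ^ (Module.finrank ℝ E + σ)

lemma two_sub_two_cos_le {E : Type*} [NormedAddCommGroup E] [InnerProductSpace ℝ E] (ξ y : E) :
    |2 - 2 * Real.cos (2 * Real.pi * inner ℝ ξ y)| ≤
    4 * (1 + (2 * Real.pi * ‖ξ‖) ^ 2) * min 1 (‖y‖ ^ 2) := by
  have h1 := Real.one_sub_sq_div_two_le_cos (x := 2 * Real.pi * inner ℝ ξ y)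
  have h2 := Real.cos_le_one (2 * Real.pi * inner ℝ ξ y)
  have h3 := Real.neg_one_le_cos (2 * Real.pi * inner ℝ ξ y)
  rw [abs_of_nonneg (by linarith)]
  have h4 : (2 * Real.pi * inner ℝ ξ y) ^ 2 ≤ (2 * Real.pi * ‖ξ‖) ^ 2 * ‖y‖ ^ 2 := by
    have h5 : |inner ℝ ξ y| ^ 2 ≤ (‖ξ‖ * ‖y‖) ^ 2 :=
      pow_le_pow_left₀ (abs_nonneg _) (abs_real_inner_le_norm ξ y) 2
    rw [sq_abs] at h5
    calc _ = (2 * Real.pi) ^ 2 * inner ℝ ξ y ^ 2 := by ring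
      _ ≤ (2 * Real.pi) ^ 2 * (‖ξ‖ * ‖y‖) ^ 2 := mul_le_mul_of_nonneg_left h5 (by positivity)
      _ = _ := by ring
  rcases min_cases 1 (‖y‖ ^ 2) with h | h <;> rw [h.1]
  · nlinarith [sq_nonneg (2 * Real.pi * ‖ξ‖)]
  · nlinarith [sq_nonneg (2 * Real.pi * ‖ξ‖), sq_nonneg ‖y‖,
      mul_nonneg (sq_nonneg (2 * Real.pi * ‖ξ‖)) (sq_nonneg ‖y‖)]

lemma integrable_lapSymbol_integrand [Nontrivial E] {σ : ℝ} (h0 : 0 < σ) (h2 : σ < 2) (ξ : E) :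
    Integrable fun y : E =>
      (2 - 2 * Real.cos (2 * Real.pi * inner ℝ ξ y)) / ‖y‖ ^ (Module.finrank ℝ E + σ) := by
  refine ((integrable_min_one_sq_div_norm_rpow (E := E) h0 h2).const_mul
    (4 * (1 + (2 * Real.pi * ‖ξ‖) ^ 2))).mono'
    (Measurable.aestronglyMeasurable (by
      refine Measurable.div (Continuous.measurable (by fun_prop)) (by fun_prop)))
    (.of_forall fun y => ?_)
  rw [norm_div, Real.norm_eq_abs, Real.norm_of_nonneg (Real.rpow_nonneg (norm_nonneg y) _), ← mul_div_assoc]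
  exact div_le_div_of_nonneg_right (two_sub_two_cos_le ξ y) (by positivity)

lemma lapSymbol_eq_of_norm_eq (σ : ℝ) {ξ η : E} (h : ‖ξ‖ = ‖η‖) :
    lapSymbol σ ξ = lapSymbol σ η := by
  have hL := Submodule.reflection_sub h
  set L := Submodule.reflection (Submodule.span ℝ {ξ - η})ᗮ
  have h1 := L.measurePreserving.integral_comp L.toHomeomorph.measurableEmbedding fun y =>
    (2 - 2 * Real.cos (2 * Real.pi * inner ℝ η y)) / ‖y‖ ^ (Module.finrank ℝ E + σ)
  rw [lapSymbol, lapSymbol, ← h1, ← hL]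
  simp

lemma lapSymbol_smul (σ : ℝ) (e : E) {r : ℝ} (hr : 0 < r) :
    lapSymbol σ (r • e) = r ^ σ * lapSymbol σ e := by
  have h := Measure.integral_comp_smul (volume : Measure E) (fun y : E =>
    (2 - 2 * Real.cos (2 * Real.pi * inner ℝ e y)) / ‖y‖ ^ (Module.finrank ℝ E + σ)) r
  have h1 : lapSymbol σ (r • e) = r ^ (Module.finrank ℝ E + σ) * ∫ y : E,
      (2 - 2 * Real.cos (2 * Real.pi * inner ℝ e (r • y))) /
        ‖r • y‖ ^ (Module.finrank ℝ E + σ) := by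
    rw [lapSymbol, ← integral_const_mul]
    congr 1 with y
    rw [norm_smul, Real.norm_of_nonneg hr.le, Real.mul_rpow hr.le (norm_nonneg _),
      real_inner_smul_left, real_inner_smul_right]
    have : r ^ (Module.finrank ℝ E + σ) ≠ 0 := (Real.rpow_pos_of_pos hr _).ne'
    field_simp
  rw [h1, h, Real.rpow_add hr, Real.rpow_natCast, abs_of_pos (by positivity), smul_eq_mul, lapSymbol]
  field_simp

lemma exists_lapSymbol_eq [Nontrivial E] {σ : ℝ} (h0 : 0 < σ) (h2 : σ < 2) :
    ∃ β > 0, ∀ ξ : E, lapSymbol σ ξ = β * ‖ξ‖ ^ σ := by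
  obtain ⟨e, he⟩ := exists_norm_eq E zero_le_one
  refine ⟨lapSymbol σ e, ?_, fun ξ => ?_⟩
  · rw [lapSymbol, gt_iff_lt, integral_pos_iff_support_of_nonneg _ (integrable_lapSymbol_integrand h0 h2 e)]
    · have ho : IsOpen ((fun y : E => inner ℝ e y) ⁻¹' Ioo (0 : ℝ) 1) :=
        isOpen_Ioo.preimage (by fun_prop)
      refine lt_of_lt_of_le (ho.measure_pos volume ⟨(1 / 2 : ℝ) • e, ?_⟩) (measure_mono ?_)
      · simp only [mem_preimage, mem_Ioo, real_inner_smul_right, real_inner_self_eq_norm_sq, he]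
        norm_num
      · rintro y ⟨hy0, hy1⟩
        have hy : y ≠ 0 := by rintro rfl; simp at hy0
        have hpi := Real.pi_pos
        have hc : Real.cos (2 * Real.pi * inner ℝ e y) ≠ 1 := fun h => by
          rw [Real.cos_eq_one_iff_of_lt_of_lt (by nlinarith) (by nlinarith)] at h
          have : 0 < 2 * Real.pi * inner ℝ e y := by positivity
          exact this.ne' h
        refine div_ne_zero (fun h => hc (by linarith)) ?_
        exact (Real.rpow_pos_of_pos (norm_pos_iff.2 hy) _).ne'
    · intro y
      have := Real.cos_le_one (2 * Real.pi * inner ℝ e y)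
      exact div_nonneg (by linarith) (by positivity)
  · rcases eq_or_ne ξ 0 with rfl | hξ
    · simp [lapSymbol, Real.zero_rpow h0.ne']
    · rw [lapSymbol_eq_of_norm_eq σ (η := ‖ξ‖ • e) (by rw [norm_smul, he]; simp),
        lapSymbol_smul σ e (norm_pos_iff.2 hξ), mul_comm]

lemma integral_second_diff_reInvFourier [Nontrivial E] {σ : ℝ} (h0 : 0 < σ) (h2 : σ < 2)
    (G H : 𝓢(E, ℂ)) (hH : ∀ v, H v = lapSymbol σ v * G v) (x : E) :
    ∫ y, (2 * reInvFourier G x - reInvFourier G (x + y) - reInvFourier G (x - y)) /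
      ‖y‖ ^ (Module.finrank ℝ E + σ) = reInvFourier H x := by
  set e : E → E → ℂ := fun v x => Complex.exp (↑(2 * Real.pi * inner ℝ v x) * Complex.I) with he
  have hen : ∀ v x, ‖e v x‖ = 1 := fun v x => Complex.norm_exp_ofReal_mul_I _
  have hec : Continuous (Function.uncurry e) := by simp only [he]; fun_prop
  have hec' : ∀ x, Continuous fun v => e v x := fun x => by simp only [he]; fun_prop
  have h_int : ∀ x, Integrable fun v => e v x * G v := fun x =>
    G.integrable.norm.mono' ((hec' x).mul G.continuous).aestronglyMeasurable
      (.of_forall fun v => by rw [norm_mul, hen, one_mul])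
  have hdiff : ∀ y, 2 * reInvFourier G x - reInvFourier G (x + y) - reInvFourier G (x - y) =
      (∫ v, e v x * ((2 - 2 * Real.cos (2 * Real.pi * inner ℝ v y) : ℝ) : ℂ) * G v).re := by
    intro y
    simp only [reInvFourier_apply]
    have : (∫ v, e v x * ((2 - 2 * Real.cos (2 * Real.pi * inner ℝ v y) : ℝ) : ℂ) * G v) =
        2 * (∫ v, e v x * G v) - (∫ v, e v (x + y) * G v) - ∫ v, e v (x - y) * G v := by
      rw [← integral_const_mul, ← integral_sub ((h_int x).const_mul 2) (h_int _),
        ← integral_sub (by exact ((h_int x).const_mul 2).sub (h_int _)) (h_int _)]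
      congr 1 with v
      have h1 : e v (x + y) = e v x * e v y := by
        simp only [he, ← Complex.exp_add, inner_add_right]; congr 1; push_cast; ring
      have h2 : e v (x - y) = e v x * Complex.exp (-(↑(2 * Real.pi * inner ℝ v y)) * Complex.I) := by
        simp only [he, ← Complex.exp_add, inner_sub_right]; congr 1; push_cast; ring
      have h3 : ((2 - 2 * Real.cos (2 * Real.pi * inner ℝ v y) : ℝ) : ℂ) =
          2 - (e v y + Complex.exp (-(↑(2 * Real.pi * inner ℝ v y)) * Complex.I)) := by
        rw [Complex.ofReal_sub, Complex.ofReal_mul, Complex.ofReal_cos, Complex.ofReal_ofNat,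
          Complex.two_cos]
      rw [h1, h2, h3]; ring
    rw [this]
    simp [he]
  set K : E → ℝ := fun y => ‖y‖ ^ (Module.finrank ℝ E + σ) with hK
  have hK0 : ∀ y, 0 ≤ K y := fun y => by positivity
  set F : E → E → ℂ := fun y v =>
    e v x * ((2 - 2 * Real.cos (2 * Real.pi * inner ℝ v y) : ℝ) : ℂ) * G v / (K y : ℂ) with hF
  have hFint : Integrable (Function.uncurry F) (volume.prod volume) := by
    have h4 : Integrable fun v : E => 4 * (1 + (2 * Real.pi * ‖v‖) ^ 2) * ‖G v‖ := by
      have h5 := (G.integrable_pow_mul volume 0)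
      have h6 := (G.integrable_pow_mul volume 2)
      refine ((h5.const_mul 4).add (h6.const_mul (4 * (2 * Real.pi) ^ 2))).congr
        (.of_forall fun v => ?_)
      simp only [Pi.add_apply]
      ring
    refine ((integrable_min_one_sq_div_norm_rpow (E := E) h0 h2).mul_prod h4).mono' ?_
      (.of_forall fun p => ?_)
    · have hG := G.continuous
      have : Measurable fun p : E × E => (K p.1 : ℂ) := by simp only [hK]; fun_prop
      refine (Measurable.div ?_ this).aestronglyMeasurable
      refine Continuous.measurable ?_
      simp only [he]
      fun_prop
    · simp only [Function.uncurry, hF]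
      rw [norm_div, norm_mul, norm_mul, hen, one_mul, Complex.norm_real, Complex.norm_real,
        Real.norm_of_nonneg (hK0 _), div_mul_eq_mul_div]
      refine div_le_div_of_nonneg_right ?_ (hK0 _)
      calc _ ≤ (4 * (1 + (2 * Real.pi * ‖p.2‖) ^ 2) * min 1 (‖p.1‖ ^ 2)) * ‖G p.2‖ :=
            mul_le_mul_of_nonneg_right (two_sub_two_cos_le p.2 p.1) (norm_nonneg _)
        _ = _ := by ring
  calc ∫ y, (2 * reInvFourier G x - reInvFourier G (x + y) - reInvFourier G (x - y)) / K y
      = ∫ y, (∫ v, F y v).re := by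
        congr 1 with y
        rw [hdiff, hF]
        simp only [integral_div]
        rw [Complex.div_ofReal_re]
    _ = (∫ y, ∫ v, F y v).re := by
      exact integral_re hFint.integral_prod_left
    _ = (∫ v, ∫ y, F y v).re := by rw [integral_integral_swap hFint]
    _ = reInvFourier H x := by
      rw [reInvFourier_apply]
      congr 2 with v
      rw [hH, lapSymbol, ← integral_complex_ofReal, ← mul_assoc, mul_right_comm, ← integral_const_mul]
      congr 1 with y
      simp only [hF, he, hK]
      push_cast
      ring

end LapSymbol

lemma exists_contDiff_eqOn_of_zero_notMem {E F : Type*} [NormedAddCommGroup E]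
    [InnerProductSpace ℝ E] [FiniteDimensional ℝ E] [NormedAddCommGroup F] [NormedSpace ℝ F]
    {m : E → F} (hm : ∀ x ≠ 0, ContDiffAt ℝ ∞ m x) {K : Set E} (hK : IsClosed K)
    (h0 : (0 : E) ∉ K) : ∃ m' : E → F, ContDiff ℝ ∞ m' ∧ EqOn m' m K := by
  obtain ⟨ε, hε, hεK⟩ := Metric.isOpen_iff.1 hK.isOpen_compl 0 h0
  let ζ : ContDiffBump (0 : E) := ⟨ε / 2, ε, by positivity, by linarith⟩
  refine ⟨fun x => (1 - ζ x) • m x, contDiff_iff_contDiffAt.2 fun x => ?_, fun x hx => ?_⟩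
  · rcases eq_or_ne x 0 with rfl | hx
    · refine (contDiffAt_const (c := (0 : F))).congr_of_eventuallyEq ?_
      filter_upwards [ζ.eventuallyEq_one] with y hy
      simp [hy]
    · exact (contDiffAt_const.sub ζ.contDiff.contDiffAt).smul (hm x hx)
  · have : ζ x = 0 := ζ.zero_of_le_dist (not_lt.1 fun h => hεK h hx)
    simp [this]

section Linear

variable {E : Type*} [NormedAddCommGroup E] [InnerProductSpace ℝ E] [FiniteDimensional ℝ E]
  [MeasurableSpace E] [BorelSpace E]

lemma reInvFourier_sub (F G : 𝓢(E, ℂ)) (x : E) :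
    reInvFourier (F - G) x = reInvFourier F x - reInvFourier G x := by
  have : (𝓕⁻ (F - G) : 𝓢(E, ℂ)) = 𝓕⁻ F - 𝓕⁻ G :=
    map_sub (FourierTransform.fourierInvCLM ℂ 𝓢(E, ℂ)) F G
  simp only [reInvFourier, this, map_sub, sub_apply]

lemma reInvFourier_smul (c : ℝ) (G : 𝓢(E, ℂ)) (x : E) :
    reInvFourier ((c : ℂ) • G) x = c * reInvFourier G x := by
  have : (𝓕⁻ ((c : ℂ) • G) : 𝓢(E, ℂ)) = (c : ℂ) • 𝓕⁻ G :=
    map_smul (FourierTransform.fourierInvCLM ℂ 𝓢(E, ℂ)) (c : ℂ) G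
  rw [reInvFourier, this]
  simp [reInvFourier, SchwartzMap.postcompCLM_apply]

end Linear

section Slices

variable {E : Type*} [NormedAddCommGroup E] [InnerProductSpace ℝ E] [FiniteDimensional ℝ E]
  [MeasurableSpace E] [BorelSpace E]

/-- The time-dependent pairing of the slices of `u` with a function of space. -/
noncomputable def slicePairing (u : E × ℝ → ℝ) (f : E → ℝ) (t : ℝ) : ℝ := ∫ x, u (x, t) * f x

lemma integrable_mul_fst_mul_japWeight {u : E × ℝ → ℝ} {N q C : ℝ}
    (hu : Integrable fun p : E × ℝ => u p * ((1 + ‖p.1‖) ^ (-N) * japWeight q p.2))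
    {f : E → ℝ} (hf : Continuous f) (hfC : ∀ x, |f x| ≤ C * (1 + ‖x‖) ^ (-N)) :
    Integrable (fun p : E × ℝ => u p * f p.1 * japWeight q p.2) := by
  have hw : Continuous fun p : E × ℝ => (1 + ‖p.1‖) ^ (-N) * japWeight q p.2 := by
    have := continuous_japWeight q
    refine Continuous.mul (Continuous.rpow_const (by fun_prop) fun p => .inl ?_) (by fun_prop)
    positivity
  have hum := (locallyIntegrable_of_mul_continuous hw (fun p =>
    mul_pos (by positivity) (japWeight_pos _ _)) hu).aestronglyMeasurable
  have hJ := continuous_japWeight q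
  refine (hu.norm.const_mul C).mono' ((hum.mul (Continuous.aestronglyMeasurable
    (by fun_prop))).mul (Continuous.aestronglyMeasurable (by fun_prop))) (.of_forall fun p => ?_)
  have h1 := japWeight_pos q p.2
  simp only [norm_mul, Real.norm_eq_abs, abs_of_pos h1,
    abs_of_nonneg (by positivity : 0 ≤ (1 + ‖p.1‖) ^ (-N))]
  calc _ ≤ |u p| * (C * (1 + ‖p.1‖) ^ (-N)) * japWeight q p.2 :=
        mul_le_mul_of_nonneg_right (mul_le_mul_of_nonneg_left (hfC _) (abs_nonneg _)) h1.le
    _ = _ := by ring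

lemma ae_integrable_mul_slice {u : E × ℝ → ℝ} {N q C : ℝ}
    (hu : Integrable fun p : E × ℝ => u p * ((1 + ‖p.1‖) ^ (-N) * japWeight q p.2))
    {f : E → ℝ} (hf : Continuous f) (hfC : ∀ x, |f x| ≤ C * (1 + ‖x‖) ^ (-N)) :
    ∀ᵐ t, Integrable fun x => u (x, t) * f x := by
  filter_upwards [(integrable_mul_fst_mul_japWeight hu hf hfC).prod_left_ae] with t ht
  refine (ht.mul_const (japWeight q t)⁻¹).congr (.of_forall fun x => ?_)
  have := japWeight_pos q t
  dsimp only
  field_simp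

lemma integrable_slicePairing_mul_japWeight {u : E × ℝ → ℝ} {N q C : ℝ}
    (hu : Integrable fun p : E × ℝ => u p * ((1 + ‖p.1‖) ^ (-N) * japWeight q p.2))
    {f : E → ℝ} (hf : Continuous f) (hfC : ∀ x, |f x| ≤ C * (1 + ‖x‖) ^ (-N)) :
    Integrable fun t => slicePairing u f t * japWeight q t := by
  refine (integrable_mul_fst_mul_japWeight hu hf hfC).integral_prod_right.congr
    (.of_forall fun t => ?_)
  simp only [slicePairing, integral_mul_const]

lemma integral_abs_slicePairing_mul_japWeight_le {u : E × ℝ → ℝ} {N q C : ℝ}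
    (hu : Integrable fun p : E × ℝ => u p * ((1 + ‖p.1‖) ^ (-N) * japWeight q p.2))
    {f : E → ℝ} (hf : Continuous f) (hfC : ∀ x, |f x| ≤ C * (1 + ‖x‖) ^ (-N)) :
    ∫ t, |slicePairing u f t| * japWeight q t ≤
      C * ∫ p : E × ℝ, ‖u p * ((1 + ‖p.1‖) ^ (-N) * japWeight q p.2)‖ := by
  have h1 := integrable_mul_fst_mul_japWeight hu hf hfC
  have h2 : ∫ p : E × ℝ, ‖u p * f p.1 * japWeight q p.2‖ =
      ∫ t, ∫ x, ‖u (x, t) * f x * japWeight q t‖ :=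
    integral_prod_symm (fun p : E × ℝ => ‖u p * f p.1 * japWeight q p.2‖) h1.norm
  calc ∫ t, |slicePairing u f t| * japWeight q t
      ≤ ∫ t, ∫ x, ‖u (x, t) * f x * japWeight q t‖ := by
        refine integral_mono_of_nonneg (.of_forall fun t =>
          mul_nonneg (abs_nonneg _) (japWeight_pos _ _).le) h1.norm.integral_prod_right
          (.of_forall fun t => ?_)
        simp only [norm_mul (_ * _), Real.norm_of_nonneg (japWeight_pos q t).le, integral_mul_const]
        exact mul_le_mul_of_nonneg_right (norm_integral_le_integral_norm (μ := volume)
          fun x => u (x, t) * f x) (japWeight_pos _ _).le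
    _ = ∫ p : E × ℝ, ‖u p * f p.1 * japWeight q p.2‖ := h2.symm
    _ ≤ ∫ p : E × ℝ, C * ‖u p * ((1 + ‖p.1‖) ^ (-N) * japWeight q p.2)‖ := by
        refine integral_mono h1.norm (hu.norm.const_mul C) fun p => ?_
        have h1 := japWeight_pos q p.2
        simp only [norm_mul, Real.norm_eq_abs, abs_of_pos h1,
          abs_of_nonneg (by positivity : 0 ≤ (1 + ‖p.1‖) ^ (-N))]
        calc _ ≤ |u p| * (C * (1 + ‖p.1‖) ^ (-N)) * japWeight q p.2 :=
              mul_le_mul_of_nonneg_right (mul_le_mul_of_nonneg_left (hfC _) (abs_nonneg _)) h1.le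
          _ = _ := by ring
    _ = _ := integral_const_mul _ _

/-- The right fractional difference integral, i.e. the unnormalized right Marchaud derivative. -/
noncomputable def rightDiff (α : ℝ) (ρ : ℝ → ℝ) (t : ℝ) : ℝ :=
  ∫ r in Ioi (0 : ℝ), (ρ t - ρ (t + r)) / r ^ (1 + α)

lemma IsMollifier.integrable_mul_rightDiff {α K : ℝ} {V ρ : ℝ → ℝ} (h : IsMollifier α K ρ)
    (hα : 0 < α) (hα1 : α < 1) (hV : Integrable fun t => V t * japWeight (1 + α) t) :
    Integrable fun t => V t * rightDiff α ρ t := by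
  refine (h.integrable_pair hα hα1 hV 0).integral_prod_left.congr (.of_forall fun t => ?_)
  simp only [sub_zero, integral_const_mul, rightDiff]

lemma IsMollifier.integrable_mul {α K : ℝ} {V ρ : ℝ → ℝ} (h : IsMollifier α K ρ)
    (hα : 0 < α) (hV : Integrable fun t => V t * japWeight (1 + α) t) :
    Integrable fun t => V t * ρ t := by
  simpa using integrable_mollify_integrand (by linarith) h.nonneg hV h.le h.continuous 0

lemma one_add_norm_rpow_neg_le_japWeight {q : ℝ} (hq : 0 ≤ q) (t : ℝ) :
    (1 + ‖t‖) ^ (-q) ≤ japWeight q t := by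
  rw [japWeight, Real.norm_eq_abs, neg_div, Real.rpow_neg (by positivity),
    Real.rpow_neg (by positivity)]
  refine inv_anti₀ (by positivity) ?_
  calc (1 + t ^ 2) ^ (q / 2) ≤ ((1 + |t|) ^ (2 : ℝ)) ^ (q / 2) := by
        refine Real.rpow_le_rpow (by positivity) ?_ (by linarith)
        rw [Real.rpow_two, ← sq_abs t]
        nlinarith [abs_nonneg t]
    _ = _ := by rw [← Real.rpow_mul (by positivity)]; congr 1; ring

lemma SchwartzMap.exists_isMollifier {α : ℝ} (hα : 0 < α) (ρ : 𝓢(ℝ, ℝ)) :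
    ∃ K, IsMollifier α K ρ := by
  have key := one_add_norm_rpow_neg_le_japWeight (q := 1 + α) (by linarith)
  obtain ⟨C₀, h0, hC₀⟩ := ρ.exists_norm_iteratedFDeriv_le 0 (1 + α)
  obtain ⟨C₁, h1, hC₁⟩ := ρ.exists_norm_iteratedFDeriv_le 1 (1 + α)
  have hJ := fun t => (japWeight_pos (1 + α) t).le
  refine ⟨max C₀ C₁, h0.trans (le_max_left _ _), fun t => ?_, ρ.differentiable, fun t => ?_⟩
  · have := hC₀ t
    rw [norm_iteratedFDeriv_zero] at this
    exact this.trans (mul_le_mul (le_max_left _ _) (key t) (by positivity) (h0.trans (le_max_left _ _)))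
  · have := hC₁ t
    rw [norm_iteratedFDeriv_eq_norm_iteratedDeriv, iteratedDeriv_one] at this
    exact this.trans (mul_le_mul (le_max_right _ _) (key t) (by positivity) (h0.trans (le_max_left _ _)))

/-- `u` solves the dual-fractional equation in the sense of distributions, with kernels written
as difference integrals. -/
def IsDualSolution (α σ c₁ c₂ : ℝ) (u : E × ℝ → ℝ) : Prop :=
  ∀ φ : 𝓢(E × ℝ, ℝ), ∫ t : ℝ, ∫ x : E, u (x, t) *
    (c₁ * rightDiff α (fun τ => φ (x, τ)) t + c₂ * ∫ y : E,
      (2 * φ (x, t) - φ (x + y, t) - φ (x - y, t)) / ‖y‖ ^ (Module.finrank ℝ E + σ)) = 0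

lemma rightDiff_const_mul (α a : ℝ) (ρ : ℝ → ℝ) (t : ℝ) :
    rightDiff α (fun τ => a * ρ τ) t = a * rightDiff α ρ t := by
  rw [rightDiff, rightDiff, ← integral_const_mul]
  congr 1 with r
  ring

/-- Testing the equation against a tensor product whose spatial fractional Laplacian is known. -/
lemma IsDualSolution.integral_tensor {α σ c₁ c₂ N : ℝ} (hα : 0 < α) (hα1 : α < 1)
    {u : E × ℝ → ℝ} (hsol : IsDualSolution α σ c₁ c₂ u)
    (hu : Integrable fun p : E × ℝ => u p * ((1 + ‖p.1‖) ^ (-N) * japWeight (1 + α) p.2))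
    (f : 𝓢(E, ℝ)) {k : E → ℝ} (hk : Continuous k) {C : ℝ}
    (hkC : ∀ x, |k x| ≤ C * (1 + ‖x‖) ^ (-N))
    (hfk : ∀ x, ∫ y : E, (2 * f x - f (x + y) - f (x - y)) / ‖y‖ ^ (Module.finrank ℝ E + σ) = k x)
    (ρ : 𝓢(ℝ, ℝ)) :
    c₁ * (∫ t, slicePairing u f t * rightDiff α ρ t) + c₂ * (∫ t, slicePairing u k t * ρ t) = 0 := by
  obtain ⟨Cf, -, hf⟩ := f.exists_norm_le N
  obtain ⟨K, hρ⟩ := ρ.exists_isMollifier hα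
  have h1 := hρ.integrable_mul_rightDiff hα hα1
    (integrable_slicePairing_mul_japWeight hu f.continuous hf)
  have h2 := hρ.integrable_mul hα (integrable_slicePairing_mul_japWeight hu hk hkC)
  rw [← integral_const_mul, ← integral_const_mul, ← integral_add (h1.const_mul c₁)
    (h2.const_mul c₂), ← hsol (f.tensor ρ)]
  refine integral_congr_ae ?_
  filter_upwards [ae_integrable_mul_slice hu f.continuous hf, ae_integrable_mul_slice hu hk hkC]
    with t ht1 ht2
  simp only [SchwartzMap.tensor_apply, rightDiff_const_mul]
  have h3 : ∀ x, ∫ y : E, (2 * (f x * ρ t) - f (x + y) * ρ t - f (x - y) * ρ t) /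
      ‖y‖ ^ (Module.finrank ℝ E + σ) = k x * ρ t := fun x => by
    rw [← hfk x, ← integral_mul_const]
    congr 1 with y
    ring
  simp only [h3]
  rw [slicePairing, slicePairing, ← integral_mul_const, ← integral_mul_const,
    ← integral_const_mul, ← integral_const_mul, ← integral_add
      ((ht1.mul_const (rightDiff α ρ t)).const_mul c₁) ((ht2.mul_const (ρ t)).const_mul c₂)]
  congr 1 with x
  ring

lemma IsDualSolution.ae_slicePairing_eq_zero [Nontrivial E] {α σ c₁ c₂ N : ℝ} (hα : 0 < α)
    (hα1 : α < 1) (hσ0 : 0 < σ) (hσ2 : σ < 2) (hc₁ : 0 ≤ c₁) (hc₂ : 0 < c₂)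
    {u : E × ℝ → ℝ} (hsol : IsDualSolution α σ c₁ c₂ u)
    (hu : Integrable fun p : E × ℝ => u p * ((1 + ‖p.1‖) ^ (-N) * japWeight (1 + α) p.2))
    (g : 𝓢(E, ℂ)) (hgc : HasCompactSupport g) (hg0 : (0 : E) ∉ tsupport g) :
    ∀ᵐ t, slicePairing u (reInvFourier g) t = 0 := by
  obtain ⟨β, hβ, hsym⟩ := exists_lapSymbol_eq (E := E) hσ0 hσ2
  have hgs : ContDiff ℝ ∞ g := g.smooth ⊤
  obtain ⟨m, hm, hmK⟩ := exists_contDiff_eqOn_of_zero_notMem (m := fun x : E => c₂ * (β * ‖x‖ ^ σ))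
    (fun x hx => contDiffAt_const.mul (contDiffAt_const.mul
      ((contDiffAt_norm ℝ hx).rpow_const_of_ne (norm_ne_zero_iff.2 hx))))
    (isClosed_tsupport g) hg0
  obtain ⟨ε, hε, hεK⟩ := Metric.isOpen_iff.1 (isClosed_tsupport g).isOpen_compl 0 hg0
  obtain ⟨R, hR, hRK⟩ := hgc.isCompact.isBounded.exists_pos_norm_le
  set lo := c₂ * (β * ε ^ σ) with hlo
  set hi := c₂ * (β * (R + ε) ^ σ) with hhi
  have hlo0 : 0 < lo := by positivity
  have hlohi : lo ≤ hi := by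
    have : ε ^ σ ≤ (R + ε) ^ σ := Real.rpow_le_rpow hε.le (by linarith) hσ0.le
    exact mul_le_mul_of_nonneg_left (mul_le_mul_of_nonneg_left this hβ.le) hc₂.le
  have hbd : ∀ x ∈ tsupport g, |hi - m x| ≤ hi - lo := fun x hx => by
    have h1 : ε ≤ ‖x‖ := by
      by_contra! h
      exact hεK (by simpa using h) hx
    have h2 : ε ^ σ ≤ ‖x‖ ^ σ := Real.rpow_le_rpow hε.le h1 hσ0.le
    have h3 : ‖x‖ ^ σ ≤ (R + ε) ^ σ :=
      Real.rpow_le_rpow (norm_nonneg _) (by linarith [hRK x hx]) hσ0.le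
    have h4 : lo ≤ m x := by
      rw [hmK hx]
      exact mul_le_mul_of_nonneg_left (mul_le_mul_of_nonneg_left h2 hβ.le) hc₂.le
    have h5 : m x ≤ hi := by
      rw [hmK hx]
      exact mul_le_mul_of_nonneg_left (mul_le_mul_of_nonneg_left h3 hβ.le) hc₂.le
    rw [abs_of_nonneg (by linarith)]
    linarith
  set h : E → ℂ := fun x => ((hi - m x : ℝ) : ℂ) with hh
  have hhs : ContDiff ℝ ∞ h := Complex.ofRealCLM.contDiff.comp (contDiff_const.sub hm)
  have hGc : ∀ j, HasCompactSupport fun x => g x * h x ^ j := fun j => hgc.mul_right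
  have hGs : ∀ j, ContDiff ℝ ∞ fun x => g x * h x ^ j := fun j => hgs.mul (hhs.pow j)
  set G : ℕ → 𝓢(E, ℂ) := fun j => (hGc j).toSchwartzMap (hGs j) with hG
  have hGapp : ∀ j x, G j x = g x * h x ^ j := fun j x => rfl
  obtain ⟨C, hC0, hC⟩ := exists_abs_reInvFourier_mul_pow_le hgs hgc hhs
    (θ := hi - lo) (θ' := hi - lo / 2) (by linarith) (by linarith)
    (fun x hx => by rw [hh, Complex.norm_real]; exact hbd x hx) G hGapp N
  have hb : ∀ j, ∃ H : 𝓢(E, ℂ), (∀ v, H v = lapSymbol σ v * G j v) ∧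
      ∀ v, c₂ * H v = hi * G j v - G (j + 1) v := fun j => by
    have hc : ∀ v, (c₂ : ℂ)⁻¹ * (hi * G j v - G (j + 1) v) = lapSymbol σ v * G j v := fun v => by
      rw [hGapp, hGapp]
      by_cases hv : v ∈ tsupport g
      · have h1 : h v = hi - c₂ * lapSymbol σ v := by
          simp only [hh, hmK hv, hsym]; push_cast; ring
        rw [pow_succ, h1]
        have : (c₂ : ℂ) ≠ 0 := by exact_mod_cast hc₂.ne'
        field_simp
        ring
      · rw [image_eq_zero_of_notMem_tsupport hv]; ring
    refine ⟨(c₂ : ℂ)⁻¹ • ((hi : ℂ) • G j - G (j + 1)), fun v => ?_, fun v => ?_⟩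
    · rw [← hc]; rfl
    · have : (c₂ : ℂ) ≠ 0 := by exact_mod_cast hc₂.ne'
      simp only [smul_apply, sub_apply, smul_eq_mul]
      field_simp
  have hres := ae_eq_zero_of_iterate (c := c₁) (μ := hi) (θ := hi - lo / 2)
    (C := C * ∫ p : E × ℝ, ‖u p * ((1 + ‖p.1‖) ^ (-N) * japWeight (1 + α) p.2)‖)
    hα hα1 hc₁ (by linarith) (by linarith) (fun j => slicePairing u (reInvFourier (G j)))
    (fun j => integrable_slicePairing_mul_japWeight hu (reInvFourier (G j)).continuous (hC j))
    (fun j => (integral_abs_slicePairing_mul_japWeight_le hu (reInvFourier (G j)).continuous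
      (hC j)).trans_eq (by ring)) ?_
  · filter_upwards [hres] with t ht
    have : reInvFourier (G 0) = reInvFourier g := by
      congr 1; ext x; rw [hGapp]; simp
    rw [← this]
    exact ht
  intro j ρ hρ hρc
  obtain ⟨H, hH1, hH2⟩ := hb j
  obtain ⟨CH, -, hCH⟩ := (reInvFourier H).exists_norm_le N
  set ρ' : 𝓢(ℝ, ℝ) := hρc.toSchwartzMap hρ with hρ'
  have hρcoe : ⇑ρ' = ρ := rfl
  have key := hsol.integral_tensor hα hα1 hu (reInvFourier (G j)) (reInvFourier H).continuous hCH
    (integral_second_diff_reInvFourier hσ0 hσ2 (G j) H hH1) ρ'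
  rw [hρcoe] at key
  obtain ⟨K, hK⟩ := ρ'.exists_isMollifier hα
  rw [hρcoe] at hK
  have hT : ∀ x, c₂ * reInvFourier H x = hi * reInvFourier (G j) x - reInvFourier (G (j + 1)) x := by
    intro x
    have : (c₂ : ℂ) • H = (hi : ℂ) • G j - G (j + 1) := by ext v; exact hH2 v
    have h2 := congrArg (fun F : 𝓢(E, ℂ) => reInvFourier F x) this
    simpa only [reInvFourier_sub, reInvFourier_smul] using h2
  have hpair : ∀ᵐ t, c₂ * slicePairing u (reInvFourier H) t =
      hi * slicePairing u (reInvFourier (G j)) t - slicePairing u (reInvFourier (G (j + 1))) t := by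
    filter_upwards [ae_integrable_mul_slice hu (reInvFourier (G j)).continuous (hC j),
      ae_integrable_mul_slice hu (reInvFourier (G (j + 1))).continuous (hC (j + 1))] with t h1 h2
    simp only [slicePairing]
    rw [← integral_const_mul, ← integral_const_mul, ← integral_sub (h1.const_mul hi) h2]
    congr 1 with x
    rw [mul_left_comm, hT]; ring
  have i1 := hK.integrable_mul hα (integrable_slicePairing_mul_japWeight hu
    (reInvFourier (G j)).continuous (hC j))
  have i2 := hK.integrable_mul hα (integrable_slicePairing_mul_japWeight hu
    (reInvFourier (G (j + 1))).continuous (hC (j + 1)))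
  have h3 : c₂ * (∫ t, slicePairing u (reInvFourier H) t * ρ t) =
      hi * (∫ t, slicePairing u (reInvFourier (G j)) t * ρ t) -
        ∫ t, slicePairing u (reInvFourier (G (j + 1))) t * ρ t := by
    rw [← integral_const_mul, ← integral_const_mul, ← integral_sub (i1.const_mul hi) i2]
    refine integral_congr_ae ?_
    filter_upwards [hpair] with t ht
    rw [← mul_assoc, ht]; ring
  rw [h3] at key
  unfold rightDiff at key
  linarith

end Slices

section Differences

variable {E F : Type*} [NormedAddCommGroup E] [NormedAddCommGroup F]

lemma one_add_norm_add_rpow_neg_le {N : ℝ} (hN : 0 ≤ N) (x y : E) :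
    (1 + ‖x + y‖) ^ (-N) ≤ (1 + ‖y‖) ^ N * (1 + ‖x‖) ^ (-N) := by
  rw [Real.rpow_neg (by positivity), Real.rpow_neg (by positivity), ← div_eq_mul_inv,
    inv_le_iff_one_le_mul₀ (by positivity), div_mul_eq_mul_div, le_div_iff₀ (by positivity), one_mul,
    ← Real.mul_rpow (by positivity) (by positivity)]
  refine Real.rpow_le_rpow (by positivity) ?_ hN
  have h1 : ‖x‖ ≤ ‖x + y‖ + ‖y‖ := by simpa using norm_sub_le (x + y) y
  nlinarith [norm_nonneg (x + y), norm_nonneg y, mul_nonneg (norm_nonneg y) (norm_nonneg (x + y))]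

lemma one_add_norm_sub_rpow_neg_le {N : ℝ} (hN : 0 ≤ N) (x y : E) :
    (1 + ‖x - y‖) ^ (-N) ≤ (1 + ‖y‖) ^ N * (1 + ‖x‖) ^ (-N) := by
  simpa [sub_eq_add_neg] using one_add_norm_add_rpow_neg_le hN x (-y)

variable [NormedSpace ℝ E] [NormedSpace ℝ F]

lemma norm_add_sub_le_of_fderiv_le {f : E → F} (hf : Differentiable ℝ f) {C N : ℝ} (hN : 0 ≤ N)
    (hC : 0 ≤ C) (hf' : ∀ y, ‖fderiv ℝ f y‖ ≤ C * (1 + ‖y‖) ^ (-N)) (y h : E) :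
    ‖f (y + h) - f y‖ ≤ C * ‖h‖ * (1 + ‖h‖) ^ N * (1 + ‖y‖) ^ (-N) := by
  have hseg : ∀ z ∈ segment ℝ y (y + h), ‖fderiv ℝ f z‖ ≤ C * ((1 + ‖h‖) ^ N * (1 + ‖y‖) ^ (-N)) := by
    rintro z hz
    obtain ⟨θ, hθ, rfl⟩ := (segment_eq_image' ℝ y (y + h)).subset hz
    rw [add_sub_cancel_left]
    refine (hf' _).trans (mul_le_mul_of_nonneg_left ?_ hC)
    refine (one_add_norm_add_rpow_neg_le hN y (θ • h)).trans
      (mul_le_mul_of_nonneg_right ?_ (by positivity))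
    refine Real.rpow_le_rpow (by positivity) ?_ hN
    rw [norm_smul, Real.norm_of_nonneg hθ.1]
    have := mul_le_of_le_one_left (norm_nonneg h) hθ.2
    linarith
  have := (convex_segment y (y + h)).norm_image_sub_le_of_norm_fderiv_le
    (fun z _ => hf z) hseg (left_mem_segment ℝ _ _) (right_mem_segment ℝ _ _)
  rw [add_sub_cancel_left] at this
  linarith

lemma SchwartzMap.exists_norm_first_diff_le (f : 𝓢(E, F)) {N : ℝ} (hN : 0 ≤ N) :
    ∃ C, 0 ≤ C ∧ ∀ y h, ‖f (y + h) - f y‖ ≤ C * ‖h‖ * (1 + ‖h‖) ^ N * (1 + ‖y‖) ^ (-N) := by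
  obtain ⟨C, hC, h1⟩ := f.exists_norm_iteratedFDeriv_le 1 N
  simp only [norm_iteratedFDeriv_one] at h1
  exact ⟨C, hC, fun y h => norm_add_sub_le_of_fderiv_le f.differentiable hN hC h1 y h⟩

lemma SchwartzMap.exists_norm_second_diff_le (f : 𝓢(E, F)) {N : ℝ} (hN : 0 ≤ N) :
    ∃ C, 0 ≤ C ∧ ∀ y h, ‖f (y + h + h) - f (y + h) - (f (y + h) - f y)‖ ≤
      C * ‖h‖ ^ 2 * ((1 + ‖h‖) ^ N) ^ 2 * (1 + ‖y‖) ^ (-N) := by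
  obtain ⟨C, hC, h1⟩ := f.exists_norm_iteratedFDeriv_le 2 N
  have hs : ContDiff ℝ 1 (fderiv ℝ f) := (f.smooth 2).fderiv_right (by norm_num)
  have h2 : ∀ y, ‖fderiv ℝ (fderiv ℝ f) y‖ ≤ C * (1 + ‖y‖) ^ (-N) := fun y => by
    refine le_trans (le_of_eq ?_) (h1 y)
    rw [← norm_iteratedFDeriv_one, norm_iteratedFDeriv_fderiv]
  have h3 := norm_add_sub_le_of_fderiv_le (hs.differentiable (by simp)) hN hC h2
  refine ⟨C, hC, fun y h => ?_⟩
  have h4 := norm_add_sub_le_of_fderiv_le (f := fun z => f (z + h) - f z)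
    (C := C * ‖h‖ * (1 + ‖h‖) ^ N) (N := N)
    ((f.differentiable.comp (differentiable_id.add_const h)).sub f.differentiable) hN (by positivity)
    (fun z => by
      have : fderiv ℝ (fun z => f (z + h) - f z) z = fderiv ℝ f (z + h) - fderiv ℝ f z := by
        have hd : Differentiable ℝ fun z => f (z + h) :=
          f.differentiable.comp (differentiable_id.add_const h)
        rw [fderiv_fun_sub (hd z) (f.differentiable _),
          fderiv_comp_add_right]
      rw [this]
      exact h3 z h) y h
  exact h4.trans_eq (by ring)

end Differences

section BumpMode

variable (E : Type*) [NormedAddCommGroup E] [InnerProductSpace ℝ E] [FiniteDimensional ℝ E]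

/-- The standard bump function on the frequency side, equal to one on the unit ball. -/
noncomputable def freqBump : ContDiffBump (0 : E) := ⟨1, 2, one_pos, one_lt_two⟩

variable {E}

lemma contDiff_bumpMode (k : ℤ) (q : E) : ContDiff ℝ ∞ fun ξ : E =>
    Complex.exp (↑(-(2 * Real.pi * inner ℝ ξ q)) * Complex.I) *
      ((freqBump E (((2 : ℝ) ^ k)⁻¹ • ξ) : ℝ) : ℂ) := by
  have h1 : ContDiff ℝ ∞ fun ξ : E => ((freqBump E (((2 : ℝ) ^ k)⁻¹ • ξ) : ℝ) : ℂ) :=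
    Complex.ofRealCLM.contDiff.comp ((freqBump E).contDiff.comp (contDiff_const_smul _))
  have h2 : ContDiff ℝ ∞ fun ξ : E => ((-(2 * Real.pi * inner ℝ ξ q) : ℝ) : ℂ) :=
    Complex.ofRealCLM.contDiff.comp
      (contDiff_const.mul (contDiff_id.inner ℝ contDiff_const)).neg
  exact (h2.mul contDiff_const).cexp.mul h1

lemma hasCompactSupport_bumpMode (k : ℤ) (q : E) : HasCompactSupport fun ξ : E =>
    Complex.exp (↑(-(2 * Real.pi * inner ℝ ξ q)) * Complex.I) *
      ((freqBump E (((2 : ℝ) ^ k)⁻¹ • ξ) : ℝ) : ℂ) := by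
  refine HasCompactSupport.mul_left ?_
  exact ((freqBump E).hasCompactSupport.comp_smul (by positivity)).comp_left
    (g := ((↑) : ℝ → ℂ)) (by simp)

/-- A modulated bump function at frequency scale `2 ^ k`. -/
noncomputable def bumpMode (k : ℤ) (q : E) : 𝓢(E, ℂ) :=
  (hasCompactSupport_bumpMode k q).toSchwartzMap (contDiff_bumpMode k q)

lemma bumpMode_apply (k : ℤ) (q ξ : E) : bumpMode k q ξ =
    Complex.exp (↑(-(2 * Real.pi * inner ℝ ξ q)) * Complex.I) *
      ((freqBump E (((2 : ℝ) ^ k)⁻¹ • ξ) : ℝ) : ℂ) := rfl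

lemma hasCompactSupport_bumpMode_sub (k : ℤ) (q : E) :
    HasCompactSupport (bumpMode k q - bumpMode 0 q : 𝓢(E, ℂ)) := by
  have := (hasCompactSupport_bumpMode k q).sub (hasCompactSupport_bumpMode 0 q)
  exact this

lemma zero_notMem_tsupport_bumpMode_sub (k : ℤ) (q : E) :
    (0 : E) ∉ tsupport (bumpMode k q - bumpMode 0 q : 𝓢(E, ℂ)) := by
  rw [notMem_tsupport_iff_eventuallyEq]
  have h1 : ∀ j : ℤ, ∀ᶠ ξ in nhds (0 : E), freqBump E (((2 : ℝ) ^ j)⁻¹ • ξ) = 1 := fun j => by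
    have : Filter.Tendsto (fun ξ : E => ((2 : ℝ) ^ j)⁻¹ • ξ) (nhds 0) (nhds 0) := by
      have := (continuous_const_smul (((2 : ℝ) ^ j)⁻¹) : Continuous fun ξ : E => _).tendsto 0
      rwa [smul_zero] at this
    exact this.eventually (freqBump E).eventuallyEq_one
  filter_upwards [h1 k, h1 0] with ξ hk h0
  simp only [sub_apply, bumpMode_apply, hk, h0]
  simp

variable [MeasurableSpace E] [BorelSpace E]

lemma reInvFourier_bumpMode (k : ℤ) (q x : E) : reInvFourier (bumpMode k q) x =
    ((2 : ℝ) ^ k) ^ Module.finrank ℝ E *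
      reInvFourier (bumpMode (0 : ℤ) (0 : E)) (((2 : ℝ) ^ k) • (x - q)) := by
  rw [reInvFourier_apply, reInvFourier_apply]
  have hp : 0 < ((2 : ℝ) ^ k) := by positivity
  have h := Measure.integral_comp_smul (volume : Measure E) (fun v : E =>
    Complex.exp (↑(2 * Real.pi * inner ℝ v (((2 : ℝ) ^ k) • (x - q))) * Complex.I) *
      bumpMode (0 : ℤ) (0 : E) v) ((2 : ℝ) ^ k)⁻¹
  rw [inv_pow, inv_inv, abs_of_pos (by positivity)] at h
  have h2 := congrArg Complex.re h
  rw [Complex.real_smul, Complex.re_ofReal_mul] at h2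
  rw [← h2]
  congr 2 with v
  simp only [bumpMode_apply, zpow_zero, inv_one, one_smul, inner_zero_right, mul_zero, neg_zero,
    Complex.ofReal_zero, zero_mul, Complex.exp_zero, one_mul, ← mul_assoc, ← Complex.exp_add]
  congr 2
  rw [real_inner_smul_left, real_inner_smul_right, inner_sub_right,
    inv_mul_cancel_left₀ hp.ne']
  push_cast; ring

/-- The kernel reproducing low frequencies at scale `2 ^ k`. -/
noncomputable def lowPass (k : ℤ) : 𝓢(E, ℝ) := reInvFourier (bumpMode k 0)

lemma lowPass_apply (k : ℤ) (x : E) : lowPass k x =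
    ((2 : ℝ) ^ k) ^ Module.finrank ℝ E * lowPass (E := E) 0 (((2 : ℝ) ^ k) • x) := by
  rw [lowPass, reInvFourier_bumpMode, sub_zero]; rfl

lemma reInvFourier_bumpMode_eq_lowPass (k : ℤ) (q x : E) :
    reInvFourier (bumpMode k q) x = lowPass k (x - q) := by
  rw [reInvFourier_bumpMode, lowPass_apply]; rfl

lemma integral_lowPass_zero : ∫ x : E, lowPass (E := E) 0 x = 1 := by
  have h1 : (𝓕 (𝓕⁻ (bumpMode (0 : ℤ) (0 : E)) : 𝓢(E, ℂ)) : 𝓢(E, ℂ)) = bumpMode 0 0 :=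
    FourierTransform.fourier_fourierInv_eq _
  have h2 := congrArg (fun f : 𝓢(E, ℂ) => (f 0).re) h1
  simp only [SchwartzMap.fourier_coe, Real.fourier_eq'] at h2
  have h3 : (freqBump E) 0 = 1 := (freqBump E).eventuallyEq_one.self_of_nhds
  simp only [inner_zero_right, mul_zero, neg_zero, Complex.ofReal_zero, zero_mul, Complex.exp_zero,
    one_smul, bumpMode_apply, smul_zero, h3, mul_one, Complex.ofReal_one, Complex.one_re] at h2
  rw [← h2]
  exact integral_re (𝓕⁻ (bumpMode (0 : ℤ) (0 : E)) : 𝓢(E, ℂ)).integrable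

end BumpMode

open Filter

section SpectrumAtZero

variable {E : Type*} [NormedAddCommGroup E] [InnerProductSpace ℝ E] [FiniteDimensional ℝ E]
  [MeasurableSpace E] [BorelSpace E] {U : E → ℝ} {N : ℝ}

lemma continuous_one_add_norm_rpow {E : Type*} [NormedAddCommGroup E] (N : ℝ) : Continuous fun x :
    E => (1 + ‖x‖) ^ N :=
  Continuous.rpow_const (by fun_prop) fun x => .inl (by positivity)

lemma locallyIntegrable_of_weight (hU : Integrable fun x => U x * (1 + ‖x‖) ^ (-N)) :
    LocallyIntegrable U :=
  locallyIntegrable_of_mul_continuous (continuous_one_add_norm_rpow _) (fun x => by positivity) hU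

lemma integrable_mul_of_weight (hU : Integrable fun x => U x * (1 + ‖x‖) ^ (-N)) {f : E → ℝ}
    (hf : Continuous f) {C : ℝ} (hC : ∀ x, |f x| ≤ C * (1 + ‖x‖) ^ (-N)) :
    Integrable fun x => U x * f x := by
  refine (hU.norm.const_mul C).mono' ((locallyIntegrable_of_weight hU).aestronglyMeasurable.mul
    hf.aestronglyMeasurable) (.of_forall fun x => ?_)
  rw [norm_mul, norm_mul, Real.norm_of_nonneg (by positivity : 0 ≤ (1 + ‖x‖) ^ (-N)), mul_left_comm]
  exact mul_le_mul_of_nonneg_left (hC x) (norm_nonneg _)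

lemma SchwartzMap.integrable_mul_comp_sub (hN : 0 ≤ N)
    (hU : Integrable fun x => U x * (1 + ‖x‖) ^ (-N)) (f : 𝓢(E, ℝ)) (q : E) :
    Integrable fun x => U x * f (x - q) := by
  obtain ⟨C, hC0, hC⟩ := f.exists_norm_le N
  refine integrable_mul_of_weight hU (C := C * (1 + ‖q‖) ^ N)
    (f.continuous.comp (continuous_id.sub continuous_const)) fun x => ?_
  refine (hC _).trans ?_
  rw [mul_assoc]
  exact mul_le_mul_of_nonneg_left (one_add_norm_sub_rpow_neg_le hN x q) hC0

lemma SchwartzMap.continuous_integral_mul_comp_sub (hN : 0 ≤ N)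
    (hU : Integrable fun x => U x * (1 + ‖x‖) ^ (-N)) (f : 𝓢(E, ℝ)) :
    Continuous fun q => ∫ x, U x * f (x - q) := by
  obtain ⟨C, hC0, hC⟩ := f.exists_norm_le N
  rw [continuous_iff_continuousAt]
  intro q₀
  refine continuousAt_of_dominated
    (bound := fun x => C * (2 + ‖q₀‖) ^ N * ‖U x * (1 + ‖x‖) ^ (-N)‖)
    (.of_forall fun q => (f.integrable_mul_comp_sub hN hU q).aestronglyMeasurable)
    ?_ (hU.norm.const_mul _) (.of_forall fun x => ?_)
  · filter_upwards [Metric.ball_mem_nhds q₀ one_pos] with q hq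
    refine .of_forall fun x => ?_
    rw [norm_mul, norm_mul, Real.norm_of_nonneg (by positivity : 0 ≤ (1 + ‖x‖) ^ (-N)),
      mul_left_comm]
    refine mul_le_mul_of_nonneg_left ((hC _).trans ?_) (norm_nonneg _)
    rw [mul_assoc]
    refine mul_le_mul_of_nonneg_left ((one_add_norm_sub_rpow_neg_le hN x q).trans ?_) hC0
    refine mul_le_mul_of_nonneg_right (Real.rpow_le_rpow (by positivity) ?_ hN) (by positivity)
    have h1 : ‖q - q₀‖ < 1 := by rwa [← dist_eq_norm]
    have h2 := norm_sub_norm_le q q₀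
    linarith
  · have := f.continuous
    fun_prop

/-- If `|Ψ k x|` is at most `ε k (1 + |x|)^{-N}` with `ε k → 0`, then the pairings with `U`
tend to zero. -/
lemma tendsto_integral_mul_zero (hU : Integrable fun x => U x * (1 + ‖x‖) ^ (-N))
    {Ψ : ℕ → E → ℝ} {ε : ℕ → ℝ} (hΨ : ∀ k x, |Ψ k x| ≤ ε k * (1 + ‖x‖) ^ (-N))
    (hε : Tendsto ε atTop (nhds 0)) : Tendsto (fun k => ∫ x, U x * Ψ k x) atTop (nhds 0) := by
  refine squeeze_zero_norm (a := fun k => ε k * ∫ x, ‖U x * (1 + ‖x‖) ^ (-N)‖) (fun k => ?_)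
    (by simpa using hε.mul_const (∫ x, ‖U x * (1 + ‖x‖) ^ (-N)‖))
  rw [← integral_const_mul]
  refine (norm_integral_le_integral_norm (μ := volume) fun x => U x * Ψ k x).trans
    (integral_mono_of_nonneg (.of_forall fun _ => norm_nonneg _) (hU.norm.const_mul _)
      (.of_forall fun x => ?_))
  dsimp only
  rw [norm_mul, norm_mul, Real.norm_of_nonneg (by positivity : 0 ≤ (1 + ‖x‖) ^ (-N)), mul_left_comm]
  exact mul_le_mul_of_nonneg_left (hΨ k x) (norm_nonneg _)

lemma one_add_norm_smul_rpow_neg_le {E : Type*} [NormedAddCommGroup E] [NormedSpace ℝ E] {N : ℝ}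
    (hN : 0 ≤ N) {l : ℝ} (hl0 : 0 < l) (hl1 : l ≤ 1) (x : E) :
    (1 + ‖l • x‖) ^ (-N) ≤ l ^ (-N) * (1 + ‖x‖) ^ (-N) := by
  rw [← Real.mul_rpow hl0.le (by positivity)]
  refine Real.rpow_le_rpow_of_nonpos (by positivity) ?_ (by linarith)
  rw [norm_smul, Real.norm_of_nonneg hl0.le]
  linarith

lemma tendsto_two_zpow_neg_rpow {δ : ℝ} (hδ : 0 < δ) :
    Tendsto (fun k : ℕ => ((2 : ℝ) ^ (-(k : ℤ))) ^ δ) atTop (nhds 0) := by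
  have h1 : Tendsto (fun k : ℕ => (2 : ℝ) ^ (-(k : ℤ))) atTop (nhds 0) := by
    have := tendsto_pow_atTop_nhds_zero_of_lt_one (r := (2 : ℝ)⁻¹) (by norm_num) (by norm_num)
    refine this.congr fun k => ?_
    rw [zpow_neg, zpow_natCast, inv_pow]
  have := h1.rpow_const (p := δ) (.inr hδ.le)
  rwa [Real.zero_rpow hδ.ne'] at this

variable {σ : ℝ}

/-- The scaled difference bounds for the low-pass kernels as the scale tends to zero. -/
lemma exists_lowPass_diff_bounds (hσ : 0 < σ) (q h : E) : ∃ C : ℝ, ∀ (k : ℕ) (x : E),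
    |lowPass (-(k : ℤ)) (x - q + h) - lowPass (-(k : ℤ)) (x - q)| ≤
      C * ((2 : ℝ) ^ (-(k : ℤ))) ^ (1 - σ) * (1 + ‖x‖) ^ (-(Module.finrank ℝ E + σ)) ∧
    |lowPass (-(k : ℤ)) (x - q + h + h) - lowPass (-(k : ℤ)) (x - q + h) -
        (lowPass (-(k : ℤ)) (x - q + h) - lowPass (-(k : ℤ)) (x - q))| ≤
      C * ((2 : ℝ) ^ (-(k : ℤ))) ^ (2 - σ) * (1 + ‖x‖) ^ (-(Module.finrank ℝ E + σ)) := by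
  set M : ℝ := Module.finrank ℝ E + σ with hM
  have hM0 : 0 ≤ M := by positivity
  obtain ⟨C₁, hC₁, h1⟩ := (lowPass (E := E) 0).exists_norm_first_diff_le hM0
  obtain ⟨C₂, hC₂, h2⟩ := (lowPass (E := E) 0).exists_norm_second_diff_le hM0
  set D : ℝ := max (C₁ * ‖h‖ * (1 + ‖h‖) ^ M) (C₂ * ‖h‖ ^ 2 * ((1 + ‖h‖) ^ M) ^ 2) with hD
  have hD0 : 0 ≤ D := le_max_of_le_left (by positivity)
  refine ⟨D * (1 + ‖q‖) ^ M, fun k x => ?_⟩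
  set l : ℝ := (2 : ℝ) ^ (-(k : ℤ)) with hl
  have hl0 : 0 < l := by positivity
  have hl1 : l ≤ 1 := zpow_le_one_of_nonpos₀ (by norm_num) (by simp)
  have hlh : ‖l • h‖ = l * ‖h‖ := by rw [norm_smul, Real.norm_of_nonneg hl0.le]
  have hlh1 : (1 + ‖l • h‖) ^ M ≤ (1 + ‖h‖) ^ M := by
    refine Real.rpow_le_rpow (by positivity) ?_ hM0
    rw [hlh]
    have := mul_le_of_le_one_left (norm_nonneg h) hl1
    linarith
  have hw : (1 + ‖l • (x - q)‖) ^ (-M) ≤ l ^ (-M) * ((1 + ‖q‖) ^ M * (1 + ‖x‖) ^ (-M)) :=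
    (one_add_norm_smul_rpow_neg_le hM0 hl0 hl1 _).trans
      (mul_le_mul_of_nonneg_left (one_add_norm_sub_rpow_neg_le hM0 x q) (by positivity))
  have hld : ∀ j : ℕ, l ^ Module.finrank ℝ E * (l ^ j * l ^ (-M)) = l ^ ((j : ℝ) - σ) := fun j => by
    rw [← Real.rpow_natCast, ← Real.rpow_natCast, ← Real.rpow_add hl0, ← Real.rpow_add hl0]
    congr 1
    rw [hM]; ring
  simp only [lowPass_apply (-(k : ℤ)), ← hl]
  constructor
  · have e : l ^ Module.finrank ℝ E * lowPass (E := E) 0 (l • (x - q + h)) -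
        l ^ Module.finrank ℝ E * lowPass (E := E) 0 (l • (x - q)) = l ^ Module.finrank ℝ E *
        (lowPass (E := E) 0 (l • (x - q) + l • h) - lowPass (E := E) 0 (l • (x - q))) := by
      rw [smul_add]; ring
    rw [e, abs_mul, abs_of_pos (pow_pos hl0 _)]
    calc _ ≤ l ^ Module.finrank ℝ E * ((l * D) * (l ^ (-M) * ((1 + ‖q‖) ^ M * (1 + ‖x‖) ^ (-M)))) := by
          refine mul_le_mul_of_nonneg_left ((h1 _ _).trans ?_) (by positivity)
          refine mul_le_mul ?_ hw (by positivity) (by positivity)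
          calc _ ≤ C₁ * (l * ‖h‖) * (1 + ‖h‖) ^ M := by
                rw [hlh] at *
                exact mul_le_mul_of_nonneg_left hlh1 (by positivity)
            _ = l * (C₁ * ‖h‖ * (1 + ‖h‖) ^ M) := by ring
            _ ≤ _ := mul_le_mul_of_nonneg_left (le_max_left _ _) hl0.le
      _ = D * (1 + ‖q‖) ^ M * (l ^ Module.finrank ℝ E * (l ^ 1 * l ^ (-M))) * (1 + ‖x‖) ^ (-M) := by
          ring
      _ = _ := by rw [hld]; simp
  · have e : l ^ Module.finrank ℝ E * lowPass (E := E) 0 (l • (x - q + h + h)) -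
        l ^ Module.finrank ℝ E * lowPass (E := E) 0 (l • (x - q + h)) -
        (l ^ Module.finrank ℝ E * lowPass (E := E) 0 (l • (x - q + h)) -
        l ^ Module.finrank ℝ E * lowPass (E := E) 0 (l • (x - q))) = l ^ Module.finrank ℝ E *
        (lowPass (E := E) 0 (l • (x - q) + l • h + l • h) -
        lowPass (E := E) 0 (l • (x - q) + l • h) -
        (lowPass (E := E) 0 (l • (x - q) + l • h) - lowPass (E := E) 0 (l • (x - q)))) := by
      simp only [smul_add]; ring
    rw [e, abs_mul, abs_of_pos (pow_pos hl0 _)]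
    calc _ ≤ l ^ Module.finrank ℝ E *
          ((l ^ 2 * D) * (l ^ (-M) * ((1 + ‖q‖) ^ M * (1 + ‖x‖) ^ (-M)))) := by
          refine mul_le_mul_of_nonneg_left ((h2 _ _).trans ?_) (by positivity)
          refine mul_le_mul ?_ hw (by positivity) (by positivity)
          calc _ ≤ C₂ * (l * ‖h‖) ^ 2 * ((1 + ‖h‖) ^ M) ^ 2 := by
                rw [hlh] at *
                exact mul_le_mul_of_nonneg_left (pow_le_pow_left₀ (by positivity) hlh1 2)
                  (by positivity)
            _ = l ^ 2 * (C₂ * ‖h‖ ^ 2 * ((1 + ‖h‖) ^ M) ^ 2) := by ring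
            _ ≤ _ := mul_le_mul_of_nonneg_left (le_max_right _ _) (by positivity)
      _ = D * (1 + ‖q‖) ^ M * (l ^ Module.finrank ℝ E * (l ^ 2 * l ^ (-M))) * (1 + ‖x‖) ^ (-M) := by
          ring
      _ = _ := by rw [hld]; simp

end SpectrumAtZero

section SpectrumAtZero

variable {E : Type*} [NormedAddCommGroup E] [InnerProductSpace ℝ E] [FiniteDimensional ℝ E]
  [MeasurableSpace E] [BorelSpace E] {U : E → ℝ} {N σ : ℝ}

lemma exists_abs_le_of_hasCompactSupport {E : Type*} [NormedAddCommGroup E] {g : E → ℝ} (hg :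
    Continuous g)
    (hgc : HasCompactSupport g) (N : ℝ) : ∃ C, 0 ≤ C ∧ ∀ x, |g x| ≤ C * (1 + ‖x‖) ^ (-N) := by
  obtain ⟨C, hC⟩ := (hgc.mul_right (f' := fun x => (1 + ‖x‖) ^ N)).exists_bound_of_continuous
    (hg.mul (continuous_one_add_norm_rpow N))
  refine ⟨C, (norm_nonneg _).trans (hC 0), fun x => ?_⟩
  have h0 : (0 : ℝ) < 1 + ‖x‖ := by positivity
  have := hC x
  rw [Pi.mul_apply, norm_mul, Real.norm_of_nonneg (by positivity : 0 ≤ (1 + ‖x‖) ^ N)] at this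
  rw [Real.rpow_neg h0.le, ← div_eq_mul_inv, le_div_iff₀ (by positivity)]
  exact this

lemma SchwartzMap.integrable_abs_mul_one_add_norm_rpow (f : 𝓢(E, ℝ)) (N : ℝ) :
    Integrable fun x => |f x| * (1 + ‖x‖) ^ N := by
  obtain ⟨C, hC0, hC⟩ := f.exists_norm_le (N + (Module.finrank ℝ E + 1))
  refine ((integrable_one_add_norm (μ := (volume : Measure E))
    (r := Module.finrank ℝ E + 1) (by linarith)).const_mul C).mono'
    ((f.continuous.abs.mul (continuous_one_add_norm_rpow N)).aestronglyMeasurable)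
    (.of_forall fun x => ?_)
  rw [Real.norm_of_nonneg (by positivity)]
  refine (mul_le_mul_of_nonneg_right (hC x) (by positivity)).trans_eq ?_
  rw [mul_assoc, ← Real.rpow_add (by positivity)]
  congr 2; ring

lemma integral_lowPass_comp_sub (k : ℤ) (g : E → ℝ) (x : E) :
    ∫ q, lowPass k (x - q) * g q =
      ∫ w, lowPass (E := E) 0 w * g (x - ((2 : ℝ) ^ k)⁻¹ • w) := by
  have hp : 0 < ((2 : ℝ) ^ k) := by positivity
  rw [← integral_sub_left_eq_self (fun q => lowPass k (x - q) * g q) volume x]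
  have h := Measure.integral_comp_smul (volume : Measure E)
    (fun w => lowPass (E := E) 0 w * g (x - ((2 : ℝ) ^ k)⁻¹ • w)) ((2 : ℝ) ^ k)
  rw [abs_of_pos (by positivity), smul_eq_mul, eq_inv_mul_iff_mul_eq₀ (by positivity),
    ← integral_const_mul] at h
  rw [← h]
  congr 1 with w
  rw [sub_sub_cancel, lowPass_apply, smul_smul, inv_mul_cancel₀ hp.ne', one_smul, mul_assoc]

/-- The low-pass kernels form an approximate identity when tested against functions of
polynomial growth. -/
lemma tendsto_integral_mul_integral_lowPass (hN : 0 ≤ N)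
    (hU : Integrable fun x => U x * (1 + ‖x‖) ^ (-N)) {g : E → ℝ} (hg : Continuous g)
    (hgc : HasCompactSupport g) :
    Tendsto (fun k : ℕ => ∫ q, g q * ∫ x, U x * lowPass (k : ℤ) (x - q)) atTop
      (nhds (∫ x, U x * g x)) := by
  obtain ⟨G, hG0, hG⟩ := exists_abs_le_of_hasCompactSupport hg hgc N
  have hswap : ∀ k : ℕ, ∫ q, g q * ∫ x, U x * lowPass (k : ℤ) (x - q) =
      ∫ x, U x * ∫ w, lowPass (E := E) 0 w * g (x - ((2 : ℝ) ^ (k : ℤ))⁻¹ • w) := fun k => by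
    simp only [← integral_const_mul, ← integral_lowPass_comp_sub]
    rw [integral_integral_swap]
    · congr 1 with x; congr 1 with q; ring
    obtain ⟨C, hC0, hC⟩ := (lowPass (E := E) (k : ℤ)).exists_norm_le N
    have hgi : Integrable fun q => g q * (1 + ‖q‖) ^ N :=
      (hg.mul (continuous_one_add_norm_rpow N)).integrable_of_hasCompactSupport hgc.mul_right
    refine ((hgi.norm.mul_prod hU.norm).const_mul C).mono' ?_ (.of_forall fun p => ?_)
    · have h1 : AEStronglyMeasurable (fun p : E × E => U p.2) (volume.prod volume) :=
        (locallyIntegrable_of_weight hU).aestronglyMeasurable.comp_snd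
      have h2 : Continuous fun p : E × E => lowPass (E := E) (k : ℤ) (p.2 - p.1) := by
        have := (lowPass (E := E) (k : ℤ)).continuous
        fun_prop
      exact (hg.comp continuous_fst).aestronglyMeasurable.mul (h1.mul h2.aestronglyMeasurable)
    · dsimp only [Function.uncurry]
      rw [norm_mul, norm_mul, norm_mul, norm_mul,
        Real.norm_of_nonneg (by positivity : 0 ≤ (1 + ‖p.1‖) ^ N),
        Real.norm_of_nonneg (by positivity : 0 ≤ (1 + ‖p.2‖) ^ (-N))]
      have := (hC (p.2 - p.1)).trans
        (mul_le_mul_of_nonneg_left (one_add_norm_sub_rpow_neg_le hN p.2 p.1) hC0)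
      calc _ ≤ ‖g p.1‖ * (‖U p.2‖ * (C * ((1 + ‖p.1‖) ^ N * (1 + ‖p.2‖) ^ (-N)))) := by
            exact mul_le_mul_of_nonneg_left (mul_le_mul_of_nonneg_left this (norm_nonneg _))
              (norm_nonneg _)
        _ = _ := by ring
  simp only [hswap]
  set l : ℕ → ℝ := fun k => ((2 : ℝ) ^ (k : ℤ))⁻¹ with hl
  have hl0 : ∀ k, 0 ≤ l k := fun k => by positivity
  have hl1 : ∀ k, l k ≤ 1 := fun k => by
    simp only [hl, zpow_natCast]
    exact inv_le_one_of_one_le₀ (one_le_pow₀ (by norm_num))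
  have hlt : Tendsto l atTop (nhds 0) := by
    have := tendsto_pow_atTop_nhds_zero_of_lt_one (r := (2 : ℝ)⁻¹) (by norm_num) (by norm_num)
    refine this.congr fun k => ?_
    simp only [hl, zpow_natCast, inv_pow]
  have hbd : ∀ k x w, ‖lowPass (E := E) 0 w * g (x - l k • w)‖ ≤
      G * (1 + ‖x‖) ^ (-N) * (|lowPass (E := E) 0 w| * (1 + ‖w‖) ^ N) := fun k x w => by
    rw [norm_mul]
    have h1 : ‖l k • w‖ ≤ ‖w‖ := by
      rw [norm_smul, Real.norm_of_nonneg (hl0 k)]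
      exact mul_le_of_le_one_left (norm_nonneg _) (hl1 k)
    have h2 : (1 + ‖l k • w‖) ^ N ≤ (1 + ‖w‖) ^ N :=
      Real.rpow_le_rpow (by positivity) (by linarith) hN
    have h3 : |g (x - l k • w)| ≤ G * ((1 + ‖w‖) ^ N * (1 + ‖x‖) ^ (-N)) :=
      (hG _).trans (mul_le_mul_of_nonneg_left ((one_add_norm_sub_rpow_neg_le hN x _).trans
        (mul_le_mul_of_nonneg_right h2 (by positivity))) hG0)
    calc _ ≤ ‖lowPass (E := E) 0 w‖ * (G * ((1 + ‖w‖) ^ N * (1 + ‖x‖) ^ (-N))) :=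
          mul_le_mul_of_nonneg_left h3 (norm_nonneg _)
      _ = _ := by rw [Real.norm_eq_abs]; ring
  have hP := (lowPass (E := E) 0).integrable_abs_mul_one_add_norm_rpow N
  have hcont := (lowPass (E := E) 0).continuous
  have hinner : ∀ x, Tendsto (fun k => ∫ w, lowPass (E := E) 0 w * g (x - l k • w)) atTop
      (nhds (g x)) := fun x => by
    have : g x = ∫ w, lowPass (E := E) 0 w * g x := by
      rw [integral_mul_const, integral_lowPass_zero, one_mul]
    rw [this]
    refine tendsto_integral_of_dominated_convergence
      (fun w => G * (1 + ‖x‖) ^ (-N) * (|lowPass (E := E) 0 w| * (1 + ‖w‖) ^ N))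
      (fun k => Continuous.aestronglyMeasurable (by fun_prop)) (hP.const_mul _)
      (fun k => .of_forall fun w => hbd k x w) (.of_forall fun w => ?_)
    refine Tendsto.const_mul _ ((hg.tendsto x).comp ?_)
    have := (hlt.smul_const w).const_sub x
    rwa [zero_smul, sub_zero] at this
  refine tendsto_integral_of_dominated_convergence
    (fun x => (G * ∫ w, |lowPass (E := E) 0 w| * (1 + ‖w‖) ^ N) * ‖U x * (1 + ‖x‖) ^ (-N)‖)
    (fun k => ?_) (hU.norm.const_mul _) (fun k => .of_forall fun x => ?_)
    (.of_forall fun x => (hinner x).const_mul _)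
  · refine (locallyIntegrable_of_weight hU).aestronglyMeasurable.mul ?_
    have : AEStronglyMeasurable (fun p : E × E => lowPass (E := E) 0 p.2 * g (p.1 - l k • p.2))
        (volume.prod volume) := Continuous.aestronglyMeasurable (by fun_prop)
    exact this.integral_prod_right'
  · rw [norm_mul, norm_mul, Real.norm_of_nonneg (by positivity : 0 ≤ (1 + ‖x‖) ^ (-N))]
    have h1 := (norm_integral_le_integral_norm (μ := volume)
      fun w => lowPass (E := E) 0 w * g (x - l k • w)).trans
      (integral_mono_of_nonneg (.of_forall fun _ => norm_nonneg _) (hP.const_mul _)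
        (.of_forall fun w => hbd k x w))
    rw [integral_const_mul] at h1
    calc _ ≤ ‖U x‖ * _ := mul_le_mul_of_nonneg_left h1 (norm_nonneg _)
      _ = _ := by ring

/-- A function whose spectrum is contained in the origin is almost everywhere equal to each of its
low-frequency averages. -/
lemma ae_eq_integral_mul_lowPass (hN : 0 ≤ N) (hU : Integrable fun x => U x * (1 + ‖x‖) ^ (-N))
    (hv : ∀ (k : ℤ) (q : E), ∫ x, U x * lowPass k (x - q) = ∫ x, U x * lowPass 0 (x - q)) :
    U =ᵐ[volume] fun q => ∫ x, U x * lowPass 0 (x - q) := by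
  have hc := SchwartzMap.continuous_integral_mul_comp_sub hN hU (lowPass (E := E) 0)
  refine ae_eq_of_integral_contDiff_smul_eq (locallyIntegrable_of_weight hU)
    hc.locallyIntegrable fun g hg hgc => ?_
  have h1 := tendsto_integral_mul_integral_lowPass hN hU hg.continuous hgc
  simp only [hv] at h1
  have h2 := tendsto_nhds_unique h1 tendsto_const_nhds
  simp only [smul_eq_mul]
  rw [← h2]
  congr 1 with x
  ring

lemma integral_mul_lowPass_eq (hN : 0 ≤ N) (hU : Integrable fun x => U x * (1 + ‖x‖) ^ (-N))
    (hvan : ∀ (k : ℤ) (i : ℕ), ∫ x, U x * reInvFourier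
      (bumpMode k (TopologicalSpace.denseSeq E i) - bumpMode 0 (TopologicalSpace.denseSeq E i)) x
        = 0) (k : ℤ) (q : E) :
    ∫ x, U x * lowPass k (x - q) = ∫ x, U x * lowPass 0 (x - q) := by
  refine congrFun (Continuous.ext_on (TopologicalSpace.denseRange_denseSeq E)
    (SchwartzMap.continuous_integral_mul_comp_sub hN hU (lowPass (E := E) k))
    (SchwartzMap.continuous_integral_mul_comp_sub hN hU (lowPass (E := E) 0)) ?_) q
  rintro _ ⟨i, rfl⟩
  have := hvan k i
  simp only [reInvFourier_sub, reInvFourier_bumpMode_eq_lowPass, mul_sub] at this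
  rw [integral_sub (SchwartzMap.integrable_mul_comp_sub hN hU _ _)
    (SchwartzMap.integrable_mul_comp_sub hN hU _ _)] at this
  exact sub_eq_zero.1 this

/-- Second differences of a function with spectrum at the origin and growth below degree two
vanish. -/
lemma integral_mul_lowPass_second_diff (hσ : 0 < σ) (hσ2 : σ < 2)
    (hU : Integrable fun x => U x * (1 + ‖x‖) ^ (-(Module.finrank ℝ E + σ)))
    (hv : ∀ (k : ℤ) (q : E), ∫ x, U x * lowPass k (x - q) = ∫ x, U x * lowPass 0 (x - q))
    (q h : E) :
    (∫ x, U x * lowPass 0 (x - (q + h + h))) - (∫ x, U x * lowPass 0 (x - (q + h))) =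
      (∫ x, U x * lowPass 0 (x - (q + h))) - ∫ x, U x * lowPass 0 (x - q) := by
  have hN : (0 : ℝ) ≤ Module.finrank ℝ E + σ := by positivity
  obtain ⟨C, hC⟩ := exists_lowPass_diff_bounds (E := E) hσ q (-h)
  have h1 := tendsto_integral_mul_zero hU (fun k x => (hC k x).2) (by
    simpa using (tendsto_two_zpow_neg_rpow (sub_pos.2 hσ2)).const_mul C)
  have e : ∀ x, x - q + -h = x - (q + h) := fun x => by abel
  have e' : ∀ x, x - (q + h) + -h = x - (q + h + h) := fun x => by abel
  simp only [e, e', mul_sub] at h1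
  have hi := fun k q => SchwartzMap.integrable_mul_comp_sub hN hU (lowPass (E := E) k) q
  have h2 : ∀ k : ℤ, ∫ x, U x * lowPass k (x - (q + h + h)) - U x * lowPass k (x - (q + h)) -
      (U x * lowPass k (x - (q + h)) - U x * lowPass k (x - q)) =
      (∫ x, U x * lowPass 0 (x - (q + h + h))) - (∫ x, U x * lowPass 0 (x - (q + h))) -
      ((∫ x, U x * lowPass 0 (x - (q + h))) - ∫ x, U x * lowPass 0 (x - q)) := fun k => by
    rw [integral_sub (by exact (hi _ _).sub (hi _ _)) (by exact (hi _ _).sub (hi _ _)),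
      integral_sub (hi _ _) (hi _ _), integral_sub (hi _ _) (hi _ _)]
    simp only [hv k]
  simp only [h2] at h1
  exact sub_eq_zero.1 (tendsto_nhds_unique tendsto_const_nhds h1)

lemma integral_mul_lowPass_first_diff (hσ : 0 < σ) (hσ1 : σ < 1)
    (hU : Integrable fun x => U x * (1 + ‖x‖) ^ (-(Module.finrank ℝ E + σ)))
    (hv : ∀ (k : ℤ) (q : E), ∫ x, U x * lowPass k (x - q) = ∫ x, U x * lowPass 0 (x - q))
    (q h : E) :
    (∫ x, U x * lowPass 0 (x - (q + h))) = ∫ x, U x * lowPass 0 (x - q) := by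
  have hN : (0 : ℝ) ≤ Module.finrank ℝ E + σ := by positivity
  obtain ⟨C, hC⟩ := exists_lowPass_diff_bounds (E := E) hσ q (-h)
  have h1 := tendsto_integral_mul_zero hU (fun k x => (hC k x).1) (by
    simpa using (tendsto_two_zpow_neg_rpow (sub_pos.2 hσ1)).const_mul C)
  have e : ∀ x, x - q + -h = x - (q + h) := fun x => by abel
  simp only [e, mul_sub] at h1
  have hi := fun k q => SchwartzMap.integrable_mul_comp_sub hN hU (lowPass (E := E) k) q
  have h2 : ∀ k : ℤ, ∫ x, U x * lowPass k (x - (q + h)) - U x * lowPass k (x - q) =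
      (∫ x, U x * lowPass 0 (x - (q + h))) - ∫ x, U x * lowPass 0 (x - q) := fun k => by
    rw [integral_sub (hi _ _) (hi _ _)]
    simp only [hv k]
  simp only [h2] at h1
  exact sub_eq_zero.1 (tendsto_nhds_unique tendsto_const_nhds h1)

end SpectrumAtZero

section Slices

variable {E : Type*} [NormedAddCommGroup E] [InnerProductSpace ℝ E] [FiniteDimensional ℝ E]
  [MeasurableSpace E] [BorelSpace E]

lemma le_of_ae_eq_of_le {U v : E → ℝ} (hv : Continuous v) (hUv : U =ᵐ[volume] v) {γ ε R : ℝ}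
    (hγ : 0 ≤ γ) (h : ∀ x, R ≤ ‖x‖ → -ε * ‖x‖ ^ γ ≤ U x) {x : E} (hx : R < ‖x‖) :
    -ε * ‖x‖ ^ γ ≤ v x := by
  by_contra! hlt
  have hopen : IsOpen {y : E | R < ‖y‖ ∧ v y < -ε * ‖y‖ ^ γ} :=
    (isOpen_lt continuous_const continuous_norm).inter (isOpen_lt hv
      (continuous_const.mul (continuous_norm.rpow_const fun _ => .inr hγ)))
  have hnull : volume {y : E | R < ‖y‖ ∧ v y < -ε * ‖y‖ ^ γ} = 0 := by
    refine measure_mono_null (t := {y | U y = v y}ᶜ) (fun y hy hUy => ?_) hUv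
    have := h y hy.1.le
    rw [show U y = v y from hUy] at this
    exact this.not_gt hy.2
  have := hopen.measure_eq_zero_iff volume |>.1 hnull
  exact (this ▸ (⟨hx, hlt⟩ : x ∈ {y : E | R < ‖y‖ ∧ v y < -ε * ‖y‖ ^ γ}) : x ∈ (∅ : Set E))

/-- An affine function whose negative part is sublinear is constant. -/
lemma eq_of_second_diff_eq_zero {E : Type*} [NormedAddCommGroup E] [NormedSpace ℝ E] {v : E → ℝ}
    (hv2 : ∀ q h, v (q + h + h) - v (q + h) = v (q + h) - v q) {γ : ℝ} (hγ1 : γ ≤ 1)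
    (hlow : ∀ ε > 0, ∃ R : ℝ, ∀ x, R < ‖x‖ → -ε * ‖x‖ ^ γ ≤ v x) (q h : E) :
    v (q + h) = v q := by
  suffices H : ∀ q h, v q ≤ v (q + h) by
    refine le_antisymm ?_ (H q h)
    simpa using H (q + h) (-h)
  intro q h
  rcases eq_or_ne h 0 with rfl | hh
  · simp
  by_contra! hlt
  set d := v (q + h) - v q with hd
  have hd0 : d < 0 := sub_neg.2 hlt
  have hstep : ∀ k : ℕ, v (q + (k : ℝ) • h + h) - v (q + (k : ℝ) • h) = d := by
    intro k
    induction k with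
    | zero => simp [hd]
    | succ k ih =>
      have := hv2 (q + (k : ℝ) • h) h
      rw [Nat.cast_succ, add_smul, one_smul, ← add_assoc, this, ih]
  have hlin : ∀ k : ℕ, v (q + (k : ℝ) • h) = v q + k * d := by
    intro k
    induction k with
    | zero => simp
    | succ k ih =>
      have := hstep k
      rw [Nat.cast_succ, add_smul, one_smul, ← add_assoc]
      linarith
  have hn : 0 < ‖h‖ := norm_pos_iff.2 hh
  set A := ‖q‖ + ‖h‖ with hA
  have hA0 : 0 < A := by positivity
  obtain ⟨R, hR⟩ := hlow (-d / (2 * A)) (by apply div_pos <;> linarith)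
  obtain ⟨k, hk⟩ := exists_nat_gt (max 1 (max ((‖q‖ + |R| + 1) / ‖h‖) (v q / (-d / 2))))
  have hk1 : 1 < (k : ℝ) := (le_max_left _ _).trans_lt hk
  have hk2 : (‖q‖ + |R| + 1) / ‖h‖ < k :=
    ((le_max_left _ _).trans (le_max_right _ _)).trans_lt hk
  have hk3 : v q / (-d / 2) < k := ((le_max_right _ _).trans (le_max_right _ _)).trans_lt hk
  rw [div_lt_iff₀ hn] at hk2
  rw [div_lt_iff₀ (by linarith)] at hk3
  have hnorm : ‖(k : ℝ) • h‖ = k * ‖h‖ := by rw [norm_smul, Real.norm_of_nonneg (by positivity)]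
  have hge : |R| + 1 < ‖q + (k : ℝ) • h‖ := by
    have := norm_sub_norm_le ((k : ℝ) • h) (-q)
    rw [sub_neg_eq_add, norm_neg, add_comm ((k : ℝ) • h)] at this
    linarith
  have hle : ‖q + (k : ℝ) • h‖ ≤ k * A := by
    have := norm_add_le q ((k : ℝ) • h)
    have h2 : ‖q‖ ≤ k * ‖q‖ := le_mul_of_one_le_left (norm_nonneg _) hk1.le
    rw [hA, mul_add]
    linarith
  have h1 : 1 ≤ ‖q + (k : ℝ) • h‖ := by linarith [abs_nonneg R]
  have hpow : ‖q + (k : ℝ) • h‖ ^ γ ≤ k * A := by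
    refine le_trans ?_ hle
    simpa using Real.rpow_le_rpow_of_exponent_le h1 hγ1
  have hlast := hR (q + (k : ℝ) • h) (by linarith [le_abs_self R])
  rw [hlin] at hlast
  have h3 : -d / (2 * A) * ‖q + (k : ℝ) • h‖ ^ γ ≤ -d / (2 * A) * (k * A) :=
    mul_le_mul_of_nonneg_left hpow (by apply div_nonneg <;> linarith)
  have h4 : -d / (2 * A) * (k * A) = k * (-d / 2) := by field_simp
  linarith

variable {u : E × ℝ → ℝ} {α σ c₁ c₂ : ℝ}

/-- Almost every time slice of a solution with sublinear negative part is constant. -/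
lemma IsDualSolution.ae_slice_eq_const [Nontrivial E] (hα : 0 < α) (hα1 : α < 1) (hσ0 : 0 < σ)
    (hσ2 : σ < 2) (hc₁ : 0 ≤ c₁) (hc₂ : 0 < c₂) (hsol : IsDualSolution α σ c₁ c₂ u)
    (hu : Integrable fun p : E × ℝ =>
      u p * ((1 + ‖p.1‖) ^ (-(Module.finrank ℝ E + σ)) * japWeight (1 + α) p.2))
    {γ : ℝ} (hγ0 : 0 ≤ γ) (hγ1 : γ ≤ 1) (hasymp : ∀ t : ℝ, ∀ ε > (0 : ℝ), ∃ R > (0 : ℝ),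
      ∀ x : E, R ≤ ‖x‖ → -ε * ‖x‖ ^ γ ≤ u (x, t)) :
    ∀ᵐ t, ∀ᵐ x, u (x, t) = slicePairing u (lowPass (E := E) 0) t := by
  have hN : (0 : ℝ) ≤ Module.finrank ℝ E + σ := by positivity
  have hvan : ∀ᵐ t, ∀ (k : ℤ) (i : ℕ), slicePairing u (reInvFourier
      (bumpMode k (TopologicalSpace.denseSeq E i) - bumpMode 0 (TopologicalSpace.denseSeq E i))) t
        = 0 := by
    rw [ae_all_iff]; intro k
    rw [ae_all_iff]; intro i
    exact hsol.ae_slicePairing_eq_zero hα hα1 hσ0 hσ2 hc₁ hc₂ hu _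
      (hasCompactSupport_bumpMode_sub _ _) (zero_notMem_tsupport_bumpMode_sub _ _)
  have hslice := ae_integrable_mul_slice hu
    (f := fun x : E => (1 + ‖x‖) ^ (-(Module.finrank ℝ E + σ))) (C := 1)
    (continuous_one_add_norm_rpow _) (fun x => by rw [abs_of_nonneg (by positivity), one_mul])
  filter_upwards [hvan, hslice] with t ht hU
  have hv := integral_mul_lowPass_eq (U := fun x => u (x, t)) hN hU ht
  have hae := ae_eq_integral_mul_lowPass hN hU hv
  have hcont := SchwartzMap.continuous_integral_mul_comp_sub hN hU (lowPass (E := E) 0)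
  filter_upwards [hae] with x hx
  rw [hx]
  have := eq_of_second_diff_eq_zero (integral_mul_lowPass_second_diff hσ0 hσ2 hU hv) hγ1
    (fun ε hε => by
      obtain ⟨R, -, hR⟩ := hasymp t ε hε
      exact ⟨R, fun y hy => le_of_ae_eq_of_le hcont hae hγ0 hR hy⟩) 0 x
  simpa [slicePairing] using this

end Slices

section TimeReduction

variable {E : Type*} [NormedAddCommGroup E] [InnerProductSpace ℝ E] [FiniteDimensional ℝ E]
  [MeasurableSpace E] [BorelSpace E] {σ : ℝ}

lemma SchwartzMap.exists_abs_symm_diff_le {E : Type*} [NormedAddCommGroup E]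
    [InnerProductSpace ℝ E] (f : 𝓢(E, ℝ)) {N : ℝ} (hN : 0 ≤ N) :
    ∃ C, 0 ≤ C ∧ ∀ x y, |2 * f x - f (x + y) - f (x - y)| ≤ C * min 1 (‖y‖ ^ 2) *
      ((1 + ‖x‖) ^ (-N) + (1 + ‖x + y‖) ^ (-N) + (1 + ‖x - y‖) ^ (-N)) := by
  obtain ⟨C₀, h0, hC₀⟩ := f.exists_norm_le N
  obtain ⟨C₂, h2, hC₂⟩ := f.exists_norm_second_diff_le hN
  have hpow : 0 ≤ ((2 : ℝ) ^ N) ^ 2 := by positivity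
  refine ⟨2 * C₀ + C₂ * ((2 : ℝ) ^ N) ^ 2, by positivity, fun x y => ?_⟩
  have p0 : 0 ≤ (1 + ‖x‖) ^ (-N) := by positivity
  have p1 : 0 ≤ (1 + ‖x + y‖) ^ (-N) := by positivity
  have p2 : 0 ≤ (1 + ‖x - y‖) ^ (-N) := by positivity
  rcases le_total ‖y‖ 1 with hy | hy
  · rw [min_eq_right (pow_le_one₀ (norm_nonneg _) hy)]
    have h := hC₂ (x - y) y
    rw [sub_add_cancel, Real.norm_eq_abs,
      show f (x + y) - f x - (f x - f (x - y)) = -(2 * f x - f (x + y) - f (x - y)) by ring,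
      abs_neg] at h
    have h3 : ((1 + ‖y‖) ^ N) ^ 2 ≤ ((2 : ℝ) ^ N) ^ 2 :=
      pow_le_pow_left₀ (by positivity) (Real.rpow_le_rpow (by positivity) (by linarith) hN) 2
    refine h.trans ?_
    calc _ ≤ C₂ * ‖y‖ ^ 2 * ((2 : ℝ) ^ N) ^ 2 * (1 + ‖x - y‖) ^ (-N) :=
          mul_le_mul_of_nonneg_right (mul_le_mul_of_nonneg_left h3 (by positivity)) p2
      _ = C₂ * ((2 : ℝ) ^ N) ^ 2 * ‖y‖ ^ 2 * (1 + ‖x - y‖) ^ (-N) := by ring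
      _ ≤ _ := by
        refine mul_le_mul (mul_le_mul_of_nonneg_right (by linarith) (by positivity))
          (by linarith) p2 (by positivity)
  · rw [min_eq_left (one_le_pow₀ hy), mul_one]
    have a0 := hC₀ x
    have a1 := hC₀ (x + y)
    have a2 := hC₀ (x - y)
    simp only [Real.norm_eq_abs] at a0 a1 a2
    have t : |2 * f x - f (x + y) - f (x - y)| ≤ 2 * |f x| + |f (x + y)| + |f (x - y)| := by
      refine (abs_sub _ _).trans (add_le_add_left ((abs_sub _ _).trans (add_le_add_left ?_ _)) _)
      rw [abs_mul, abs_two]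
    refine t.trans ?_
    have q1 : 0 ≤ C₂ * ((2 : ℝ) ^ N) ^ 2 := by positivity
    nlinarith [mul_nonneg h0 p1, mul_nonneg h0 p2, mul_nonneg q1 p0, mul_nonneg q1 p1,
      mul_nonneg q1 p2]

lemma SchwartzMap.integrable_symm_diff [Nontrivial E] (h0 : 0 < σ) (h2 : σ < 2) (f : 𝓢(E, ℝ)) :
    Integrable (fun p : E × E => (2 * f p.1 - f (p.1 + p.2) - f (p.1 - p.2)) /
      ‖p.2‖ ^ (Module.finrank ℝ E + σ)) := by
  set N : ℝ := Module.finrank ℝ E + 1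
  obtain ⟨C, hC0, hC⟩ := f.exists_abs_symm_diff_le (N := N) (by positivity)
  set m : E → ℝ := fun y => min 1 (‖y‖ ^ 2) / ‖y‖ ^ (Module.finrank ℝ E + σ) with hm
  set w : E → ℝ := fun x => (1 + ‖x‖) ^ (-N) with hw
  have hmi : Integrable m := integrable_min_one_sq_div_norm_rpow h0 h2
  have hwi : Integrable w := integrable_one_add_norm (by simp [N])
  have i0 : Integrable fun p : E × E => m p.2 * w p.1 :=
    (hwi.mul_prod hmi).congr (.of_forall fun p => mul_comm _ _)
  have i1 : Integrable fun p : E × E => m p.2 * w (p.1 - p.2) :=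
    hmi.convolution_integrand (ContinuousLinearMap.mul ℝ ℝ) hwi
  have i2 : Integrable fun p : E × E => m p.2 * w (p.1 + p.2) := by
    have hmp : MeasurePreserving (Prod.map id Neg.neg : E × E → E × E) :=
      (MeasurePreserving.id volume).prod (Measure.measurePreserving_neg volume)
    refine ((hmp.integrable_comp i1.aestronglyMeasurable).2 i1).congr (.of_forall fun p => ?_)
    simp [hm]
  refine (((i0.add i2).add i1).const_mul C).mono' ?_ (.of_forall fun p => ?_)
  · have hf := f.continuous
    have : Measurable fun p : E × E => ‖p.2‖ ^ (Module.finrank ℝ E + σ) := by fun_prop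
    refine (Measurable.div ?_ this).aestronglyMeasurable
    exact Continuous.measurable (by fun_prop)
  · rw [norm_div, Real.norm_of_nonneg (by positivity : 0 ≤ ‖p.2‖ ^ (Module.finrank ℝ E + σ))]
    refine (div_le_div_of_nonneg_right (hC _ _) (by positivity)).trans_eq ?_
    simp only [Pi.add_apply, hm, hw]
    ring

lemma SchwartzMap.integral_symm_diff [Nontrivial E] (h0 : 0 < σ) (h2 : σ < 2) (f : 𝓢(E, ℝ)) :
    ∫ x, ∫ y, (2 * f x - f (x + y) - f (x - y)) / ‖y‖ ^ (Module.finrank ℝ E + σ) = 0 := by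
  rw [integral_integral_swap (f.integrable_symm_diff h0 h2)]
  have : ∀ y : E, ∫ x, (2 * f x - f (x + y) - f (x - y)) / ‖y‖ ^ (Module.finrank ℝ E + σ) = 0 := by
    intro y
    have h1 := f.integrable (μ := volume)
    rw [integral_div, integral_sub (by exact (h1.const_mul 2).sub (h1.comp_add_right y))
      (h1.comp_sub_right y), integral_sub (h1.const_mul 2) (h1.comp_add_right y),
      integral_const_mul, integral_add_right_eq_self (fun x => f x) y,
      integral_sub_right_eq_self (fun x => f x) y]
    ring
  simp only [this, integral_zero]

/-- If almost every slice is constant, the equation reduces to one for the time profile. -/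
lemma IsDualSolution.integral_mul_rightDiff_eq_zero [Nontrivial E] {α c₁ c₂ : ℝ} (h0 : 0 < σ)
    (h2 : σ < 2) (hc₁ : c₁ ≠ 0) {u : E × ℝ → ℝ} (hsol : IsDualSolution α σ c₁ c₂ u) {B : ℝ → ℝ}
    (hB : ∀ᵐ t, ∀ᵐ x, u (x, t) = B t) (η : 𝓢(ℝ, ℝ)) : ∫ t, B t * rightDiff α η t = 0 := by
  set f : 𝓢(E, ℝ) := lowPass 0 with hf
  have hfi := f.integrable (μ := volume)
  have hki := (f.integrable_symm_diff h0 h2).integral_prod_left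
  have h := hsol (f.tensor η)
  have key : ∀ᵐ t, ∫ x, u (x, t) * (c₁ * rightDiff α (fun τ => f.tensor η (x, τ)) t + c₂ * ∫ y : E,
      (2 * f.tensor η (x, t) - f.tensor η (x + y, t) - f.tensor η (x - y, t)) /
        ‖y‖ ^ (Module.finrank ℝ E + σ)) = c₁ * (B t * rightDiff α η t) := by
    filter_upwards [hB] with t ht
    simp only [SchwartzMap.tensor_apply, rightDiff_const_mul]
    have h3 : ∀ x, ∫ y : E, (2 * (f x * η t) - f (x + y) * η t - f (x - y) * η t) /
        ‖y‖ ^ (Module.finrank ℝ E + σ) = (∫ y : E, (2 * f x - f (x + y) - f (x - y)) /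
        ‖y‖ ^ (Module.finrank ℝ E + σ)) * η t := fun x => by
      rw [← integral_mul_const]
      congr 1 with y
      ring
    simp only [h3]
    calc _ = ∫ x, (c₁ * (B t * rightDiff α η t) * f x + B t * c₂ * η t *
          ∫ y : E, (2 * f x - f (x + y) - f (x - y)) / ‖y‖ ^ (Module.finrank ℝ E + σ)) := by
          refine integral_congr_ae ?_
          filter_upwards [ht] with x hx
          rw [hx]; ring
      _ = _ := by
          rw [integral_add (hfi.const_mul _) (hki.const_mul _), integral_const_mul,
            integral_const_mul, f.integral_symm_diff h0 h2, hf, integral_lowPass_zero]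
          ring
  rw [integral_congr_ae key, integral_const_mul] at h
  exact (mul_eq_zero.1 h).resolve_left hc₁

end TimeReduction

section TimeSymbol

variable {α : ℝ}

/-- The Fourier symbol of the (unnormalized) right Marchaud derivative. -/
noncomputable def timeSymbol (α v : ℝ) : ℂ :=
  ∫ r in Ioi (0 : ℝ), (1 - Complex.exp (↑(2 * Real.pi * (v * r)) * Complex.I)) / (r ^ (1 + α) : ℝ)

lemma norm_one_sub_exp_div_le (v : ℝ) {r : ℝ} (hr : 0 < r) :
    ‖(1 - Complex.exp (↑(2 * Real.pi * (v * r)) * Complex.I)) / ((r ^ (1 + α) : ℝ) : ℂ)‖ ≤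
      (2 + 2 * Real.pi * |v|) * (min 1 (r ^ 1) * r ^ (-1 - α)) := by
  have hp : 0 < r ^ (1 + α) := Real.rpow_pos_of_pos hr _
  have hv : 0 ≤ 2 * Real.pi * |v| := by positivity
  have h1 : ‖1 - Complex.exp (↑(2 * Real.pi * (v * r)) * Complex.I)‖ ≤ 2 := by
    refine (norm_sub_le _ _).trans ?_
    rw [Complex.norm_exp_ofReal_mul_I, norm_one]; norm_num
  have h2 : ‖1 - Complex.exp (↑(2 * Real.pi * (v * r)) * Complex.I)‖ ≤ 2 * Real.pi * |v| * r := by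
    rw [norm_sub_rev, mul_comm _ Complex.I]
    refine Real.norm_exp_I_mul_ofReal_sub_one_le.trans_eq ?_
    rw [Real.norm_eq_abs, abs_mul (2 * Real.pi), abs_mul v, abs_of_pos hr,
      abs_of_pos Real.two_pi_pos]
    ring
  rw [norm_div, Complex.norm_real, Real.norm_of_nonneg hp.le, div_eq_mul_inv, ← Real.rpow_neg hr.le,
    show -(1 + α) = -1 - α by ring, ← mul_assoc (2 + _), pow_one]
  refine mul_le_mul_of_nonneg_right ?_ (Real.rpow_nonneg hr.le _)
  rcases min_cases 1 r with h | h <;> rw [h.1]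
  · linarith
  · nlinarith

lemma integrableOn_timeSymbol_integrand (hα : 0 < α) (hα1 : α < 1) (v : ℝ) :
    IntegrableOn (fun r : ℝ => (1 - Complex.exp (↑(2 * Real.pi * (v * r)) * Complex.I)) /
      ((r ^ (1 + α) : ℝ) : ℂ)) (Ioi 0) := by
  refine ((integrableOn_min_one_pow_mul_rpow (m := 1) hα (by simpa using hα1)).const_mul
    (2 + 2 * Real.pi * |v|)).mono' ?_ ?_
  · refine (Measurable.div (Continuous.measurable (by fun_prop)) ?_).aestronglyMeasurable
    fun_prop
  · exact (ae_restrict_iff' measurableSet_Ioi).2 (.of_forall fun r hr => norm_one_sub_exp_div_le v hr)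

lemma timeSymbol_mul (α v : ℝ) {c : ℝ} (hc : 0 < c) :
    timeSymbol α (c * v) = (c ^ α : ℝ) * timeSymbol α v := by
  have h := integral_comp_mul_left_Ioi (fun r : ℝ =>
    (1 - Complex.exp (↑(2 * Real.pi * (v * r)) * Complex.I)) / ((r ^ (1 + α) : ℝ) : ℂ)) 0 hc
  rw [mul_zero] at h
  have h1 : timeSymbol α (c * v) = ((c ^ (1 + α) : ℝ) : ℂ) * ∫ r in Ioi (0 : ℝ),
      (1 - Complex.exp (↑(2 * Real.pi * (v * (c * r))) * Complex.I)) /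
        (((c * r) ^ (1 + α) : ℝ) : ℂ) := by
    rw [timeSymbol, ← integral_const_mul]
    refine setIntegral_congr_fun measurableSet_Ioi fun r (hr : 0 < r) => ?_
    have h2 : ((c ^ (1 + α) : ℝ) : ℂ) ≠ 0 :=
      Complex.ofReal_ne_zero.2 (Real.rpow_pos_of_pos hc _).ne'
    rw [Real.mul_rpow hc.le hr.le, Complex.ofReal_mul (c ^ (1 + α)),
      show c * v * r = v * (c * r) by ring]
    rw [← mul_div_assoc, mul_div_mul_left _ _ h2]
  rw [h1, h, timeSymbol, Complex.real_smul, ← mul_assoc, ← Complex.ofReal_mul, Real.rpow_add hc,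
    Real.rpow_one]
  congr 2
  field_simp

lemma timeSymbol_re_pos (hα : 0 < α) (hα1 : α < 1) {v : ℝ} (hv : |v| = 1) :
    0 < (timeSymbol α v).re := by
  have hre : ∀ r : ℝ, ((1 - Complex.exp (↑(2 * Real.pi * (v * r)) * Complex.I)) /
      ((r ^ (1 + α) : ℝ) : ℂ)).re = (1 - Real.cos (2 * Real.pi * r)) / r ^ (1 + α) := fun r => by
    rw [Complex.div_ofReal_re, Complex.sub_re, Complex.one_re, Complex.exp_ofReal_mul_I_re]
    rcases eq_or_eq_neg_of_abs_eq hv with rfl | rfl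
    · rw [one_mul]
    · rw [show 2 * Real.pi * (-1 * r) = -(2 * Real.pi * r) by ring, Real.cos_neg]
  have hi := integrableOn_timeSymbol_integrand hα hα1 v
  have h1 : (timeSymbol α v).re = ∫ r in Ioi (0 : ℝ), (1 - Real.cos (2 * Real.pi * r)) / r ^ (1 + α) := by
    rw [timeSymbol, ← RCLike.re_eq_complex_re, ← integral_re hi]
    simp only [RCLike.re_eq_complex_re, hre]
  have hi' : IntegrableOn (fun r : ℝ => (1 - Real.cos (2 * Real.pi * r)) / r ^ (1 + α)) (Ioi 0) :=
    hi.re.congr (.of_forall hre)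
  rw [h1, setIntegral_pos_iff_support_of_nonneg_ae ?_ hi']
  · refine lt_of_lt_of_le (b := volume (Ioo (0 : ℝ) 1)) (by simp) (measure_mono ?_)
    rintro r ⟨hr0, hr1⟩
    refine ⟨div_ne_zero (fun h => ?_) (Real.rpow_pos_of_pos hr0 _).ne', hr0⟩
    have hpi := Real.pi_pos
    have h2 : Real.cos (2 * Real.pi * r) = 1 := by linarith
    rw [Real.cos_eq_one_iff_of_lt_of_lt (by nlinarith) (by nlinarith)] at h2
    have : 0 < 2 * Real.pi * r := by positivity
    exact this.ne' h2
  · refine (ae_restrict_iff' measurableSet_Ioi).2 (.of_forall fun r (hr : 0 < r) => ?_)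
    exact div_nonneg (sub_nonneg.2 (Real.cos_le_one _)) (by positivity)

lemma timeSymbol_ne_zero (hα : 0 < α) (hα1 : α < 1) {v : ℝ} (hv : v ≠ 0) : timeSymbol α v ≠ 0 := by
  have h : timeSymbol α v = (|v| ^ α : ℝ) * timeSymbol α (v / |v|) := by
    rw [← timeSymbol_mul α _ (abs_pos.2 hv), mul_div_cancel₀ _ (abs_ne_zero.2 hv)]
  rw [h]
  refine mul_ne_zero (Complex.ofReal_ne_zero.2 (Real.rpow_pos_of_pos (abs_pos.2 hv) _).ne')
    fun h0 => ?_
  have := timeSymbol_re_pos hα hα1 (v := v / |v|)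
    (by rw [abs_div, abs_abs, div_self (abs_ne_zero.2 hv)])
  rw [h0] at this
  exact lt_irrefl _ this

lemma contDiffAt_timeSymbol (α : ℝ) {v : ℝ} (hv : v ≠ 0) : ContDiffAt ℝ ∞ (timeSymbol α) v := by
  rcases hv.lt_or_gt with hv | hv
  · have : ContDiffAt ℝ ∞ (fun w : ℝ => (((-w) ^ α : ℝ) : ℂ) * timeSymbol α (-1)) v :=
      (Complex.ofRealCLM.contDiff.contDiffAt.comp v
        (contDiffAt_id.neg.rpow_const_of_ne (neg_ne_zero.2 hv.ne))).mul contDiffAt_const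
    refine this.congr_of_eventuallyEq ?_
    filter_upwards [Iio_mem_nhds hv] with w (hw : w < 0)
    rw [← timeSymbol_mul α _ (neg_pos.2 hw)]
    simp
  · have : ContDiffAt ℝ ∞ (fun w : ℝ => ((w ^ α : ℝ) : ℂ) * timeSymbol α 1) v :=
      (Complex.ofRealCLM.contDiff.contDiffAt.comp v
        (contDiffAt_id.rpow_const_of_ne hv.ne')).mul contDiffAt_const
    refine this.congr_of_eventuallyEq ?_
    filter_upwards [Ioi_mem_nhds hv] with w (hw : 0 < w)
    rw [← timeSymbol_mul α _ hw, mul_one]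

lemma rightDiff_reInvFourier (hα : 0 < α) (hα1 : α < 1) (G H : 𝓢(ℝ, ℂ))
    (hH : ∀ v, H v = timeSymbol α v * G v) (t : ℝ) :
    rightDiff α (reInvFourier G) t = reInvFourier H t := by
  set e : ℝ → ℝ → ℂ := fun v x => Complex.exp (↑(2 * Real.pi * (v * x)) * Complex.I) with he
  have hen : ∀ v x, ‖e v x‖ = 1 := fun v x => Complex.norm_exp_ofReal_mul_I _
  have hec' : ∀ x, Continuous fun v => e v x := fun x => by simp only [he]; fun_prop
  have happ : ∀ (G : 𝓢(ℝ, ℂ)) x, reInvFourier G x = (∫ v, e v x * G v).re := fun G x => by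
    rw [reInvFourier_apply]
    simp only [he, RCLike.inner_apply, conj_trivial, mul_comm x]
  have h_int : ∀ x, Integrable fun v => e v x * G v := fun x =>
    G.integrable.norm.mono' ((hec' x).mul G.continuous).aestronglyMeasurable
      (.of_forall fun v => by rw [norm_mul, hen, one_mul])
  have hdiff : ∀ r, reInvFourier G t - reInvFourier G (t + r) =
      (∫ v, e v t * (1 - e v r) * G v).re := by
    intro r
    rw [happ, happ, ← Complex.sub_re, ← integral_sub (h_int _) (h_int _)]
    congr 2 with v
    have h1 : e v (t + r) = e v t * e v r := by
      simp only [he, ← Complex.exp_add]; congr 1; push_cast; ring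
    rw [h1]; ring
  set F : ℝ → ℝ → ℂ := fun r v => e v t * (1 - e v r) * G v / ((r ^ (1 + α) : ℝ) : ℂ) with hF
  have hFint : Integrable (Function.uncurry F) ((volume.restrict (Ioi 0)).prod volume) := by
    have h4 : Integrable fun v : ℝ => (2 + 2 * Real.pi * |v|) * ‖G v‖ := by
      have h5 := (G.integrable_pow_mul volume 0)
      have h6 := (G.integrable_pow_mul volume 1)
      refine ((h5.const_mul 2).add (h6.const_mul (2 * Real.pi))).congr (.of_forall fun v => ?_)
      simp only [Pi.add_apply, Real.norm_eq_abs]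
      ring
    refine (((integrableOn_min_one_pow_mul_rpow (m := 1) hα (by simpa using hα1)).integrable).mul_prod
      h4).mono' ?_ ?_
    · have hG := G.continuous
      have : Measurable fun p : ℝ × ℝ => ((p.1 ^ (1 + α) : ℝ) : ℂ) := by fun_prop
      refine (Measurable.div ?_ this).aestronglyMeasurable
      refine Continuous.measurable ?_
      simp only [he]
      fun_prop
    · have hmem : ∀ᵐ p : ℝ × ℝ ∂((volume.restrict (Ioi 0)).prod volume), 0 < p.1 :=
        Measure.quasiMeasurePreserving_fst.ae (ae_restrict_mem measurableSet_Ioi)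
      filter_upwards [hmem] with p hp
      have h7 := norm_one_sub_exp_div_le (α := α) p.2 hp
      have h8 : Function.uncurry F p = e p.2 t * ((1 - Complex.exp (↑(2 * Real.pi * (p.2 * p.1)) *
          Complex.I)) / ((p.1 ^ (1 + α) : ℝ) : ℂ)) * G p.2 := by
        simp only [Function.uncurry, hF, he]; ring
      rw [h8, norm_mul, norm_mul, hen, one_mul]
      refine (mul_le_mul_of_nonneg_right h7 (norm_nonneg _)).trans_eq ?_
      ring
  calc rightDiff α (reInvFourier G) t
      = ∫ r in Ioi (0 : ℝ), (∫ v, F r v).re := by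
        rw [rightDiff]
        congr 1 with r
        rw [hdiff, hF]
        simp only [integral_div]
        rw [Complex.div_ofReal_re]
    _ = (∫ r in Ioi (0 : ℝ), ∫ v, F r v).re := integral_re hFint.integral_prod_left
    _ = (∫ v, ∫ r in Ioi (0 : ℝ), F r v).re := by rw [integral_integral_swap hFint]
    _ = reInvFourier H t := by
      rw [happ]
      congr 2 with v
      rw [hH, timeSymbol, ← mul_assoc, mul_right_comm, ← integral_const_mul]
      congr 1 with r
      simp only [hF, he]
      ring

/-- A profile annihilated by all right Marchaud derivatives has its spectrum at the origin. -/
lemma integral_mul_reInvFourier_eq_zero (hα : 0 < α) (hα1 : α < 1) {B : ℝ → ℝ}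
    (hB : ∀ η : 𝓢(ℝ, ℝ), ∫ t, B t * rightDiff α η t = 0) (g : 𝓢(ℝ, ℂ))
    (hgc : HasCompactSupport g) (hg0 : (0 : ℝ) ∉ tsupport g) :
    ∫ t, B t * reInvFourier g t = 0 := by
  obtain ⟨m, hm, hmK⟩ := exists_contDiff_eqOn_of_zero_notMem (m := fun v => (timeSymbol α v)⁻¹)
    (fun v hv => (contDiffAt_timeSymbol α hv).inv (timeSymbol_ne_zero hα hα1 hv))
    (isClosed_tsupport g) hg0
  have hGc : HasCompactSupport fun v => g v * m v := hgc.mul_right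
  set G : 𝓢(ℝ, ℂ) := hGc.toSchwartzMap ((g.smooth ⊤).mul hm) with hG
  have hH : ∀ v, g v = timeSymbol α v * G v := fun v => by
    change g v = timeSymbol α v * (g v * m v)
    by_cases hv : v ∈ tsupport g
    · have hv0 : v ≠ 0 := by rintro rfl; exact hg0 hv
      rw [hmK hv, mul_left_comm, mul_inv_cancel₀ (timeSymbol_ne_zero hα hα1 hv0), mul_one]
    · rw [image_eq_zero_of_notMem_tsupport hv]; simp
  have := hB (reInvFourier G)
  simpa only [rightDiff_reInvFourier hα hα1 G g hH] using this

lemma ae_eq_const_of_integral_mul_rightDiff (hα : 0 < α) (hα1 : α < 1) {B : ℝ → ℝ}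
    (hBi : Integrable fun t => B t * (1 + ‖t‖) ^ (-(1 + α)))
    (hB : ∀ η : 𝓢(ℝ, ℝ), ∫ t, B t * rightDiff α η t = 0) : ∃ c, ∀ᵐ t, B t = c := by
  have hBi' : Integrable fun t => B t * (1 + ‖t‖) ^ (-(Module.finrank ℝ ℝ + α)) := by simpa using hBi
  have hN : (0 : ℝ) ≤ Module.finrank ℝ ℝ + α := by positivity
  have hv := integral_mul_lowPass_eq hN hBi' fun k i => integral_mul_reInvFourier_eq_zero hα hα1 hB _
    (hasCompactSupport_bumpMode_sub _ _) (zero_notMem_tsupport_bumpMode_sub _ _)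
  refine ⟨∫ x, B x * lowPass 0 (x - 0), ?_⟩
  filter_upwards [ae_eq_integral_mul_lowPass hN hBi' hv] with t ht
  rw [ht]
  simpa using integral_mul_lowPass_first_diff hα hα1 hBi' hv 0 t

end TimeSymbol

lemma ae_eq_const_of_ae_ae {X Y : Type*} [MeasurableSpace X] [MeasurableSpace Y] {μ : Measure X}
    {ν : Measure Y} [SFinite μ] [SFinite ν] {u : X × Y → ℝ}
    (hu : AEStronglyMeasurable u (μ.prod ν)) {c : ℝ} (h : ∀ᵐ t ∂ν, ∀ᵐ x ∂μ, u (x, t) = c) :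
    ∀ᵐ p ∂(μ.prod ν), u p = c := by
  have h1 : ∀ᵐ t ∂ν, ∀ᵐ x ∂μ, u (x, t) = hu.mk u (x, t) := by
    have := (Measure.measurePreserving_swap (μ := ν) (ν := μ)).quasiMeasurePreserving.ae hu.ae_eq_mk
    exact Measure.ae_ae_of_ae_prod this
  have hm : MeasurableSet {p : X × Y | hu.mk u p = c} :=
    hu.stronglyMeasurable_mk.measurable (measurableSet_singleton c)
  have h2 : ∀ᵐ t ∂ν, ∀ᵐ x ∂μ, hu.mk u (x, t) = c := by
    filter_upwards [h, h1] with t ht ht1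
    filter_upwards [ht, ht1] with x hx hx1
    rw [← hx1, hx]
  have h3 : ∀ᵐ p ∂(μ.prod ν), hu.mk u p = c := by
    rw [Measure.ae_prod_iff_ae_ae hm, Measure.ae_ae_comm hm]
    exact h2
  filter_upwards [h3, hu.ae_eq_mk] with p hp hp1
  rw [hp1, hp]

lemma one_add_rpow_neg_le {a p : ℝ} (ha : 0 ≤ a) (hp : 0 ≤ p) :
    (1 + a) ^ (-p) ≤ 2 / (1 + a ^ p) := by
  rw [Real.rpow_neg (by positivity), le_div_iff₀ (by positivity), inv_mul_le_iff₀ (by positivity)]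
  have h1 : a ^ p ≤ (1 + a) ^ p := Real.rpow_le_rpow ha (by linarith) hp
  have h2 : 1 ≤ (1 + a) ^ p := Real.one_le_rpow (by linarith) hp
  linarith

lemma japWeight_le {q : ℝ} (hq : 0 ≤ q) (t : ℝ) : japWeight q t ≤ 2 / (1 + |t| ^ q) := by
  rw [japWeight, neg_div, Real.rpow_neg (by positivity), le_div_iff₀ (by positivity),
    inv_mul_le_iff₀ (by positivity)]
  have h1 : |t| ^ q ≤ (1 + t ^ 2) ^ (q / 2) := by
    calc |t| ^ q = (|t| ^ (2 : ℝ)) ^ (q / 2) := by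
          rw [← Real.rpow_mul (abs_nonneg t)]; congr 1; ring
      _ ≤ _ := Real.rpow_le_rpow (by positivity) (by rw [Real.rpow_two, sq_abs]; linarith)
          (by linarith)
  have h2 : 1 ≤ (1 + t ^ 2) ^ (q / 2) := Real.one_le_rpow (by nlinarith) (by linarith)
  linarith

lemma Calpha_pos {α : ℝ} (hα0 : 0 < α) (hα1 : α < 1) : 0 < Calpha α := by
  refine one_div_pos.2 (abs_pos.2 (Real.Gamma_ne_zero fun m h => ?_))
  have h' : α = m := neg_injective h
  rcases m with _ | m
  · simp at h'; linarith
  · push_cast at h'; linarith [m.cast_nonneg (α := ℝ)]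

lemma Cns_pos (n : ℕ) {s : ℝ} (hs0 : 0 < s) (hs1 : s < 1) : 0 < Cns n s := by
  have h := one_div_pos.1 (Calpha_pos hs0 hs1)
  have h2 := Real.Gamma_pos_of_pos (by positivity : 0 < (n : ℝ) / 2 + s)
  have := Real.pi_pos
  rw [Cns]
  positivity

lemma marchaudRight_eq {n : ℕ} (α : ℝ) (φ : EuclideanSpace ℝ (Fin n) × ℝ → ℝ)
    (x : EuclideanSpace ℝ (Fin n)) (t : ℝ) :
    marchaudRight α φ x t = Calpha α * rightDiff α (fun τ => φ (x, τ)) t := by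
  rw [marchaudRight, rightDiff]
  congr 1
  have h := (measurePreserving_add_left (volume : Measure ℝ) t).setIntegral_preimage_emb
    (measurableEmbedding_addLeft t) (fun τ => (φ (x, t) - φ (x, τ)) / (τ - t) ^ (1 + α)) (Ioi t)
  rw [← h]
  simp

/-- Liouville theorem for `∂_t^α u + (-Δ)^s u = 0` in `ℝⁿ × ℝ` for
`1/2 < s < 1`, under the asymptotic assumption
`liminf_{|x|→∞} u(x,t)/|x|^γ ≥ 0` for some `0 ≤ γ ≤ 1`:
every such distributional solution `u ∈ 𝓛_{2s,α}(ℝⁿ×ℝ)` is a.e. constant. -/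
theorem liouville_dual_fractional_large_s
    (n : ℕ) (hn : 2 ≤ n) (α s : ℝ) (hα0 : 0 < α) (hα1 : α < 1)
    (hs0 : 1 / 2 < s) (hs1 : s < 1)
    (u : EuclideanSpace ℝ (Fin n) × ℝ → ℝ)
    (hu_loc : LocallyIntegrable u)
    (hu_space : Integrable (fun p : EuclideanSpace ℝ (Fin n) × ℝ =>
      |u p| / ((1 + ‖p.1‖ ^ ((n : ℝ) + 2 * s)) * (1 + |p.2| ^ (1 + α)))))
    (hu_sol : ∀ φ : SchwartzMap (EuclideanSpace ℝ (Fin n) × ℝ) ℝ,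
      ∫ t : ℝ, ∫ x : EuclideanSpace ℝ (Fin n),
        u (x, t) * (marchaudRight α (⇑φ) x t + fracLap s (⇑φ) x t) = 0)
    (hasymp : ∃ γ : ℝ, 0 ≤ γ ∧ γ ≤ 1 ∧ ∀ t : ℝ, ∀ ε > (0 : ℝ), ∃ R > (0 : ℝ),
      ∀ x : EuclideanSpace ℝ (Fin n), R ≤ ‖x‖ → -ε * ‖x‖ ^ γ ≤ u (x, t)) :
    ∃ c : ℝ, ∀ᵐ p : EuclideanSpace ℝ (Fin n) × ℝ ∂volume, u p = c := by
  obtain ⟨γ, hγ0, hγ1, hγ⟩ := hasymp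
  have : NeZero n := ⟨by omega⟩
  have hfin : Module.finrank ℝ (EuclideanSpace ℝ (Fin n)) = n := by simp
  have : Nontrivial (EuclideanSpace ℝ (Fin n)) := Module.nontrivial_of_finrank_pos (R := ℝ) (by omega)
  have hsol : IsDualSolution α (2 * s) (Calpha α) (Cns n s / 2) u := fun φ => by
    rw [← hu_sol φ, hfin]
    simp only [marchaudRight_eq, fracLap]
  have hu : Integrable fun p : EuclideanSpace ℝ (Fin n) × ℝ => u p *
      ((1 + ‖p.1‖) ^ (-(Module.finrank ℝ (EuclideanSpace ℝ (Fin n)) + 2 * s)) *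
        japWeight (1 + α) p.2) := by
    have hJ := continuous_japWeight (1 + α)
    refine (hu_space.const_mul 4).mono' (hu_loc.aestronglyMeasurable.mul
      (((continuous_one_add_norm_rpow _).comp continuous_fst).mul
        (hJ.comp continuous_snd)).aestronglyMeasurable) (.of_forall fun p => ?_)
    have h1 := one_add_rpow_neg_le (norm_nonneg p.1) (by positivity : 0 ≤ (n : ℝ) + 2 * s)
    have h2 := japWeight_le (by positivity : 0 ≤ 1 + α) p.2
    have h3 := (japWeight_pos (1 + α) p.2).le
    rw [hfin, norm_mul, Real.norm_eq_abs (u p),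
      Real.norm_of_nonneg (mul_nonneg (Real.rpow_nonneg (by positivity) _) h3)]
    calc _ ≤ |u p| * (2 / (1 + ‖p.1‖ ^ ((n : ℝ) + 2 * s)) * (2 / (1 + |p.2| ^ (1 + α)))) :=
          mul_le_mul_of_nonneg_left (mul_le_mul h1 h2 h3 (by positivity)) (abs_nonneg _)
      _ = _ := by field_simp; norm_num
  have hC := Calpha_pos hα0 hα1
  have hslice := hsol.ae_slice_eq_const hα0 hα1 (by linarith) (by linarith) hC.le
    (half_pos (Cns_pos n (by linarith) hs1)) hu hγ0 hγ1 hγ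
  have htime := hsol.integral_mul_rightDiff_eq_zero (by linarith) (by linarith) hC.ne' hslice
  obtain ⟨C, -, hχ⟩ := (lowPass (E := EuclideanSpace ℝ (Fin n)) 0).exists_norm_le
    (Module.finrank ℝ (EuclideanSpace ℝ (Fin n)) + 2 * s)
  have hBJ := integrable_slicePairing_mul_japWeight hu (lowPass 0).continuous hχ
  have hBi : Integrable fun t => slicePairing u (lowPass 0) t * (1 + ‖t‖) ^ (-(1 + α)) := by
    refine hBJ.norm.mono' ((locallyIntegrable_of_mul_continuous (continuous_japWeight (1 + α))
      (fun t => japWeight_pos _ t) hBJ).aestronglyMeasurable.mul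
      (continuous_one_add_norm_rpow _).aestronglyMeasurable) (.of_forall fun t => ?_)
    rw [norm_mul, norm_mul, Real.norm_of_nonneg (by positivity : 0 ≤ (1 + ‖t‖) ^ (-(1 + α))),
      Real.norm_of_nonneg (japWeight_pos _ _).le]
    exact mul_le_mul_of_nonneg_left (one_add_norm_rpow_neg_le_japWeight (by linarith) t)
      (norm_nonneg _)
  obtain ⟨c, hc⟩ := ae_eq_const_of_integral_mul_rightDiff hα0 hα1 hBi htime
  refine ⟨c, ae_eq_const_of_ae_ae hu_loc.aestronglyMeasurable ?_⟩
  filter_upwards [hslice, hc] with t ht htc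
  filter_upwards [ht] with x hx
  rw [hx, htc]
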